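/- If G is a 3-connected 1-tough graph on n vertices with minimum degree δ ≥ (n − 2)/3, then every longest cycle in G is a dominating cycle. -/

import Mathlib

/-!
Suppose some edge lies off a longest cycle. Cycles are encoded as periodic maps `f : ℤ → V` (`LC`),
so that rerouting arguments become statements about integer intervals. Among all longest cycles
and all components `H` of their complements with at least two vertices, take one with `H` as large
as possible (`FS`). Let `A` be the set of attachment vertices of `H` on the cycle (`AS`); by
3-connectivity it has at least three members, and they cut the cycle into segments.

Structure of `H`. Rerouting the cycle through `H` forces successive attachment vertices far apart,
and comparing this with the degrees of `H` and of the successors of attachment vertices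
(`lemma_K`, `lemma_I`) under `n ≤ 3δ + 2` yields `ST`: `H` is a clique completely joined to `A`, and
`#A + #H = δ + 1`. Hence every segment has length at least `#H + 1`, and `FS.budget` says that the
total excess over this length plus the number of vertices outside the cycle and `H` plus
`(#H - 2) * #A` is at most `2 * (#H - 2) + 3`.

Edges between segments. If distinct segments were never joined outside `A`, deleting `A` would
leave more than `#A` components; so toughness (`TL2`, `FS.TL`) provides a path between two segments,
and the crossing inequalities make it an edge and give `#H ≤ 3` (`FS.cross`). A segment of minimal
length can be exchanged with `H`, so by the maximality of `H` its interior is completely joined to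
`A` and has no other neighbours outside itself (`FS.RL`, `FS.reg`); edges between segments therefore
join longer ones only. Degree counts and further applications of toughness (`FS.types`, `FS.k3`,
`FS.L541`, `FS.L542`, `FS.L543`, `FS.c44`) leave only edges between segments of length four, with
`#H = 2`.

The end of the proof. Two such segments are joined in essentially one way (`FS.uniq`), toughness
supplies a joining edge between extreme interior vertices (`FS.ex13`), and `FS.E1` shows that it
runs around a common end of the two segments. The budget then forces the cycle to have exactly
twelve vertices (`Tw`), and in that graph `f 4` and `f 8` separate the interior of one segment,
contradicting 3-connectivity (`Tw.false`, `FS.false`).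
-/

open SimpleGraph Finset

namespace Paper

variable {V : Type*}

/-- Number of connected components of `G` after deleting the vertex set `S`. -/
noncomputable def compCount (G : SimpleGraph V) (S : Set V) : ℕ :=
  Nat.card ((G.induce Sᶜ).ConnectedComponent)

/-- `G` is 1-tough: every cutset `S` satisfies `|S| ≥ s(G \ S)`. -/
def OneTough [Fintype V] (G : SimpleGraph V) : Prop :=
  ∀ S : Finset V, 1 < compCount G ↑S → compCount G ↑S ≤ S.card

/-- The toughness of `G` equals 1. -/
def ToughnessEqOne [Fintype V] (G : SimpleGraph V) : Prop :=
  OneTough G ∧ ∃ S : Finset V, 1 < compCount G ↑S ∧ compCount G ↑S = S.card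

/-- The vertex connectivity of `G` equals 2. -/
def ConnectivityEqTwo [Fintype V] (G : SimpleGraph V) : Prop :=
  (∀ S : Finset V, S.card ≤ 1 → (G.induce (↑S : Set V)ᶜ).Connected) ∧
  ∃ S : Finset V, S.card = 2 ∧ ¬ (G.induce (↑S : Set V)ᶜ).Connected

/-- `G` is 3-connected: it stays connected after removing any 2 vertices. -/
def ThreeConnected [Fintype V] (G : SimpleGraph V) : Prop :=
  ∀ S : Finset V, S.card ≤ 2 → (G.induce (↑S : Set V)ᶜ).Connected

/-- `c` is a longest cycle of `G`. -/
def IsLongestCycle {G : SimpleGraph V} {u : V} (c : G.Walk u u) : Prop :=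
  c.IsCycle ∧ ∀ (v : V) (d : G.Walk v v), d.IsCycle → d.length ≤ c.length

/-- The cycle `c` is dominating: `G \ V(c)` is edgeless. -/
def IsDominating {G : SimpleGraph V} {u : V} (c : G.Walk u u) : Prop :=
  ∀ a b : V, G.Adj a b → a ∈ c.support ∨ b ∈ c.support

/-- The walk `p` avoids all vertices of the cycle `c`. -/
def AvoidsCycle {G : SimpleGraph V} {u x y : V} (c : G.Walk u u) (p : G.Walk x y) : Prop :=
  ∀ v ∈ p.support, v ∉ c.support

/-- `p` is a longest path of `G \ V(c)`. -/
def IsLongestPathOutside {G : SimpleGraph V} {u x y : V} (c : G.Walk u u)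
    (p : G.Walk x y) : Prop :=
  p.IsPath ∧ AvoidsCycle c p ∧
  ∀ (a b : V) (q : G.Walk a b), q.IsPath → AvoidsCycle c q → q.length ≤ p.length

/-- `N_C(x)`: the neighbors of `x` lying on the cycle `c`. -/
def NC [Fintype V] [DecidableEq V] (G : SimpleGraph V) [DecidableRel G.Adj]
    {u : V} (c : G.Walk u u) (x : V) : Finset V :=
  (G.neighborFinset x).filter (fun v => v ∈ c.support)

/-- The interior vertices of a segment (the walk minus its endpoints). -/
def interior {G : SimpleGraph V} {a b : V} (I : G.Walk a b) : Set V :=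
  {v | v ∈ I.support ∧ v ≠ a ∧ v ≠ b}

/-- `I` is an elementary segment of the cycle `c` created by the attachment set `A`:
an arc of `c` between consecutive vertices of `A`. -/
def IsSegment {G : SimpleGraph V} {u : V} (c : G.Walk u u)
    (A : Finset V) {a b : V} (I : G.Walk a b) : Prop :=
  I.IsPath ∧ 1 ≤ I.length ∧ a ∈ A ∧ b ∈ A ∧
  (∀ v ∈ I.support, v ∈ c.support) ∧
  (∀ e ∈ I.edges, e ∈ c.edges) ∧
  ∀ v ∈ interior I, v ∉ A

/-- `L` is an intermediate path between the elementary segments `Ia` and `Ib`: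
it joins interior vertices of `Ia` and `Ib` and is internally disjoint from `c ∪ P`. -/
def IsIntermediatePath {G : SimpleGraph V} {u x y : V} (c : G.Walk u u) (P : G.Walk x y)
    {a b a' b' z w : V} (Ia : G.Walk a b) (Ib : G.Walk a' b') (L : G.Walk z w) : Prop :=
  L.IsPath ∧ 1 ≤ L.length ∧ z ∈ interior Ia ∧ w ∈ interior Ib ∧
  ∀ v ∈ L.support, (v ∈ c.support ∨ v ∈ P.support) → v = z ∨ v = w

/-- Membership in the exceptional class `𝔉₁`. -/
def InF1 [Fintype V] (H : SimpleGraph V) [DecidableRel H.Adj] (d : ℕ) : Prop :=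
  ∃ (x y₁ y₂ y₃ : V) (A : Fin 3 → Set V),
    (∀ i j, i ≠ j → A i ∩ A j = {x}) ∧
    (⋃ i, A i) = Set.univ ∧
    y₁ ∈ A 0 ∧ y₂ ∈ A 1 ∧ y₃ ∈ A 2 ∧ y₁ ≠ x ∧ y₂ ≠ x ∧ y₃ ≠ x ∧
    H.Adj y₁ y₂ ∧ H.Adj y₂ y₃ ∧ H.Adj y₁ y₃ ∧
    (∀ a b : V, H.Adj a b → (∃ i, a ∈ A i ∧ b ∈ A i) ∨
      s(a, b) ∈ ({s(y₁, y₂), s(y₂, y₃), s(y₁, y₃)} : Set (Sym2 V))) ∧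
    (∀ i, (H.induce (A i)).Connected) ∧
    Nat.card (A 0) = d + 1 ∧ Nat.card (A 1) = d + 1 ∧
    d + 1 ≤ Nat.card (A 2) ∧ Nat.card (A 2) ≤ d + 2 ∧
    H.minDegree = d ∧ 3 ≤ d

/-- Membership in the exceptional class `𝔉₂`. -/
def InF2 [Fintype V] (H : SimpleGraph V) [DecidableRel H.Adj] : Prop :=
  ∃ (x z y₁ y₂ y₃ : V) (A : Fin 3 → Set V),
    (∀ i j, i ≠ j → A i ∩ A j = {x}) ∧
    ((⋃ i, A i) ∪ {z}) = Set.univ ∧ z ∉ ⋃ i, A i ∧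
    y₁ ∈ A 0 ∧ y₂ ∈ A 1 ∧ y₃ ∈ A 2 ∧ y₁ ≠ x ∧ y₂ ≠ x ∧ y₃ ≠ x ∧
    H.Adj z y₁ ∧ H.Adj z y₂ ∧ H.Adj z y₃ ∧ H.Adj y₁ y₂ ∧
    (∀ a b : V, H.Adj a b → (∃ i, a ∈ A i ∧ b ∈ A i) ∨
      s(a, b) ∈ ({s(z, y₁), s(z, y₂), s(z, y₃), s(y₁, y₂), s(y₁, y₃), s(y₂, y₃),
        s(z, x)} : Set (Sym2 V))) ∧
    (∀ i, Nat.card (A i) = 4) ∧ H.minDegree = 3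

/-- Membership in the exceptional class `𝔉₃`. -/
def InF3 [Fintype V] (H : SimpleGraph V) [DecidableRel H.Adj] : Prop :=
  ∃ (x z y₁ y₂ y₃ : V) (A : Fin 3 → Set V),
    (∀ i j, i ≠ j → A i ∩ A j = {x}) ∧
    ((⋃ i, A i) ∪ {z}) = Set.univ ∧ z ∉ ⋃ i, A i ∧
    y₁ ∈ A 0 ∧ y₂ ∈ A 1 ∧ y₃ ∈ A 2 ∧ y₁ ≠ x ∧ y₂ ≠ x ∧ y₃ ≠ x ∧
    H.Adj z y₁ ∧ H.Adj z y₂ ∧ H.Adj z y₃ ∧ H.Adj z x ∧ H.Adj y₁ y₂ ∧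
    (∀ a b : V, H.Adj a b → (∃ i, a ∈ A i ∧ b ∈ A i) ∨
      s(a, b) ∈ ({s(z, y₁), s(z, y₂), s(z, y₃), s(z, x), s(y₁, y₂), s(y₁, y₃),
        s(y₂, y₃)} : Set (Sym2 V))) ∧
    (∀ i, Nat.card (A i) = 5) ∧ H.minDegree = 4

/-- Membership in the exceptional class `𝔉₄`. -/
def InF4 [Fintype V] (H : SimpleGraph V) [DecidableRel H.Adj] : Prop :=
  ∃ (x y : V) (z : Fin 4 → V) (A : Fin 4 → Set V),
    x ≠ y ∧
    (∀ i j, i ≠ j → A i ∩ A j = {x, y}) ∧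
    (⋃ i, A i) = Set.univ ∧
    (∀ i, z i ∈ A i ∧ z i ≠ x ∧ z i ≠ y) ∧
    H.Adj (z 0) (z 1) ∧ H.Adj (z 1) (z 2) ∧ H.Adj (z 0) (z 2) ∧
    (∀ a b : V, H.Adj a b → (∃ i, a ∈ A i ∧ b ∈ A i) ∨
      s(a, b) ∈ ({s(z 0, z 1), s(z 1, z 2), s(z 0, z 2)} : Set (Sym2 V))) ∧
    (∀ i, Nat.card (A i) = 5) ∧ H.minDegree = 4

/-! ### Walks listed by their vertices -/

set_option linter.unusedSectionVars false

/-- `Tr G u L v`: the walk in `G` that starts at `u` and visits the vertices of `L` in order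
ends at `v`. -/
def Tr (G : SimpleGraph V) : V → List V → V → Prop
  | u, [], v => u = v
  | u, x :: L, v => G.Adj u x ∧ Tr G x L v

/-- `Con G u U v`: the vertices of `U`, in order, are the interior vertices of a walk from
`u` to `v` (an edge when `U` is empty). -/
def Con (G : SimpleGraph V) (u : V) (U : List V) (v : V) : Prop := Tr G u (U ++ [v]) v

section TrLemmas
variable {G : SimpleGraph V}

theorem tr_nil {u v : V} : Tr G u [] v ↔ u = v := Iff.rfl
theorem tr_cons {u x v : V} {L : List V} : Tr G u (x :: L) v ↔ G.Adj u x ∧ Tr G x L v := Iff.rfl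

theorem Tr.append {u v w : V} {L M : List V} (h : Tr G u L v) (h' : Tr G v M w) :
    Tr G u (L ++ M) w := by
  induction L generalizing u with
  | nil => rw [tr_nil] at h; subst h; simpa using h'
  | cons x L ih => exact ⟨h.1, ih h.2⟩

theorem Tr.split {u w : V} {L M : List V} (h : Tr G u (L ++ M) w) :
    ∃ v, Tr G u L v ∧ Tr G v M w := by
  induction L generalizing u with
  | nil => exact ⟨u, rfl, h⟩
  | cons x L ih =>
    obtain ⟨v, h1, h2⟩ := ih h.2
    exact ⟨v, ⟨h.1, h1⟩, h2⟩

theorem tr_snoc {u v x : V} {L : List V} :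
    Tr G u (L ++ [x]) v ↔ ∃ w, Tr G u L w ∧ G.Adj w x ∧ x = v := by
  constructor
  · intro h
    obtain ⟨w, h1, h2⟩ := h.split
    exact ⟨w, h1, h2.1, h2.2⟩
  · rintro ⟨w, h1, h2, h3⟩
    exact h1.append ⟨h2, h3⟩

theorem con_nil {u v : V} : Con G u [] v ↔ G.Adj u v := by simp [Con, Tr]
theorem con_cons {u x v : V} {U : List V} : Con G u (x :: U) v ↔ G.Adj u x ∧ Con G x U v := by
  simp [Con, Tr]

theorem con_iff {u v : V} {U : List V} : Con G u U v ↔ ∃ w, Tr G u U w ∧ G.Adj w v := by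
  simp [Con, tr_snoc]

theorem Tr.con {u v w : V} {L : List V} (h : Tr G u L v) (h' : G.Adj v w) : Con G u L w :=
  con_iff.2 ⟨v, h, h'⟩

theorem Con.append {u v w : V} {U W : List V} (h : Con G u U v) (h' : Con G v W w) :
    Con G u (U ++ v :: W) w := by
  have := Tr.append h h'
  simpa [Con] using this

theorem Con.rev {u v : V} {U : List V} (h : Con G u U v) : Con G v U.reverse u := by
  induction U generalizing u with
  | nil => rw [con_nil] at h; simpa [con_nil] using h.symm
  | cons x U ih =>
    rw [con_cons] at h
    have := (ih h.2).append (con_nil.2 h.1.symm)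
    simpa using this

/-- Reversal of a path listed by its vertices. -/
theorem Tr.rev {u v : V} {L : List V} (h : Tr G u L v) :
    ∃ M, (u :: L).reverse = v :: M ∧ Tr G v M u := by
  induction L generalizing u with
  | nil => rw [tr_nil] at h; subst h; exact ⟨[], by simp, rfl⟩
  | cons x L ih =>
    obtain ⟨M, h1, h2⟩ := ih h.2
    refine ⟨M ++ [u], ?_, h2.append ⟨h.1.symm, rfl⟩⟩
    rw [List.reverse_cons, h1]; rfl

theorem Tr.mem_last {u v : V} {L : List V} (h : Tr G u L v) : v ∈ u :: L := by
  induction L generalizing u with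
  | nil => rw [tr_nil] at h; simp [h]
  | cons x L ih => exact List.mem_cons_of_mem _ (ih h.2)

theorem Tr.mono {G' : SimpleGraph V} {u v : V} {L : List V} (h : Tr G u L v) (hle : G ≤ G') :
    Tr G' u L v := by
  induction L generalizing u with
  | nil => exact h
  | cons x L ih => exact ⟨hle h.1, ih h.2⟩

/-- Every vertex of a listed path splits it. -/
theorem Tr.split_mem {u v x : V} {L : List V} (h : Tr G u L v) (hx : x ∈ u :: L) :
    ∃ L1 L2, L = L1 ++ L2 ∧ Tr G u L1 x ∧ Tr G x L2 v := by
  induction L generalizing u with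
  | nil => 
    rw [tr_nil] at h
    simp at hx; subst hx; exact ⟨[], [], rfl, rfl, h⟩
  | cons y L ih =>
    rcases List.mem_cons.1 hx with rfl | hx
    · exact ⟨[], y :: L, rfl, rfl, h⟩
    · obtain ⟨L1, L2, e, h1, h2⟩ := ih h.2 hx
      exact ⟨y :: L1, L2, by simp [e], ⟨h.1, h1⟩, h2⟩

/-- Every walk contains a path with the same ends. -/
theorem Tr.nodup_shorten {u v : V} {L : List V} (h : Tr G u L v) :
    ∃ M, Tr G u M v ∧ (u :: M).Nodup ∧ M ⊆ L := by
  classical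
  induction L generalizing u with
  | nil => exact ⟨[], h, by simp, by simp⟩
  | cons x L ih =>
    obtain ⟨M, h1, h2, h3⟩ := ih h.2
    by_cases hu : u ∈ x :: M
    · obtain ⟨L1, L2, e, h4, h5⟩ := h1.split_mem hu
      refine ⟨L2, h5, ?_, ?_⟩
      · rw [e] at h2
        rcases L1.eq_nil_or_concat with rfl | ⟨L1', z, rfl⟩
        · rw [tr_nil] at h4; subst h4; simpa using h2
        · simp only [List.concat_eq_append] at h2 h4
          obtain ⟨_, _, _, rfl⟩ := tr_snoc.1 h4
          have := h2.of_cons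
          rw [List.append_assoc] at this
          exact (List.nodup_append.1 this).2.1
      · intro z hz
        exact List.mem_cons_of_mem _ (h3 (by rw [e]; simp [hz]))
    · refine ⟨x :: M, ⟨h.1, h1⟩, List.nodup_cons.2 ⟨hu, h2⟩, ?_⟩
      intro z hz
      rcases List.mem_cons.1 hz with rfl | hz
      · simp
      · exact List.mem_cons_of_mem _ (h3 hz)

theorem Tr.of_walk {u v : V} (p : G.Walk u v) : Tr G u p.support.tail v := by
  induction p with
  | nil => simp [Tr]
  | cons h p ih =>
    rw [Walk.support_cons, List.tail_cons]
    rw [← Walk.cons_tail_support p]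
    exact ⟨h, ih⟩

theorem Tr.to_walk {u v : V} {L : List V} (h : Tr G u L v) :
    ∃ p : G.Walk u v, p.support.tail = L ∧ p.length = L.length := by
  induction L generalizing u with
  | nil => rw [tr_nil] at h; subst h; exact ⟨Walk.nil, by simp⟩
  | cons x L ih =>
    obtain ⟨p, h1, h2⟩ := ih h.2
    refine ⟨Walk.cons h.1 p, ?_, by simp [h2]⟩
    rw [Walk.support_cons, List.tail_cons, ← Walk.cons_tail_support p, h1]

theorem Tr.of_reachable {u v : V} (h : G.Reachable u v) :
    ∃ M, Tr G u M v ∧ (u :: M).Nodup := by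
  obtain ⟨p⟩ := h
  obtain ⟨M, h1, h2, _⟩ := (Tr.of_walk p).nodup_shorten
  exact ⟨M, h1, h2⟩

theorem Tr.isCycle {u : V} {L : List V} (h : Tr G u L u) (hn : L.Nodup) (h3 : 3 ≤ L.length) :
    ∃ p : G.Walk u u, p.IsCycle ∧ p.length = L.length := by
  obtain ⟨p, h1, h2⟩ := h.to_walk
  refine ⟨p, ?_, h2⟩
  cases p with
  | nil => simp at h2; omega
  | @cons _ x _ hadj q =>
    rw [Walk.support_cons, List.tail_cons] at h1
    have hq : q.IsPath := Walk.IsPath.mk' (by rw [h1]; exact hn)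
    rw [Walk.length_cons] at h2
    refine (Walk.cons_isCycle_iff q hadj).2 ⟨hq, fun he => ?_⟩
    have h4 := hq.length_eq_one_of_mem_edges (by rwa [Sym2.eq_swap])
    omega

theorem Tr.adj_getElem {u v : V} {L : List V} (h : Tr G u L v) (i : ℕ) (hi : i + 1 < L.length) :
    G.Adj L[i] L[i + 1] := by
  induction L generalizing u i with
  | nil => simp at hi
  | cons x L ih =>
    cases i with
    | zero =>
      cases L with
      | nil => simp at hi
      | cons y L => exact h.2.1
    | succ i => simpa using ih h.2 i (by simpa using hi)

theorem Tr.adj_zero {u v : V} {L : List V} (h : Tr G u L v) (hi : 0 < L.length) :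
    G.Adj u L[0] := by
  cases L with
  | nil => simp at hi
  | cons x L => exact h.1

theorem Tr.last {u v : V} {L : List V} (h : Tr G u L v) (hi : 0 < L.length) :
    L[L.length - 1] = v := by
  obtain rfl | ⟨M, x, rfl⟩ := L.eq_nil_or_concat
  · simp at hi
  · rw [List.concat_eq_append] at h
    obtain ⟨_, _, _, rfl⟩ := tr_snoc.1 h
    simp

end TrLemmas

/-! ### Cycles indexed by the integers -/

/-- A cycle of length `c` in `G`, with its vertices listed `c`-periodically by the integers. -/
structure LC (G : SimpleGraph V) (c : ℕ) (f : ℤ → V) : Prop where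
  three : 3 ≤ c
  per : ∀ i, f (i + c) = f i
  inj : ∀ i j, f i = f j → (c : ℤ) ∣ i - j
  adj : ∀ i, G.Adj (f i) (f (i + 1))

/-- No cycle of `G` is longer than `c`. Closed lists with at most two vertices are not cycles, but
they do no harm, since `c` is at least three wherever this is used. -/
def Lg (G : SimpleGraph V) (c : ℕ) : Prop :=
  ∀ (u : V) (L : List V), Tr G u L u → L.Nodup → L.length ≤ c

section LCLemmas
variable {G : SimpleGraph V} {c : ℕ} {f : ℤ → V}

theorem LC.rot (h : LC G c f) (k : ℤ) : LC G c (fun i => f (i + k)) where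
  three := h.three
  per i := by rw [show i + c + k = (i + k) + c by ring]; exact h.per _
  inj i j e := by simpa using h.inj _ _ e
  adj i := by rw [show i + 1 + k = (i + k) + 1 by ring]; exact h.adj _

theorem LC.mir (h : LC G c f) : LC G c (fun i => f (-i)) where
  three := h.three
  per i := by
    have := h.per (-(i + c))
    rw [show -(i + (c : ℤ)) + c = -i by ring] at this
    exact this.symm
  inj i j e := by
    have := h.inj _ _ e
    rw [show -i - -j = -(i - j) by ring] at this
    exact (dvd_neg).1 this
  adj i := by
    have := h.adj (-(i + 1))
    rw [show -(i + 1) + 1 = -i by ring] at this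
    exact this.symm

theorem LC.per_mul (h : LC G c f) (i k : ℤ) : f (i + k * c) = f i := by
  induction k using Int.induction_on with
  | zero => simp
  | succ n ih => rw [show i + (n + 1 : ℤ) * c = (i + n * c) + c by ring, h.per, ih]
  | pred n ih =>
    rw [← ih, ← h.per (i + (-n - 1 : ℤ) * c)]
    congr 1; ring

theorem LC.eq_of_dvd (h : LC G c f) {i j : ℤ} (hd : (c : ℤ) ∣ i - j) : f i = f j := by
  obtain ⟨k, hk⟩ := hd
  rw [show i = j + k * c by linarith]
  exact h.per_mul _ _

theorem LC.eq_of_lt (h : LC G c f) {i j : ℤ} (e : f i = f j) (h1 : i < j + c) (h2 : j < i + c) :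
    i = j := by
  obtain ⟨k, hk⟩ := h.inj _ _ e
  have hc := h.three
  have : k = 0 := by
    have hk1 : k < 1 := by nlinarith
    have hk2 : -1 < k := by nlinarith
    omega
  subst this; omega

/-- Every vertex of the cycle has a position in any given window of `c` consecutive integers. -/
theorem LC.win (h : LC G c f) (i a : ℤ) : ∃ j, a ≤ j ∧ j < a + c ∧ f j = f i := by
  have hc := h.three
  refine ⟨a + (i - a) % c, ?_, ?_, ?_⟩
  · have := Int.emod_nonneg (i - a) (show (c : ℤ) ≠ 0 by omega); omega
  · have := Int.emod_lt_of_pos (i - a) (show (0 : ℤ) < c by omega); omega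
  · refine h.eq_of_dvd ?_
    have := Int.emod_add_mul_ediv (i - a) c
    exact ⟨-((i - a) / c), by linarith⟩

/-- The vertices at positions `a + 1, …, a + n`. -/
def up (f : ℤ → V) (a : ℤ) (n : ℕ) : List V := (List.range n).map (fun j : ℕ => f (a + 1 + j))

theorem up_length (a : ℤ) (n : ℕ) : (up f a n).length = n := by simp [up]

theorem mem_up {a : ℤ} {n : ℕ} {x : V} : x ∈ up f a n ↔ ∃ i, a < i ∧ i ≤ a + n ∧ f i = x := by
  simp only [up, List.mem_map, List.mem_range]
  constructor
  · rintro ⟨j, hj, rfl⟩; exact ⟨_, by omega, by omega, rfl⟩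
  · rintro ⟨i, h1, h2, rfl⟩; exact ⟨(i - a - 1).toNat, by omega, by congr 1; omega⟩

theorem up_zero (a : ℤ) : up f a 0 = [] := rfl

theorem up_succ (a : ℤ) (n : ℕ) : up f a (n + 1) = up f a n ++ [f (a + n + 1)] := by
  simp [up, List.range_succ]; ring_nf

theorem LC.tr_up (h : LC G c f) (a : ℤ) (n : ℕ) : Tr G (f a) (up f a n) (f (a + n)) := by
  induction n with
  | zero => simp [up_zero, Tr]
  | succ n ih =>
    rw [up_succ]
    refine ih.append ⟨h.adj _, ?_⟩
    rw [tr_nil]; congr 1; push_cast; ring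

theorem LC.con_up (h : LC G c f) (a : ℤ) (n : ℕ) : Con G (f a) (up f a n) (f (a + n + 1)) :=
  (h.tr_up a n).con (h.adj _)

theorem LC.nodup_up (h : LC G c f) (a : ℤ) (n : ℕ) (hn : n ≤ c) : (up f a n).Nodup := by
  refine List.Nodup.map_on ?_ List.nodup_range
  intro i hi j hj e
  rw [List.mem_range] at hi hj
  have := h.eq_of_lt e (by omega) (by omega)
  omega

/-- The cycle itself as a closed list of vertices. -/
theorem LC.list (h : LC G c f) : ∃ L, Tr G (f 0) L (f 0) ∧ L.Nodup ∧ L.length = c ∧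
    ∀ v, v ∈ L ↔ ∃ i, f i = v := by
  refine ⟨up f 0 c, ?_, h.nodup_up _ _ le_rfl, up_length _ _, fun v => ?_⟩
  · have := h.tr_up 0 c
    rwa [h.per] at this
  · rw [mem_up]
    constructor
    · rintro ⟨i, _, _, e⟩; exact ⟨i, e⟩
    · rintro ⟨i, rfl⟩
      obtain ⟨j, h1, h2, h3⟩ := h.win i 1
      exact ⟨j, by omega, by omega, h3⟩

/-- A closed list of at least three distinct vertices is an integer-indexed cycle. -/
theorem LC.of_list {u : V} {L : List V} (h : Tr G u L u) (hn : L.Nodup) (h3 : 3 ≤ L.length) :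
    ∃ f, LC G L.length f ∧ (∀ v, v ∈ L ↔ ∃ i, f i = v) ∧
      ∀ (i : ℕ) (hi : i < L.length), f i = L[i] := by
  have hc : (0 : ℤ) < L.length := by omega
  have hlt : ∀ i : ℤ, (i % L.length).toNat < L.length := fun i => by
    have h1 := Int.emod_nonneg i hc.ne'
    have h2 := Int.emod_lt_of_pos i hc
    omega
  refine ⟨fun i => L[(i % L.length).toNat]'(hlt i), ⟨h3, fun i => ?_, fun i j e => ?_, fun i => ?_⟩,
    fun v => ⟨fun hv => ?_, ?_⟩, ?_⟩
  · simp
  · have := (List.Nodup.getElem_inj_iff hn).1 e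
    have h1 := Int.emod_nonneg i hc.ne'
    have h2 := Int.emod_nonneg j hc.ne'
    exact Int.ModEq.dvd (show j % L.length = i % L.length by omega)
  · have h1 := Int.emod_nonneg i hc.ne'
    have h2 := Int.emod_lt_of_pos i hc
    by_cases hi : i % L.length + 1 < L.length
    · have e : (i + 1) % L.length = i % L.length + 1 := by
        rw [← Int.emod_emod_of_dvd (i + 1) (dvd_refl _), ← Int.emod_add_emod]
        rw [Int.emod_emod_of_dvd _ (dvd_refl _)]
        exact Int.emod_eq_of_lt (by omega) hi
      have := h.adj_getElem (i % L.length).toNat (by omega)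
      have e2 : ((i + 1) % L.length).toNat = (i % L.length).toNat + 1 := by omega
      simpa only [e2] using this
    · have e0 : i % L.length = L.length - 1 := by omega
      have e : (i + 1) % L.length = 0 := by
        rw [← Int.emod_add_emod, e0]; simp
      have e2 : ((i + 1) % L.length).toNat = 0 := by omega
      have e3 : (i % L.length).toNat = L.length - 1 := by omega
      simp only [e2, e3]
      rw [h.last (by omega)]
      exact h.adj_zero (by omega)
  · obtain ⟨i, hi, rfl⟩ := List.getElem_of_mem hv
    refine ⟨i, ?_⟩
    have : ((i : ℤ) % L.length).toNat = i := by
      rw [Int.emod_eq_of_lt (by omega) (by omega)]; simp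
    simp only [this]
  · rintro ⟨i, rfl⟩; exact List.getElem_mem _
  · intro i hi
    have : ((i : ℤ) % L.length).toNat = i := by
      rw [Int.emod_eq_of_lt (by omega) (by omega)]; simp
    simp only [this]

/-! ### Rerouting a longest cycle -/

/-- Replacing all of the cycle outside the arc from `f a` to `f b` by a connector. -/
theorem OA (h : LC G c f) (hL : Lg G c) {a b : ℤ} (hab : a ≤ b) (hbc : b < a + c) {U : List V}
    (hU : Con G (f b) U (f a)) (hn : U.Nodup) (hd : ∀ i, a ≤ i → i ≤ b → f i ∉ U) :
    b - a + 1 + U.length ≤ c := by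
  obtain ⟨n, rfl⟩ : ∃ n : ℕ, b = a + n := ⟨(b - a).toNat, by omega⟩
  have h1 := (h.tr_up a n).append hU
  have h2 := hL _ _ h1 ?_
  · simp only [List.length_append, up_length, List.length_singleton] at h2; omega
  · refine List.nodup_append.2 ⟨h.nodup_up _ _ (by omega), ?_, ?_⟩
    · refine List.nodup_append.2 ⟨hn, by simp, ?_⟩
      rintro x hx y hy rfl
      rw [List.mem_singleton] at hy
      exact hd a le_rfl hab (hy ▸ hx)
    · rintro x hx y hy rfl
      obtain ⟨i, h3, h4, rfl⟩ := mem_up.1 hx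
      rcases List.mem_append.1 hy with hy | hy
      · exact hd i h3.le h4 hy
      · rw [List.mem_singleton] at hy
        have := h.eq_of_lt hy (by omega) (by omega)
        omega

/-- Two disjoint arcs of the cycle, from `f a` to `f b` and from `f a'` to `f b'`, both traversed
forwards, are joined into a closed path by two disjoint connectors. -/
theorem TA_par (h : LC G c f) (hL : Lg G c) {a b a' b' : ℤ} (hab : a ≤ b) (hba : b < a')
    (hab' : a' ≤ b') (hbc : b' < a + c) {U W : List V}
    (hU : Con G (f b) U (f a')) (hW : Con G (f b') W (f a)) (hUn : U.Nodup) (hWn : W.Nodup)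
    (hUW : ∀ x ∈ U, x ∉ W)
    (hUd : ∀ i, a ≤ i ∧ i ≤ b ∨ a' ≤ i ∧ i ≤ b' → f i ∉ U)
    (hWd : ∀ i, a ≤ i ∧ i ≤ b ∨ a' ≤ i ∧ i ≤ b' → f i ∉ W) :
    (b - a + 1) + (b' - a' + 1) + U.length + W.length ≤ c := by
  obtain ⟨n, rfl⟩ : ∃ n : ℕ, b = a + n := ⟨(b - a).toNat, by omega⟩
  obtain ⟨m, rfl⟩ : ∃ m : ℕ, b' = a' + m := ⟨(b' - a').toNat, by omega⟩
  have h1 := (((h.tr_up a n).append hU).append (h.tr_up a' m)).append hW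
  have h2 := hL _ _ h1 ?_
  · simp only [List.length_append, up_length, List.length_singleton] at h2; omega
  · have e1 : ∀ i j, f i = f j → (a ≤ i ∧ i < a + c) → (a ≤ j ∧ j < a + c) → i = j :=
      fun i j e h1 h2 => h.eq_of_lt e (by omega) (by omega)
    simp only [List.nodup_append, List.mem_append, List.mem_singleton, mem_up, List.nodup_singleton]
    refine ⟨⟨⟨h.nodup_up _ _ (by omega), ⟨hUn, trivial, ?_⟩, ?_⟩, h.nodup_up _ _ (by omega), ?_⟩,
      ⟨hWn, trivial, ?_⟩, ?_⟩
    · rintro x hx y rfl rfl; exact hUd _ (Or.inr ⟨le_rfl, hab'⟩) hx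
    · rintro _ ⟨i, h3, h4, rfl⟩ y hy rfl
      rcases hy with hy | hy
      · exact hUd i (by omega) hy
      · have := e1 _ _ hy (by omega) (by omega); omega
    · rintro x hx _ ⟨i, h3, h4, rfl⟩ rfl
      rcases hx with ⟨j, h5, h6, h7⟩ | hx | hx
      · have := e1 _ _ h7 (by omega) (by omega); omega
      · exact hUd i (by omega) hx
      · have := e1 _ _ hx (by omega) (by omega); omega
    · rintro x hx y rfl rfl; exact hWd _ (Or.inl ⟨le_rfl, hab⟩) hx
    · rintro x hx y hy rfl
      rcases hx with (⟨i, h3, h4, rfl⟩ | hx | rfl) | ⟨i, h3, h4, rfl⟩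
      · rcases hy with hy | hy
        · exact hWd i (by omega) hy
        · have := e1 _ _ hy (by omega) (by omega); omega
      · rcases hy with hy | rfl
        · exact hUW _ hx hy
        · exact hUd a (by omega) hx
      · rcases hy with hy | hy
        · exact hWd a' (by omega) hy
        · have := e1 _ _ hy (by omega) (by omega); omega
      · rcases hy with hy | hy
        · exact hWd i (by omega) hy
        · have := e1 _ _ hy (by omega) (by omega); omega

/-- The analogue of `TA_par` in which the second arc is traversed backwards. -/
theorem TA_rev (h : LC G c f) (hL : Lg G c) {a b a' b' : ℤ} (hab : a ≤ b) (hba : b < a')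
    (hab' : a' ≤ b') (hbc : b' < a + c) {U W : List V}
    (hU : Con G (f b) U (f b')) (hW : Con G (f a') W (f a)) (hUn : U.Nodup) (hWn : W.Nodup)
    (hUW : ∀ x ∈ U, x ∉ W)
    (hUd : ∀ i, a ≤ i ∧ i ≤ b ∨ a' ≤ i ∧ i ≤ b' → f i ∉ U)
    (hWd : ∀ i, a ≤ i ∧ i ≤ b ∨ a' ≤ i ∧ i ≤ b' → f i ∉ W) :
    (b - a + 1) + (b' - a' + 1) + U.length + W.length ≤ c := by
  obtain ⟨n, rfl⟩ : ∃ n : ℕ, b = a + n := ⟨(b - a).toNat, by omega⟩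
  obtain ⟨m, rfl⟩ : ∃ m : ℕ, b' = a' + m := ⟨(b' - a').toNat, by omega⟩
  obtain ⟨M, hM, hM2⟩ := (h.tr_up a' m).rev
  have h1 := (((h.tr_up a n).append hU).append hM2).append hW
  have e1 : ∀ i j, f i = f j → (a ≤ i ∧ i < a + c) → (a ≤ j ∧ j < a + c) → i = j :=
      fun i j e h1 h2 => h.eq_of_lt e (by omega) (by omega)
  have hMl : M.length = m := by
    have := congrArg List.length hM
    simpa [up_length] using this.symm
  have hMn : (f (a' + m) :: M).Nodup := by
    rw [← hM, List.nodup_reverse, List.nodup_cons]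
    refine ⟨fun hm => ?_, h.nodup_up _ _ (by omega)⟩
    obtain ⟨i, h3, h4, h5⟩ := mem_up.1 hm
    have := e1 _ _ h5 (by omega) (by omega); omega
  have hMm : ∀ x ∈ M, ∃ i, a' ≤ i ∧ i ≤ a' + m ∧ f i = x := by
    intro x hx
    have : x ∈ (f a' :: up f a' m).reverse := by rw [hM]; exact List.mem_cons_of_mem _ hx
    rw [List.mem_reverse, List.mem_cons, mem_up] at this
    rcases this with rfl | ⟨i, h3, h4, h5⟩
    · exact ⟨a', le_rfl, by omega, rfl⟩
    · exact ⟨i, by omega, h4, h5⟩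
  rw [List.nodup_cons] at hMn
  have h2 := hL _ _ h1 ?_
  · simp only [List.length_append, up_length, List.length_singleton] at h2; omega
  · simp only [List.nodup_append, List.mem_append, List.mem_singleton, mem_up, List.nodup_singleton]
    refine ⟨⟨⟨h.nodup_up _ _ (by omega), ⟨hUn, trivial, ?_⟩, ?_⟩, hMn.2, ?_⟩,
      ⟨hWn, trivial, ?_⟩, ?_⟩
    · rintro x hx y rfl rfl; exact hUd _ (Or.inr ⟨hab', le_rfl⟩) hx
    · rintro _ ⟨i, h3, h4, rfl⟩ y hy rfl
      rcases hy with hy | hy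
      · exact hUd i (by omega) hy
      · have := e1 _ _ hy (by omega) (by omega); omega
    · rintro x hx y hy rfl
      rcases hx with ⟨j, h5, h6, h7⟩ | hx | hx
      · obtain ⟨i, h3, h4, rfl⟩ := hMm _ hy
        have := e1 _ _ h7 (by omega) (by omega); omega
      · obtain ⟨i, h3, h4, rfl⟩ := hMm _ hy
        exact hUd i (by omega) hx
      · exact hMn.1 (hx ▸ hy)
    · rintro x hx y rfl rfl; exact hWd _ (Or.inl ⟨le_rfl, hab⟩) hx
    · rintro x hx y hy rfl
      rcases hx with (⟨i, h3, h4, rfl⟩ | hx | rfl) | hx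
      · rcases hy with hy | hy
        · exact hWd i (by omega) hy
        · have := e1 _ _ hy (by omega) (by omega); omega
      · rcases hy with hy | rfl
        · exact hUW _ hx hy
        · exact hUd a (by omega) hx
      · rcases hy with hy | hy
        · exact hWd _ (by omega) hy
        · have := e1 _ _ hy (by omega) (by omega); omega
      · obtain ⟨i, h3, h4, rfl⟩ := hMm _ hx
        rcases hy with hy | hy
        · exact hWd i (by omega) hy
        · have := e1 _ _ hy (by omega) (by omega); omega

end LCLemmas

/-! ### Components outside a longest cycle -/

/-- `H` is the vertex set of a component of the graph obtained by deleting the cycle `f`. -/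
structure Cmp (G : SimpleGraph V) (f : ℤ → V) (H : Finset V) : Prop where
  out : ∀ i, f i ∉ H
  closed : ∀ x ∈ H, ∀ y, G.Adj x y → (∀ i, f i ≠ y) → y ∈ H
  conn : ∀ x ∈ H, ∀ y ∈ H, ∃ L, Tr G x L y ∧ (x :: L).Nodup ∧ ∀ z ∈ L, z ∈ H

/-- `v` has a neighbour in `H`. -/
def Att (G : SimpleGraph V) (H : Finset V) (v : V) : Prop := ∃ h ∈ H, G.Adj v h

/-- `U` is an ear from `a` to `b`: the interior of a path from `a` to `b` through `H`. -/
structure Ear (G : SimpleGraph V) (H : Finset V) (a : V) (U : List V) (b : V) : Prop where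
  con : Con G a U b
  nodup : U.Nodup
  sub : ∀ x ∈ U, x ∈ H

/-- The standing hypotheses on the graph; `δ` is a lower bound for the degrees. -/
structure Ctx [Fintype V] (G : SimpleGraph V) (δ : ℕ) : Prop where
  card : Fintype.card V ≤ 3 * δ + 2
  deg : ∀ (v : V) (S : Finset V), (∀ w, G.Adj v w → w ∈ S) → δ ≤ S.card
  three : 3 ≤ δ
  cut : ∀ (S : Finset V) (X : Set V) (x v : V), S.card ≤ 2 → x ∈ X → x ∉ S → v ∉ X → v ∉ S →
    (∀ y ∈ X, ∀ z, G.Adj y z → z ∈ X ∨ z ∈ S) → False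
  tough : OneTough G

/-- The form in which 3-connectivity is used: no set `X` has all its outside neighbours in a set
`S` of at most two vertices while some vertex lies outside both. -/
theorem cut_of_threeConnected [Fintype V] {G : SimpleGraph V} (h3 : ThreeConnected G)
    (S : Finset V) (X : Set V) (x v : V) (hS : S.card ≤ 2) (hx : x ∈ X) (hxS : x ∉ S)
    (hv : v ∉ X) (hvS : v ∉ S) (hX : ∀ y ∈ X, ∀ z, G.Adj y z → z ∈ X ∨ z ∈ S) : False := by
  obtain ⟨p⟩ := (h3 S hS).preconnected ⟨x, by simpa using hxS⟩ ⟨v, by simpa using hvS⟩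
  have key : ∀ (a b : ((S : Set V)ᶜ : Set V)), (G.induce (S : Set V)ᶜ).Walk a b →
      (a : V) ∈ X → (b : V) ∈ X := by
    intro a b q
    induction q with
    | nil => exact id
    | @cons a b d h q ih =>
      intro ha
      refine ih ?_
      rcases hX _ ha _ h with h1 | h1
      · exact h1
      · exact absurd (Finset.mem_coe.2 h1) b.2
  exact hv (key _ _ p hx)

section
variable {G : SimpleGraph V} {c : ℕ} {f : ℤ → V} {H : Finset V}

theorem Cmp.rot (h : Cmp G f H) (k : ℤ) : Cmp G (fun i => f (i + k)) H where
  out i := h.out _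
  closed x hx y hxy hy := h.closed x hx y hxy fun i => by
    have := hy (i - k)
    simpa using this
  conn := h.conn

theorem Cmp.mir (h : Cmp G f H) : Cmp G (fun i => f (-i)) H where
  out i := h.out _
  closed x hx y hxy hy := h.closed x hx y hxy fun i => by
    have := hy (-i)
    simpa using this
  conn := h.conn

theorem Ear.rev {a b : V} {U : List V} (h : Ear G H a U b) : Ear G H b U.reverse a :=
  ⟨h.con.rev, by simpa using h.nodup, fun x hx => h.sub x (by simpa using hx)⟩

theorem Ear.of_tr {a b x y : V} {L : List V} (hax : G.Adj a x) (hyb : G.Adj y b)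
    (h : Tr G x L y) (hn : (x :: L).Nodup) (hs : ∀ z ∈ x :: L, z ∈ H) : Ear G H a (x :: L) b :=
  ⟨con_cons.2 ⟨hax, h.con hyb⟩, hn, hs⟩

theorem Cmp.ear (h : Cmp G f H) {a b : V} (ha : Att G H a) (hb : Att G H b) :
    ∃ U, Ear G H a U b ∧ 1 ≤ U.length := by
  obtain ⟨x, hx, hax⟩ := ha
  obtain ⟨y, hy, hby⟩ := hb
  obtain ⟨L, h1, h2, h3⟩ := h.conn x hx y hy
  refine ⟨x :: L, Ear.of_tr hax hby.symm h1 h2 ?_, by simp⟩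
  simpa [hx] using h3

theorem Cmp.ear_of (h : Cmp G f H) {a b x y : V} (hx : x ∈ H) (hy : y ∈ H) (hax : G.Adj a x)
    (hby : G.Adj b y) (hxy : x ≠ y) : ∃ U, Ear G H a U b ∧ 2 ≤ U.length := by
  obtain ⟨L, h1, h2, h3⟩ := h.conn x hx y hy
  refine ⟨x :: L, Ear.of_tr hax hby.symm h1 h2 ?_, ?_⟩
  · simpa [hx] using h3
  · cases L with
    | nil => exact absurd h1 hxy
    | cons z L => simp

/-- The ends of an ear with `l` vertices in `H` are at distance at least `l + 1` along the longest
cycle. -/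
theorem dist (hC : LC G c f) (hL : Lg G c) (hH : Cmp G f H) {i j : ℤ} (h1 : i < j) (h2 : j < i + c)
    {U : List V} (hU : Ear G H (f i) U (f j)) : U.length + 1 ≤ j - i := by
  have := OA hC hL (a := j) (b := i + c) (by omega) (by omega) (U := U)
    (by rw [hC.per]; exact hU.con) hU.nodup (fun k _ _ hk => hH.out k (hU.sub _ hk))
  omega

/-- Crossing lemma, with the crossing path `W` leaving after the two attachment vertices. -/
theorem XL (hC : LC G c f) (hL : Lg G c) (hH : Cmp G f H) {a i b j : ℤ} (h1 : a < i) (h2 : i ≤ b)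
    (h3 : b < j) (h4 : j ≤ a + c) {U W : List V} (hU : Ear G H (f a) U (f b))
    (hW : Con G (f i) W (f j)) (hWn : W.Nodup) (hWo : ∀ x ∈ W, x ∉ H ∧ ∀ i, f i ≠ x) :
    (U.length : ℤ) + W.length ≤ (i - a - 1) + (j - b - 1) := by
  have := TA_rev hC hL (a := i) (b := b) (a' := j) (b' := a + c) h2 h3 h4 (by omega)
    (U := U.reverse) (W := W.reverse) (by rw [hC.per]; exact hU.con.rev) hW.rev
    (by simpa using hU.nodup) (by simpa using hWn)
    (fun x hx hx' => (hWo x (by simpa using hx')).1 (hU.sub x (by simpa using hx)))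
    (fun k _ hk => hH.out k (hU.sub _ (by simpa using hk)))
    (fun k _ hk => (hWo _ (by simpa using hk)).2 k rfl)
  simp only [List.length_reverse] at this
  omega

/-- Crossing lemma, with the crossing path `W` leaving before the two attachment vertices. -/
theorem XL' (hC : LC G c f) (hL : Lg G c) (hH : Cmp G f H) {a i b j : ℤ} (h1 : a ≤ i) (h2 : i < b)
    (h3 : b ≤ j) (h4 : j < a + c) {U W : List V} (hU : Ear G H (f a) U (f b))
    (hW : Con G (f i) W (f j)) (hWn : W.Nodup) (hWo : ∀ x ∈ W, x ∉ H ∧ ∀ i, f i ≠ x) :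
    (U.length : ℤ) + W.length ≤ (b - i - 1) + (a + c - j - 1) := by
  have := TA_rev hC hL (a := a) (b := i) (a' := b) (b' := j) h1 h2 h3 (by omega)
    (U := W) (W := U.reverse) hW hU.con.rev
    hWn (by simpa using hU.nodup)
    (fun x hx hx' => (hWo x hx).1 (hU.sub x (by simpa using hx')))
    (fun k _ hk => (hWo _ hk).2 k rfl)
    (fun k _ hk => hH.out k (hU.sub _ (by simpa using hk)))
  simp only [List.length_reverse] at this
  omega

theorem not_att_succ (hC : LC G c f) (hL : Lg G c) (hH : Cmp G f H) {i : ℤ} (h : Att G H (f i)) :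
    ¬ Att G H (f (i + 1)) := by
  intro h'
  obtain ⟨U, hU, hl⟩ := hH.ear h h'
  have := hC.three
  have := dist hC hL hH (by omega) (by omega) hU
  omega

open Classical in
/-- The vertices of the cycle that have a neighbour in `H`. -/
noncomputable def AS [Fintype V] (G : SimpleGraph V) (f : ℤ → V) (H : Finset V) : Finset V :=
  univ.filter fun v => (∃ i, f i = v) ∧ Att G H v

theorem mem_AS [Fintype V] {v : V} : v ∈ AS G f H ↔ (∃ i, f i = v) ∧ Att G H v := by
  simp [AS]

theorem Cmp.nbr [Fintype V] (hH : Cmp G f H) {x y : V} (hx : x ∈ H) (hxy : G.Adj x y) :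
    y ∈ H ∨ y ∈ AS G f H := by
  by_cases h : ∃ i, f i = y
  · exact Or.inr (mem_AS.2 ⟨h, x, hx, hxy.symm⟩)
  · exact Or.inl (hH.closed x hx y hxy fun i hi => h ⟨i, hi⟩)

/-- By 3-connectivity a component has at least three attachment vertices on the cycle. -/
theorem three_le_AS [Fintype V] {δ : ℕ} (hG : Ctx G δ) (hC : LC G c f) (hL : Lg G c)
    (hH : Cmp G f H) (hne : H.Nonempty) : 3 ≤ (AS G f H).card := by
  by_contra hlt
  obtain ⟨x, hx⟩ := hne
  have : ∃ v, v ∉ H ∧ v ∉ AS G f H := by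
    by_cases h : Att G H (f 0)
    · refine ⟨f (0 + 1), hH.out _, fun h' => not_att_succ hC hL hH h (mem_AS.1 h').2⟩
    · exact ⟨f 0, hH.out _, fun h' => h (mem_AS.1 h').2⟩
  obtain ⟨v, hv, hv'⟩ := this
  refine hG.cut (AS G f H) H x v (by omega) hx ?_ hv hv' fun y hy z hyz => hH.nbr hy hyz
  intro h
  obtain ⟨⟨i, rfl⟩, _⟩ := mem_AS.1 h
  exact hH.out i hx

/-- If every ear had a single vertex, all attachment vertices would see the same vertex of `H`
only, which would then separate the rest of `H`. -/
theorem exists_ear_two [Fintype V] {δ : ℕ} (hG : Ctx G δ) (hC : LC G c f) (hL : Lg G c)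
    (hH : Cmp G f H) (h2 : 2 ≤ H.card) : ∃ a ∈ AS G f H, ∃ b ∈ AS G f H, a ≠ b ∧
      ∃ U, Ear G H a U b ∧ 2 ≤ U.length := by
  by_contra! hno
  have h3 := three_le_AS hG hC hL hH (card_pos.1 (by omega))
  have key : ∀ a ∈ AS G f H, ∀ b ∈ AS G f H, a ≠ b → ∀ x ∈ H, ∀ y ∈ H, G.Adj a x → G.Adj b y →
      x = y := by
    intro a ha b hb hab x hx y hy hax hby
    by_contra hxy
    obtain ⟨U, hU, hU2⟩ := hH.ear_of hx hy hax hby hxy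
    exact absurd hU2 (not_le.2 (hno a ha b hb hab U hU))
  obtain ⟨a, ha, b, hb, hab⟩ := one_lt_card.1 (show 1 < (AS G f H).card by omega)
  obtain ⟨h, hh, hah⟩ := (mem_AS.1 ha).2
  obtain ⟨h', hh', hbh⟩ := (mem_AS.1 hb).2
  have e := key a ha b hb hab h hh h' hh' hah hbh
  subst e
  have all : ∀ d ∈ AS G f H, ∀ y ∈ H, G.Adj d y → y = h := by
    intro d hd y hy hdy
    by_cases hda : d = a
    · subst hda
      exact key d hd b hb hab y hy h hh hdy hbh
    · exact key d hd a ha hda y hy h hh hdy hah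
  obtain ⟨x, hx, hxh⟩ := exists_mem_ne (show 1 < H.card by omega) h
  refine hG.cut {h} {y | y ∈ H ∧ y ≠ h} x (f 0) (by simp) ⟨hx, hxh⟩ (by simpa using hxh)
    (fun h => hH.out 0 h.1) (fun h0 => hH.out 0 (by rw [mem_singleton.1 h0]; exact hh)) ?_
  rintro y ⟨hy, hyh⟩ z hyz
  rcases hH.nbr hy hyz with hz | hz
  · by_cases e : z = h
    · right; simp [e]
    · left; exact ⟨hz, e⟩
  · exact absurd (all z hz y hy hyz.symm) hyh

end

/-! ### A bound on the order of a component -/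

section
variable {G : SimpleGraph V} {c : ℕ} {f : ℤ → V} {H : Finset V}

theorem LC.cons_up (hC : LC G c f) {a : ℤ} {x : V} (n : ℕ) (h : G.Adj x (f a)) :
    Con G x (f a :: up f a n) (f (a + n + 1)) := con_cons.2 ⟨h, hC.con_up a n⟩

/-- Successors of two attachment vertices cannot be joined to consecutive vertices in the
crossing way. -/
theorem no_cross (hC : LC G c f) (hL : Lg G c) (hH : Cmp G f H) {B i : ℤ} (hB : B < c)
    {U : List V} (hU : Ear G H (f B) U (f 0)) (hU1 : 1 ≤ U.length) (h1 : 1 ≤ i) (h2 : i < B)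
    (h3 : G.Adj (f 1) (f (i + 1))) (h4 : G.Adj (f (B + 1)) (f i)) : False := by
  obtain ⟨n, rfl⟩ : ∃ n : ℕ, i = 1 + n := ⟨(i - 1).toNat, by omega⟩
  have hW : Con G (f (1 + n + 1)) (f 1 :: up f 1 n) (f (B + 1)) :=
    con_cons.2 ⟨h3.symm, (hC.tr_up 1 n).con h4.symm⟩
  have hn : (f 1 :: up f 1 n).Nodup := by
    rw [List.nodup_cons]
    refine ⟨fun h => ?_, hC.nodup_up _ _ (by omega)⟩
    obtain ⟨k, hk1, hk2, hk3⟩ := mem_up.1 h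
    have := hC.eq_of_lt hk3 (by omega) (by omega); omega
  have hm : ∀ x ∈ f 1 :: up f 1 n, ∃ k : ℤ, 1 ≤ k ∧ k ≤ 1 + n ∧ f k = x := by
    intro x hx
    rw [List.mem_cons, mem_up] at hx
    rcases hx with rfl | ⟨k, hk1, hk2, hk3⟩
    · exact ⟨1, le_rfl, by omega, rfl⟩
    · exact ⟨k, by omega, hk2, hk3⟩
  have := TA_rev hC hL (a := 1 + n + 1) (b := B) (a' := B + 1) (b' := c) (by omega) (by omega)
    (by omega) (by omega) (U := U) (W := (f 1 :: up f 1 n).reverse)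
    (by have := hC.per 0; rw [zero_add] at this; rw [this]; exact hU.con) hW.rev hU.nodup
    (by rw [List.nodup_reverse]; exact hn)
    (fun x hx hx' => by
      obtain ⟨k, _, _, rfl⟩ := hm x (List.mem_reverse.1 hx')
      exact hH.out k (hU.sub _ hx))
    (fun k _ hk => hH.out k (hU.sub _ hk))
    (fun k hk hx => by
      obtain ⟨j, h5, h6, h7⟩ := hm _ (List.mem_reverse.1 hx)
      have := hC.eq_of_lt h7 (by omega) (by omega)
      omega)
  simp only [List.length_reverse, List.length_cons, up_length] at this
  omega

open Classical in
/-- The size bound for a component, from the degree sum of the successors of two attachment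
vertices; the index `E + 1` is missed by the count. -/
theorem lemma_K_aux [Fintype V] {δ : ℕ} (hG : Ctx G δ) (hC : LC G c f) (hL : Lg G c)
    (hH : Cmp G f H) {E B : ℤ} (hE : 0 < E) (hEB : E < B) (hB : B < c)
    (h0 : Att G H (f 0)) (hAE : Att G H (f E)) (hAB : Att G H (f B))
    {U : List V} (hU : Ear G H (f 0) U (f E)) (hU2 : 2 ≤ U.length) :
    2 * δ + H.card + 1 ≤ Fintype.card V := by
  have hc := hC.three
  have hfc : f c = f 0 := by simpa using hC.per 0
  obtain ⟨U', hU', hU'1⟩ := hH.ear hAB h0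
  obtain ⟨U3, hU3, hU31⟩ := hH.ear hAE hAB
  have d1 := dist hC hL hH (by omega) (by omega) hU
  have d2 := dist hC hL hH (by omega) (by omega) hU'.rev
  have d3 := dist hC hL hH (by omega) (by omega) hU3
  have d4 := dist hC hL hH (i := B) (j := c) (by omega) (by omega) (by rw [hfc]; exact hU')
  simp only [List.length_reverse] at d2
  -- positions in the window `(0, c]`
  have hw : ∀ v, ∃ p : ℤ, (∃ i, f i = v) → 1 ≤ p ∧ p ≤ c ∧ f p = v := by
    intro v
    by_cases h : ∃ i, f i = v
    · obtain ⟨i, rfl⟩ := h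
      obtain ⟨j, h1, h2, h3⟩ := hC.win i 1
      exact ⟨j, fun _ => ⟨h1, by omega, h3⟩⟩
    · exact ⟨0, fun h' => absurd h' h⟩
  choose p hp using hw
  have hpf : ∀ i : ℤ, 1 ≤ i → i ≤ c → p (f i) = i := by
    intro i h1 h2
    obtain ⟨h3, h4, h5⟩ := hp (f i) ⟨i, rfl⟩
    exact hC.eq_of_lt h5 (by omega) (by omega)
  have hinj : ∀ i j : ℤ, 1 ≤ i → i ≤ c → 1 ≤ j → j ≤ c → f i = f j → i = j := by
    intro i j _ _ _ _ e; exact hC.eq_of_lt e (by omega) (by omega)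
  set N1 := univ.filter fun w => G.Adj (f 1) w with hN1
  set N2 := univ.filter fun w => G.Adj (f (B + 1)) w with hN2
  have e1 : δ ≤ N1.card := hG.deg (f 1) N1 (by simp [hN1])
  have e2 : δ ≤ N2.card := hG.deg (f (B + 1)) N2 (by simp [hN2])
  have nH1 : ∀ w ∈ H, ¬ G.Adj (f 1) w := fun w hw h =>
    not_att_succ hC hL hH h0 ⟨w, hw, by simpa using h⟩
  have nH2 : ∀ w ∈ H, ¬ G.Adj (f (B + 1)) w := fun w hw h =>
    not_att_succ hC hL hH hAB ⟨w, hw, h⟩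
  -- shifting maps
  let φ1 : V → V := fun v => if (∃ i, f i = v) ∧ p v ≤ B then f (p v - 1) else v
  let φ2 : V → V := fun v => if (∃ i, f i = v) ∧ B < p v then f (p v - 1) else v
  have φ1a : ∀ i : ℤ, 1 ≤ i → i ≤ B → φ1 (f i) = f (i - 1) := by
    intro i h1 h2
    simp only [φ1]
    rw [hpf i h1 (by omega), if_pos ⟨⟨i, rfl⟩, h2⟩]
  have φ1b : ∀ i : ℤ, B < i → i ≤ c → φ1 (f i) = f i := by
    intro i h1 h2
    simp only [φ1]
    rw [hpf i (by omega) (by omega), if_neg (by omega)]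
  have φ1o : ∀ v, (¬ ∃ i, f i = v) → φ1 v = v := by
    intro v h1; simp only [φ1]; rw [if_neg (by tauto)]
  have φ2a : ∀ i : ℤ, B < i → i ≤ c → φ2 (f i) = f (i - 1) := by
    intro i h1 h2
    simp only [φ2]
    rw [hpf i (by omega) (by omega), if_pos ⟨⟨i, rfl⟩, h1⟩]
  have φ2b : ∀ i : ℤ, 1 ≤ i → i ≤ B → φ2 (f i) = f i := by
    intro i h1 h2
    simp only [φ2]
    rw [hpf i (by omega) (by omega), if_neg (by omega)]
  have φ2o : ∀ v, (¬ ∃ i, f i = v) → φ2 v = v := by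
    intro v h1; simp only [φ2]; rw [if_neg (by tauto)]
  -- classification of the neighbours of the two successors and of their shifts
  have cl1 : ∀ w ∈ N1, (∃ i : ℤ, 1 ≤ i ∧ i ≤ B - 1 ∧ w = f (i + 1) ∧ φ1 w = f i) ∨
      (∃ i : ℤ, B < i ∧ i ≤ c ∧ w = f i ∧ φ1 w = f i) ∨ ((¬ ∃ i, f i = w) ∧ φ1 w = w) := by
    intro w hw
    by_cases h : ∃ i, f i = w
    · obtain ⟨h3, h4, h5⟩ := hp w h
      by_cases hb : p w ≤ B
      · have h6 : p w ≠ 1 := by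
          intro h6; rw [h6] at h5; rw [← h5] at hw; simp [hN1] at hw
        refine Or.inl ⟨p w - 1, by omega, by omega, by simp [h5], ?_⟩
        rw [← φ1a _ h3 hb, h5]
      · refine Or.inr (Or.inl ⟨p w, by omega, h4, h5.symm, ?_⟩)
        rw [← φ1b (p w) (by omega) h4, h5]
    · exact Or.inr (Or.inr ⟨h, φ1o w h⟩)
  have cl2 : ∀ w ∈ N2, (∃ i : ℤ, 1 ≤ i ∧ i ≤ B ∧ w = f i ∧ φ2 w = f i) ∨
      (∃ i : ℤ, B < i ∧ i ≤ c - 1 ∧ w = f (i + 1) ∧ φ2 w = f i) ∨ ((¬ ∃ i, f i = w) ∧ φ2 w = w) := by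
    intro w hw
    by_cases h : ∃ i, f i = w
    · obtain ⟨h3, h4, h5⟩ := hp w h
      by_cases hb : p w ≤ B
      · refine Or.inl ⟨p w, by omega, hb, h5.symm, ?_⟩
        rw [← φ2b (p w) h3 hb, h5]
      · have h6 : p w ≠ B + 1 := by
          intro h6; rw [h6] at h5; rw [← h5] at hw; simp [hN2] at hw
        refine Or.inr (Or.inl ⟨p w - 1, by omega, by omega, by simp [h5], ?_⟩)
        rw [← φ2a _ (by omega) h4, h5]
    · exact Or.inr (Or.inr ⟨h, φ2o w h⟩)
  have i1 : Set.InjOn φ1 N1 := by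
    intro w hw w' hw' e
    rcases cl1 w hw with ⟨i, a1, a2, a3, a4⟩ | ⟨i, a1, a2, a3, a4⟩ | ⟨a1, a2⟩ <;>
    rcases cl1 w' hw' with ⟨j, b1, b2, b3, b4⟩ | ⟨j, b1, b2, b3, b4⟩ | ⟨b1, b2⟩
    · have := hinj i j (by omega) (by omega) (by omega) (by omega) (by rw [← a4, ← b4, e])
      rw [a3, b3, this]
    · have := hinj i j (by omega) (by omega) (by omega) (by omega) (by rw [← a4, ← b4, e])
      omega
    · exact absurd ⟨i, by rw [← a4, e, b2]⟩ b1
    · have := hinj i j (by omega) (by omega) (by omega) (by omega) (by rw [← a4, ← b4, e])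
      omega
    · have := hinj i j (by omega) (by omega) (by omega) (by omega) (by rw [← a4, ← b4, e])
      rw [a3, b3, this]
    · exact absurd ⟨i, by rw [← a4, e, b2]⟩ b1
    · exact absurd ⟨j, by rw [← b4, ← e, a2]⟩ a1
    · exact absurd ⟨j, by rw [← b4, ← e, a2]⟩ a1
    · rw [← a2, ← b2, e]
  have i2 : Set.InjOn φ2 N2 := by
    intro w hw w' hw' e
    rcases cl2 w hw with ⟨i, a1, a2, a3, a4⟩ | ⟨i, a1, a2, a3, a4⟩ | ⟨a1, a2⟩ <;>
    rcases cl2 w' hw' with ⟨j, b1, b2, b3, b4⟩ | ⟨j, b1, b2, b3, b4⟩ | ⟨b1, b2⟩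
    · have := hinj i j (by omega) (by omega) (by omega) (by omega) (by rw [← a4, ← b4, e])
      rw [a3, b3, this]
    · have := hinj i j (by omega) (by omega) (by omega) (by omega) (by rw [← a4, ← b4, e])
      omega
    · exact absurd ⟨i, by rw [← a4, e, b2]⟩ b1
    · have := hinj i j (by omega) (by omega) (by omega) (by omega) (by rw [← a4, ← b4, e])
      omega
    · have := hinj i j (by omega) (by omega) (by omega) (by omega) (by rw [← a4, ← b4, e])
      rw [a3, b3, this]
    · exact absurd ⟨i, by rw [← a4, e, b2]⟩ b1
    · exact absurd ⟨j, by rw [← b4, ← e, a2]⟩ a1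
    · exact absurd ⟨j, by rw [← b4, ← e, a2]⟩ a1
    · rw [← a2, ← b2, e]
  have hdisj : Disjoint (N1.image φ1) (N2.image φ2) := by
    rw [Finset.disjoint_left]
    intro x hx hx'
    obtain ⟨w, hw, rfl⟩ := mem_image.1 hx
    obtain ⟨w', hw', e⟩ := mem_image.1 hx'
    have A1 : G.Adj (f 1) w := by simpa [hN1] using hw
    have A2 : G.Adj (f (B + 1)) w' := by simpa [hN2] using hw'
    rcases cl1 w hw with ⟨i, a1, a2, a3, a4⟩ | ⟨i, a1, a2, a3, a4⟩ | ⟨a1, a2⟩ <;>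
    rcases cl2 w' hw' with ⟨j, b1, b2, b3, b4⟩ | ⟨j, b1, b2, b3, b4⟩ | ⟨b1, b2⟩
    · have := hinj i j (by omega) (by omega) (by omega) (by omega) (by rw [← a4, ← b4, e])
      subst this
      rw [a3] at A1; rw [b3] at A2
      exact no_cross hC hL hH hB hU' hU'1 a1 (by omega) A1 A2
    · have := hinj i j (by omega) (by omega) (by omega) (by omega) (by rw [← a4, ← b4, e])
      omega
    · exact absurd ⟨i, by rw [← a4, ← e, b2]⟩ b1
    · have := hinj i j (by omega) (by omega) (by omega) (by omega) (by rw [← a4, ← b4, e])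
      omega
    · have := hinj i j (by omega) (by omega) (by omega) (by omega) (by rw [← a4, ← b4, e])
      subst this
      rw [a3] at A1; rw [b3] at A2
      refine no_cross (hC.rot B) hL (hH.rot B) (B := c - B) (i := i - B) (by omega) (U := U'.reverse)
        ?_ (by simpa using hU'1) (by omega) (by omega) ?_ ?_
      · simpa [hfc] using hU'.rev
      · rw [show i - B + 1 + B = i + 1 by ring, add_comm]; exact A2
      · rw [show (c : ℤ) - B + 1 + B = 1 + c by ring, hC.per, sub_add_cancel]; exact A1
    · exact absurd ⟨i, by rw [← a4, ← e, b2]⟩ b1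
    · exact absurd ⟨j, by rw [← b4, e, a2]⟩ a1
    · exact absurd ⟨j, by rw [← b4, e, a2]⟩ a1
    · have hww : w = w' := by rw [← a2, ← b2, e]
      subst hww
      have := XL hC hL hH (a := 0) (i := 1) (b := B) (j := B + 1) (by omega) (by omega) (by omega)
        (by omega) hU'.rev (W := [w]) (by simp [con_cons, con_nil, A1, A2.symm]) (by simp)
        (by
          simp only [List.mem_singleton, forall_eq]
          exact ⟨fun h => nH1 w h A1, fun i hi => a1 ⟨i, hi⟩⟩)
      simp at this; omega
  have hsub : N1.image φ1 ∪ N2.image φ2 ⊆ univ \ (insert (f (E + 1)) H) := by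
    intro x hx
    rw [mem_sdiff, mem_insert, not_or]
    refine ⟨mem_univ _, ?_⟩
    rw [mem_union] at hx
    rcases hx with hx | hx
    · obtain ⟨w, hw, rfl⟩ := mem_image.1 hx
      have A1 : G.Adj (f 1) w := by simpa [hN1] using hw
      rcases cl1 w hw with ⟨i, a1, a2, a3, a4⟩ | ⟨i, a1, a2, a3, a4⟩ | ⟨a1, a2⟩
      · refine ⟨fun h => ?_, fun h => hH.out i (a4 ▸ h)⟩
        have := hinj i (E + 1) (by omega) (by omega) (by omega) (by omega) (by rw [← a4, h])
        rw [a3, this] at A1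
        have := XL hC hL hH (a := 0) (i := 1) (b := E) (j := E + 1 + 1) (by omega) (by omega)
          (by omega) (by omega) hU (W := []) (con_nil.2 A1) (by simp) (by simp)
        simp at this; omega
      · refine ⟨fun h => ?_, fun h => hH.out i (a4 ▸ h)⟩
        have := hinj i (E + 1) (by omega) (by omega) (by omega) (by omega) (by rw [← a4, h])
        omega
      · exact ⟨fun h => a1 ⟨E + 1, by rw [← h, a2]⟩, fun h => nH1 w (a2 ▸ h) A1⟩
    · obtain ⟨w, hw, rfl⟩ := mem_image.1 hx
      have A2 : G.Adj (f (B + 1)) w := by simpa [hN2] using hw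
      rcases cl2 w hw with ⟨i, a1, a2, a3, a4⟩ | ⟨i, a1, a2, a3, a4⟩ | ⟨a1, a2⟩
      · refine ⟨fun h => ?_, fun h => hH.out i (a4 ▸ h)⟩
        have := hinj i (E + 1) (by omega) (by omega) (by omega) (by omega) (by rw [← a4, h])
        rw [a3, this] at A2
        have := XL hC hL hH (a := E) (i := E + 1) (b := B) (j := B + 1) (by omega) (by omega)
          (by omega) (by omega) hU3 (W := []) (con_nil.2 A2.symm) (by simp) (by simp)
        rw [List.length_nil] at this; omega
      · refine ⟨fun h => ?_, fun h => hH.out i (a4 ▸ h)⟩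
        have := hinj i (E + 1) (by omega) (by omega) (by omega) (by omega) (by rw [← a4, h])
        omega
      · exact ⟨fun h => a1 ⟨E + 1, by rw [← h, a2]⟩, fun h => nH2 w (a2 ▸ h) A2⟩
  have hcard := card_le_card hsub
  have hins := card_le_univ (insert (f (E + 1)) H)
  rw [card_insert_of_notMem (hH.out _)] at hins
  rw [card_union_of_disjoint hdisj, card_image_of_injOn i1, card_image_of_injOn i2,
    card_sdiff_of_subset (subset_univ _), card_insert_of_notMem (hH.out _), card_univ] at hcard
  omega

/-- A component with at least two vertices satisfies `#H ≤ n - 2δ - 1`. -/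
theorem lemma_K [Fintype V] {δ : ℕ} (hG : Ctx G δ) (hC : LC G c f) (hL : Lg G c)
    (hH : Cmp G f H) (h2 : 2 ≤ H.card) : 2 * δ + H.card + 1 ≤ Fintype.card V := by
  classical
  obtain ⟨a, ha, b, hb, hab, U, hU, hU2⟩ := exists_ear_two hG hC hL hH h2
  have h3 := three_le_AS hG hC hL hH (card_pos.1 (by omega))
  obtain ⟨d, hd, hdn⟩ : ∃ d ∈ AS G f H, d ∉ ({a, b} : Finset V) := by
    by_contra! h
    have := card_le_card (show AS G f H ⊆ {a, b} from h)
    have := card_le_two (a := a) (b := b)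
    omega
  simp only [mem_insert, mem_singleton, not_or] at hdn
  obtain ⟨⟨i, rfl⟩, ha⟩ := mem_AS.1 ha
  obtain ⟨⟨j, rfl⟩, hb⟩ := mem_AS.1 hb
  obtain ⟨⟨k, rfl⟩, hd⟩ := mem_AS.1 hd
  obtain ⟨j, j1, j2, j3⟩ := hC.win j i
  obtain ⟨k, k1, k2, k3⟩ := hC.win k i
  rw [← j3] at hab hU hb hdn
  rw [← k3] at hdn hd
  have hij : i ≠ j := fun e => hab (by rw [e])
  have hik : k ≠ i := fun e => hdn.1 (by rw [e])
  have hjk : k ≠ j := fun e => hdn.2 (by rw [e])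
  rcases lt_or_gt_of_ne hjk with hlt | hlt
  · refine lemma_K_aux hG (hC.rot i).mir hL (hH.rot i).mir (E := c + i - j) (B := c + i - k)
      (by omega) (by omega) (by omega) (by simpa using ha) ?_ ?_ (U := U) ?_ hU2
    · rw [show -(c + i - j) + i = j - c by ring, ← hC.per, sub_add_cancel]; exact hb
    · rw [show -(c + i - k) + i = k - c by ring, ← hC.per, sub_add_cancel]; exact hd
    · rw [show -(c + i - j) + i = j - c by ring, ← hC.per (j - c), sub_add_cancel]; simpa using hU
  · refine lemma_K_aux hG (hC.rot i) hL (hH.rot i) (E := j - i) (B := k - i)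
      (by omega) (by omega) (by omega) (by simpa using ha) (by simpa using hb) (by simpa using hd)
      (U := U) (by simpa using hU) hU2

end

/-! ### Toughness and counting attachments -/

/-- Separated vertices outside `S` give a lower bound for the number of components. -/
theorem le_compCount [Fintype V] {G : SimpleGraph V} (S T : Finset V) (hT : ∀ t ∈ T, t ∉ S)
    (sep : ∀ t ∈ T, ∀ t' ∈ T, t ≠ t' → ∃ D : Set V, (t ∈ D ↔ t' ∉ D) ∧
      ∀ x ∈ D, x ∉ S → ∀ y, G.Adj x y → y ∉ S → y ∈ D) : T.card ≤ compCount G ↑S := by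
  classical
  have key : ∀ (D : Set V), (∀ x ∈ D, x ∉ S → ∀ y, G.Adj x y → y ∉ S → y ∈ D) →
      ∀ (a b : ((S : Set V)ᶜ : Set V)), (G.induce (S : Set V)ᶜ).Walk a b →
      (a : V) ∈ D → (b : V) ∈ D := by
    intro D hD a b q
    induction q with
    | nil => exact id
    | @cons a b d h q ih =>
      intro ha
      exact ih (hD a ha (fun h => a.2 (mem_coe.2 h)) b h (fun h => b.2 (mem_coe.2 h)))
  let F : T → (G.induce (S : Set V)ᶜ).ConnectedComponent := fun t =>
    (G.induce (S : Set V)ᶜ).connectedComponentMk ⟨t.1, fun h => hT t.1 t.2 (mem_coe.1 h)⟩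
  have hF : Function.Injective F := by
    intro t t' e
    by_contra hne
    obtain ⟨D, h1, h2⟩ := sep t t.2 t' t'.2 fun h => hne (Subtype.ext h)
    obtain ⟨q⟩ := ConnectedComponent.exact e
    by_cases ht : (t : V) ∈ D
    · exact h1.1 ht (key D h2 _ _ q ht)
    · exact ht (key D h2 _ _ q.reverse (by_contra fun h => ht (h1.2 h)))
  have := Nat.card_le_card_of_injective F hF
  simpa [compCount] using this

section
variable {G : SimpleGraph V} {c : ℕ} {f : ℤ → V} {H : Finset V}

/-- Toughness lemma: deleting a set `Z` of pairwise non-consecutive cycle vertices that contains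
all attachments of `H` leaves too many components, unless two of the arcs between
vertices of `Z` are joined outside the cycle. -/
theorem TL [Fintype V] (ht : OneTough G) (hC : LC G c f) (hH : Cmp G f H) (hne : H.Nonempty)
    (Z : Finset V) (hZ : ∀ z ∈ Z, ∃ i, f i = z) (hAZ : AS G f H ⊆ Z) (hZ1 : Z.Nonempty)
    (hZs : ∀ i, f i ∈ Z → f (i + 1) ∉ Z) :
    ∃ i j : ℤ, i < j ∧ j < i + c ∧ f i ∉ Z ∧ f j ∉ Z ∧ (∃ m, i < m ∧ m < j ∧ f m ∈ Z) ∧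
      (∃ m, j < m ∧ m < i + c ∧ f m ∈ Z) ∧
      ∃ Q, Con G (f i) Q (f j) ∧ Q.Nodup ∧ ∀ x ∈ Q, x ∉ H ∧ ∀ i, f i ≠ x := by
  classical
  by_contra hno
  obtain ⟨h, hh⟩ := hne
  have hc := hC.three
  have hpz : ∀ z, ∃ i, z ∈ Z → f i = z := by
    intro z
    by_cases hz : z ∈ Z
    · obtain ⟨i, hi⟩ := hZ z hz; exact ⟨i, fun _ => hi⟩
    · exact ⟨0, fun h => absurd h hz⟩
  choose p hp using hpz
  let D : V → Set V := fun z => {v | ∃ m, p z < m ∧ (∀ k, p z < k → k ≤ m → f k ∉ Z) ∧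
    ∃ L, Tr G (f m) L v ∧ ∀ x ∈ L, x ∉ H ∧ ∀ i, f i ≠ x}
  have hD : ∀ z ∈ Z, ∀ x ∈ D z, x ∉ Z → ∀ y, G.Adj x y → y ∉ Z → y ∈ D z := by
    rintro z hz x ⟨m, hm, hm2, L, hL, hLo⟩ hxZ y hxy hyZ
    have hxL := hL.mem_last
    have hxH : x ∉ H := by
      rcases List.mem_cons.1 hxL with rfl | hx
      · exact hH.out _
      · exact (hLo x hx).1
    have hyH : y ∉ H := by
      intro hy
      rcases List.mem_cons.1 hxL with rfl | hx
      · exact hxZ (hAZ (mem_AS.2 ⟨⟨m, rfl⟩, y, hy, hxy⟩))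
      · exact hxH (hH.closed y hy x hxy.symm (hLo x hx).2)
    by_cases hyC : ∃ i, f i = y
    · obtain ⟨i, rfl⟩ := hyC
      obtain ⟨j, h1, h2, h3⟩ := hC.win i (p z + 1)
      rw [← h3] at hyZ hxy ⊢
      by_cases hk : ∀ k, p z < k → k ≤ j → f k ∉ Z
      · exact ⟨j, by omega, hk, [], rfl, by simp⟩
      · exfalso
        push Not at hk
        obtain ⟨k, hk1, hk2, hk3⟩ := hk
        have hkj : k ≠ j := by rintro rfl; exact hyZ hk3
        have hmk : m < k := by
          by_contra hle
          exact hm2 k hk1 (by omega) hk3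
        have hpc : f (p z + c) ∈ Z := by rw [hC.per, hp z hz]; exact hz
        have hjc : j ≠ p z + c := by rintro rfl; exact hyZ hpc
        obtain ⟨M, hM1, hM2, hM3⟩ := hL.nodup_shorten
        exact hno ⟨m, j, by omega, by omega, hm2 m hm le_rfl, hyZ, ⟨k, hmk, by omega, hk3⟩,
          ⟨p z + c, by omega, by omega, hpc⟩, M, hM1.con hxy, hM2.of_cons,
          fun x hx => hLo x (hM3 hx)⟩
    · refine ⟨m, hm, hm2, L ++ [y], hL.append ⟨hxy, rfl⟩, ?_⟩
      intro w hw
      rcases List.mem_append.1 hw with hw | hw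
      · exact hLo w hw
      · rw [List.mem_singleton.1 hw]; exact ⟨hyH, fun i hi => hyC ⟨i, hi⟩⟩
  have hself : ∀ z ∈ Z, f (p z + 1) ∈ D z := by
    intro z hz
    refine ⟨p z + 1, by omega, fun k h1 h2 => ?_, [], rfl, by simp⟩
    rw [show k = p z + 1 by omega]
    exact hZs _ (by rw [hp z hz]; exact hz)
  have hother : ∀ z ∈ Z, ∀ z' ∈ Z, z ≠ z' → f (p z' + 1) ∉ D z := by
    rintro z hz z' hz' hzz ⟨m, hm, hm2, L, hL, hLo⟩
    rcases List.mem_cons.1 hL.mem_last with h1 | h1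
    · have h2 : f (p z') = f (m - 1) :=
        hC.eq_of_dvd (by have := hC.inj _ _ h1; rwa [show p z' - (m - 1) = p z' + 1 - m by ring])
      rw [hp z' hz'] at h2
      by_cases h3 : m - 1 = p z
      · rw [h3, hp z hz] at h2; exact hzz h2.symm
      · exact hm2 (m - 1) (by omega) (by omega) (h2 ▸ hz')
    · exact (hLo _ h1).2 _ rfl
  have hhD : ∀ z, h ∉ D z := by
    rintro z ⟨m, hm, hm2, L, hL, hLo⟩
    rcases List.mem_cons.1 hL.mem_last with h1 | h1
    · exact hH.out m (h1 ▸ hh)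
    · exact (hLo _ h1).1 hh
  have hT := le_compCount (G := G) Z (insert h (Z.image fun z => f (p z + 1))) ?_ ?_
  · rw [card_insert_of_notMem, card_image_of_injOn] at hT
    · have hZc := card_pos.2 hZ1
      have := ht Z (by omega)
      omega
    · intro z hz z' hz' e
      by_contra hne
      exact hother z hz z' hz' hne (by have := hself z hz; simp only at e; rwa [e] at this)
    · intro h'
      obtain ⟨z, hz, e⟩ := mem_image.1 h'
      exact hH.out _ (e ▸ hh)
  · intro t ht'
    rcases mem_insert.1 ht' with rfl | ht'
    · intro h'
      obtain ⟨i, rfl⟩ := hZ _ h'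
      exact hH.out i hh
    · obtain ⟨z, hz, rfl⟩ := mem_image.1 ht'
      exact hZs _ (by rw [hp z hz]; exact hz)
  · intro t ht1 t' ht2 hne
    rcases mem_insert.1 ht1 with rfl | ht1
    · rcases mem_insert.1 ht2 with rfl | ht2
      · exact absurd rfl hne
      · obtain ⟨z, hz, rfl⟩ := mem_image.1 ht2
        exact ⟨D z, by simp [hself z hz, hhD z], hD z hz⟩
    · obtain ⟨z, hz, rfl⟩ := mem_image.1 ht1
      refine ⟨D z, ?_, hD z hz⟩
      rcases mem_insert.1 ht2 with rfl | ht2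
      · simp [hself z hz, hhD z]
      · obtain ⟨z', hz', rfl⟩ := mem_image.1 ht2
        have : z ≠ z' := by rintro rfl; exact hne rfl
        simp [hself z hz, hother z hz z' hz' this]

/-- After each occurrence of `a` on the cycle, the next element of `A` is at distance at
least `k`. -/
def Gap (f : ℤ → V) (A : Finset V) (a : V) (k : ℕ) : Prop :=
  ∀ i, f i = a → ∀ m, i < m → m < i + k → f m ∉ A

/-- The gaps between consecutive elements of `A` add up to at most the length of the cycle. -/
theorem gap_sum (hC : LC G c f) (A : Finset V) (hA : ∀ a ∈ A, ∃ i, f i = a) (g : V → ℕ)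
    (hg : ∀ a ∈ A, Gap f A a (g a)) : ∑ a ∈ A, g a ≤ c := by
  classical
  have hpz : ∀ z, ∃ i, z ∈ A → f i = z := by
    intro z
    by_cases hz : z ∈ A
    · obtain ⟨i, hi⟩ := hA z hz; exact ⟨i, fun _ => hi⟩
    · exact ⟨0, fun h => absurd h hz⟩
  choose p hp using hpz
  have h1 : ∑ a ∈ A, g a = (A.sigma fun a => range (g a)).card := by simp [card_sigma]
  have h2 : (A.sigma fun a => range (g a)).card ≤ ((Ico (0 : ℤ) c).image f).card := by
    have main : ∀ a ∈ A, ∀ b ∈ A, ∀ t s : ℕ, t ≤ s → t < g a → s < g b →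
        f (p a + t) = f (p b + s) → a = b ∧ t = s := by
      intro a ha b hb t s hts hta hsb e
      have e1 : f (p a) = f (p b + (s - t)) :=
        hC.eq_of_dvd (by
          have := hC.inj _ _ e
          rwa [show p a - (p b + ((s : ℤ) - t)) = p a + t - (p b + s) by ring])
      rw [hp a ha] at e1
      rcases Nat.eq_or_lt_of_le hts with h | h
      · subst h
        simp only [sub_self, add_zero] at e1
        rw [hp b hb] at e1
        exact ⟨e1, rfl⟩
      · exact absurd (e1 ▸ ha) (hg b hb (p b) (hp b hb) _ (by omega) (by omega))
    refine card_le_card_of_injOn (fun x => f (p x.1 + x.2)) ?_ ?_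
    · rintro ⟨a, t⟩ _
      obtain ⟨j, h3, h4, h5⟩ := hC.win (p a + t) 0
      exact mem_coe.2 (mem_image.2 ⟨j, by simp; omega, h5⟩)
    · rintro ⟨a, t⟩ hx ⟨b, s⟩ hy e
      simp only [coe_sigma, Set.mem_sigma_iff, mem_coe, mem_range] at hx hy
      simp only at e
      rcases le_total t s with h | h
      · obtain ⟨rfl, rfl⟩ := main a hx.1 b hy.1 t s h hx.2 hy.2 e; rfl
      · obtain ⟨rfl, rfl⟩ := main b hy.1 a hx.1 s t h hy.2 hx.2 e.symm; rfl
  have h3 : ((Ico (0 : ℤ) c).image f).card ≤ c := card_image_le.trans (by simp)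
  omega

open Classical in
/-- The neighbours of `x` on the cycle. -/
noncomputable def CN [Fintype V] (G : SimpleGraph V) (f : ℤ → V) (x : V) : Finset V :=
  univ.filter fun v => (∃ i, f i = v) ∧ G.Adj x v

theorem mem_CN [Fintype V] {x v : V} : v ∈ CN G f x ↔ (∃ i, f i = v) ∧ G.Adj x v := by
  simp [CN]

theorem CN_sub [Fintype V] {x : V} (hx : x ∈ H) : CN G f x ⊆ AS G f H := fun v hv => by
  rw [mem_CN] at hv
  exact mem_AS.2 ⟨hv.1, x, hx, hv.2.symm⟩

/-- Some element of `X \ Y` is followed, among `X ∪ Y`, by an element of `Y`. -/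
theorem exists_gap_end [DecidableEq V] (hC : LC G c f) {X Y : Finset V} (hX : ∀ a ∈ X, ∃ i, f i = a)
    (hY : ∀ a ∈ Y, ∃ i, f i = a) (hXY : (X \ Y).Nonempty) (hYn : Y.Nonempty) :
    ∃ i j : ℤ, i < j ∧ j < i + c ∧ f i ∈ X \ Y ∧ f j ∈ Y ∧ ∀ m, i < m → m < j → f m ∉ X ∪ Y := by
  have hex : ∃ d : ℕ, ∃ i, f i ∈ X \ Y ∧ f (i + d + 1) ∈ Y := by
    obtain ⟨a, ha⟩ := hXY
    obtain ⟨b, hb⟩ := hYn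
    obtain ⟨i, rfl⟩ := hX a (mem_sdiff.1 ha).1
    obtain ⟨j, rfl⟩ := hY b hb
    obtain ⟨j', h1, h2, h3⟩ := hC.win j (i + 1)
    exact ⟨(j' - i - 1).toNat, i, ha, by
      rw [show i + ((j' - i - 1).toNat : ℤ) + 1 = j' by omega, h3]; exact hb⟩
  classical
  obtain ⟨i, hi, hj⟩ := Nat.find_spec hex
  set d := Nat.find hex with hd
  have hmin : ∀ d' : ℕ, d' < d → ∀ i, f i ∈ X \ Y → f (i + d' + 1) ∉ Y := by
    intro d' h1 i h2 h3
    exact Nat.find_min hex h1 ⟨i, h2, h3⟩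
  have hc := hC.three
  refine ⟨i, i + d + 1, by omega, ?_, hi, hj, fun m h1 h2 hm => ?_⟩
  · by_contra hlt
    by_cases h : i + d + 1 = i + c
    · rw [h, hC.per] at hj; exact (mem_sdiff.1 hi).2 hj
    · refine hmin (d - c) (by omega) i hi ?_
      have : f (i + ((d - c : ℕ) : ℤ) + 1) = f (i + d + 1) := by
        rw [← hC.per]; congr 1; omega
      rwa [this]
  · by_cases hmY : f m ∈ Y
    · refine hmin (m - i - 1).toNat (by omega) i hi ?_
      rwa [show i + ((m - i - 1).toNat : ℤ) + 1 = m by omega]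
    · have hmX : f m ∈ X \ Y := by
        rcases mem_union.1 hm with h | h
        · exact mem_sdiff.2 ⟨h, hmY⟩
        · exact absurd h hmY
      refine hmin (i + d - m).toNat (by omega) m hmX ?_
      rwa [show m + ((i + d - m).toNat : ℤ) + 1 = i + d + 1 by omega]

theorem gap_two (hC : LC G c f) (hL : Lg G c) (hH : Cmp G f H) {A : Finset V}
    (hA : ∀ a ∈ A, Att G H a) {a : V} (ha : Att G H a) : Gap f A a 2 := by
  rintro i rfl m h1 h2 hm
  rw [show m = i + 1 by omega] at hm
  exact not_att_succ hC hL hH ha (hA _ hm)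

/-- The counting inequality for the end vertices of a path in `H` on `p + 1` vertices. -/
theorem lemma_I [Fintype V] [DecidableEq V] (hC : LC G c f) (hL : Lg G c) (hH : Cmp G f H)
    {x y : V} {L : List V} (hT : Tr G x L y) (hn : (x :: L).Nodup) (hs : ∀ z ∈ x :: L, z ∈ H)
    (hX : 2 ≤ (CN G f x).card) (hY : 2 ≤ (CN G f y).card) :
    2 * (CN G f x ∪ CN G f y).card + L.length * (CN G f x ∩ CN G f y).card +
      (if (CN G f x \ CN G f y).Nonempty then L.length else 0) +
      (if (CN G f y \ CN G f x).Nonempty then L.length else 0) ≤ c := by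
  have hxH := hs x (by simp)
  have hyH := hs y hT.mem_last
  set X := CN G f x with hXd
  set Y := CN G f y with hYd
  have hXm : ∀ a ∈ X, ∃ i, f i = a := fun a ha => (mem_CN.1 ha).1
  have hYm : ∀ a ∈ Y, ∃ i, f i = a := fun a ha => (mem_CN.1 ha).1
  have hXa : ∀ a ∈ X, G.Adj x a := fun a ha => (mem_CN.1 ha).2
  have hYa : ∀ a ∈ Y, G.Adj y a := fun a ha => (mem_CN.1 ha).2
  have hdXY : ∀ i j : ℤ, f i ∈ X → f j ∈ Y → i < j → j < i + c → (L.length : ℤ) + 2 ≤ j - i := by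
    intro i j hi hj h1 h2
    have := dist hC hL hH h1 h2 (Ear.of_tr (hXa _ hi).symm (hYa _ hj) hT hn hs)
    simp only [List.length_cons] at this; push_cast at this; omega
  have hdYX : ∀ i j : ℤ, f i ∈ Y → f j ∈ X → i < j → j < i + c → (L.length : ℤ) + 2 ≤ j - i := by
    intro i j hi hj h1 h2
    have := dist hC hL hH h1 h2 (Ear.of_tr (hXa _ hj).symm (hYa _ hi) hT hn hs).rev
    simp only [List.length_reverse, List.length_cons] at this; push_cast at this; omega
  have hatt : ∀ a ∈ X ∪ Y, Att G H a := by
    intro a ha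
    rcases mem_union.1 ha with h | h
    · exact ⟨x, hxH, (hXa a h).symm⟩
    · exact ⟨y, hyH, (hYa a h).symm⟩
  have hF : ∀ X' Y' : Finset V, (∀ a ∈ X', ∃ i, f i = a) → (∀ a ∈ Y', ∃ i, f i = a) →
      (∀ i j : ℤ, f i ∈ X' → f j ∈ Y' → i < j → j < i + c → (L.length : ℤ) + 2 ≤ j - i) →
      Y'.Nonempty → ∃ F : Finset V, F ⊆ X' \ Y' ∧ (∀ a ∈ F, Gap f (X' ∪ Y') a (L.length + 2)) ∧
        F.card * L.length = if (X' \ Y').Nonempty then L.length else 0 := by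
    intro X' Y' h1 h2 h3 h4
    by_cases h : (X' \ Y').Nonempty
    · obtain ⟨i, j, h5, h6, h7, h8, h9⟩ := exists_gap_end hC h1 h2 h h4
      refine ⟨{f i}, by simpa using h7, ?_, by simp [h]⟩
      intro a ha k hk m hm1 hm2 hm
      rw [mem_singleton] at ha
      rw [ha] at hk
      have h10 := h3 i j (mem_sdiff.1 h7).1 h8 h5 h6
      refine h9 (m - (k - i)) (by omega) (by push_cast at hm2; omega) ?_
      rwa [hC.eq_of_dvd (i := m - (k - i)) (j := m) (by
        have := hC.inj _ _ hk
        rw [show m - (k - i) - m = -(k - i) by ring]; exact this.neg_right)]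
    · exact ⟨∅, by simp, by simp, by simp [h]⟩
  obtain ⟨F1, hF1, hF1g, hF1c⟩ := hF X Y hXm hYm hdXY (card_pos.1 (by omega))
  obtain ⟨F2, hF2, hF2g, hF2c⟩ := hF Y X hYm hXm hdYX (card_pos.1 (by omega))
  rw [union_comm Y X] at hF2g
  let F := X ∩ Y ∪ F1 ∪ F2
  have hFsub : F ⊆ X ∪ Y := by
    refine union_subset (union_subset (fun a ha => ?_) (hF1.trans fun a ha => ?_))
      (hF2.trans fun a ha => ?_)
    · exact mem_union_left _ (mem_inter.1 ha).1
    · exact mem_union_left _ (mem_sdiff.1 ha).1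
    · exact mem_union_right _ (mem_sdiff.1 ha).1
  have hFc : F.card = (X ∩ Y).card + F1.card + F2.card := by
    have d1 : Disjoint (X ∩ Y) F1 := by
      rw [Finset.disjoint_left]
      intro a h1 h2
      exact (mem_sdiff.1 (hF1 h2)).2 (mem_inter.1 h1).2
    have d2 : Disjoint (X ∩ Y ∪ F1) F2 := by
      rw [Finset.disjoint_left]
      intro a h1 h2
      have h3 := mem_sdiff.1 (hF2 h2)
      rcases mem_union.1 h1 with h | h
      · exact h3.2 (mem_inter.1 h).1
      · exact h3.2 (mem_sdiff.1 (hF1 h)).1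
    rw [card_union_of_disjoint d2, card_union_of_disjoint d1]
  have hFg : ∀ a ∈ F, Gap f (X ∪ Y) a (L.length + 2) := by
    intro a ha
    rcases mem_union.1 ha with ha | ha
    · rcases mem_union.1 ha with ha | ha
      · rintro i rfl m h1 h2 hm
        obtain ⟨haX, haY⟩ := mem_inter.1 ha
        by_cases hmc : m < i + c
        · rcases mem_union.1 hm with h | h
          · have := hdYX i m haY h h1 hmc; push_cast at h2; omega
          · have := hdXY i m haX h h1 hmc; push_cast at h2; omega
        · obtain ⟨b, hb, hbn⟩ := exists_mem_ne (show 1 < X.card by omega) (f i)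
          obtain ⟨j, rfl⟩ := hXm b hb
          obtain ⟨j', h3, h4, h5⟩ := hC.win j (i + 1)
          have h6 : j' ≠ i + c := by
            rintro rfl; rw [hC.per] at h5; exact hbn h5.symm
          have := hdYX i j' haY (h5 ▸ hb) (by omega) (by omega)
          push_cast at h2; omega
      · exact hF1g a ha
    · exact hF2g a ha
  have hsum := gap_sum hC (X ∪ Y) (fun a ha => by
      rcases mem_union.1 ha with h | h
      · exact hXm a h
      · exact hYm a h) (fun a => 2 + if a ∈ F then L.length else 0) (by
    intro a ha
    by_cases h : a ∈ F
    · simpa [h, add_comm] using hFg a h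
    · simpa [h] using gap_two hC hL hH hatt (hatt a ha))
  rw [sum_add_distrib, ← sum_filter, filter_mem_eq_inter, inter_eq_right.2 hFsub, sum_const,
    sum_const, smul_eq_mul, smul_eq_mul, hFc] at hsum
  rw [← hF1c, ← hF2c]
  nlinarith

end

/-! ### The structure of a nontrivial component -/

/-- `x :: L` lists a longest path inside `H`, from `x` to `y`. -/
structure LP (G : SimpleGraph V) (H : Finset V) (x : V) (L : List V) (y : V) : Prop where
  tr : Tr G x L y
  nodup : (x :: L).Nodup
  sub : ∀ z ∈ x :: L, z ∈ H
  max : ∀ x' L' y', Tr G x' L' y' → (x' :: L').Nodup → (∀ z ∈ x' :: L', z ∈ H) →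
    L'.length ≤ L.length

section
variable {G : SimpleGraph V} {c : ℕ} {f : ℤ → V} {H : Finset V} {δ : ℕ}

theorem LP.exists (hne : H.Nonempty) : ∃ x L y, LP G H x L y := by
  classical
  have hb : ∀ x' L', (x' :: L').Nodup → (∀ z ∈ x' :: L', z ∈ H) → L'.length ≤ H.card := by
    intro x' L' hn hs
    have h1 := List.toFinset_card_of_nodup hn
    have h2 := card_le_card (show (x' :: L').toFinset ⊆ H from fun z hz => hs z (by simpa using hz))
    rw [h1, List.length_cons] at h2
    omega
  obtain ⟨h, hh⟩ := hne
  let S : Set ℕ := {l | ∃ x L y, Tr G x L y ∧ (x :: L).Nodup ∧ (∀ z ∈ x :: L, z ∈ H) ∧ L.length = l}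
  have hS : S.Nonempty := ⟨0, h, [], h, rfl, by simp, by simpa using hh, rfl⟩
  have hSb : BddAbove S := ⟨H.card, by rintro l ⟨x, L, y, h1, h2, h3, rfl⟩; exact hb x L h2 h3⟩
  obtain ⟨x, L, y, h1, h2, h3, h4⟩ := Nat.sSup_mem hS hSb
  exact ⟨x, L, y, h1, h2, h3, fun x' L' y' a b d => h4 ▸ le_csSup hSb ⟨x', L', y', a, b, d, rfl⟩⟩

theorem LP.rev {x y : V} {L : List V} (h : LP G H x L y) :
    ∃ M, LP G H y M x ∧ M.length = L.length ∧ ∀ z, z ∈ y :: M ↔ z ∈ x :: L := by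
  obtain ⟨M, h1, h2⟩ := h.tr.rev
  have hl : M.length = L.length := by simpa using (congrArg List.length h1).symm
  have hm : ∀ z, z ∈ y :: M ↔ z ∈ x :: L := fun z => by rw [← h1, List.mem_reverse]
  refine ⟨M, ⟨h2, ?_, fun z hz => h.sub z ((hm z).1 hz), fun a b d => hl ▸ h.max a b d⟩, hl, hm⟩
  rw [← h1, List.nodup_reverse]; exact h.nodup

theorem LP.nbr {x y z : V} {L : List V} (h : LP G H x L y) (hz : z ∈ H) (hxz : G.Adj x z) :
    z ∈ L := by
  by_contra hzL
  have := h.max z (x :: L) y ⟨hxz.symm, h.tr⟩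
    (List.nodup_cons.2 ⟨by simp [hzL, hxz.ne'], h.nodup⟩)
    (by
      intro w hw
      rcases List.mem_cons.1 hw with rfl | hw
      · exact hz
      · exact h.sub w hw)
  simp at this

theorem LP.len_lt {x y : V} {L : List V} (h : LP G H x L y) : L.length + 1 ≤ H.card := by
  classical
  have h1 := List.toFinset_card_of_nodup h.nodup
  have h2 := card_le_card (show (x :: L).toFinset ⊆ H from fun z hz => h.sub z (by simpa using hz))
  rw [h1, List.length_cons] at h2
  omega

open Classical in
/-- The neighbours of `x` inside `H`. -/
noncomputable def HN (G : SimpleGraph V) (H : Finset V) (x : V) : Finset V :=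
  H.filter fun z => G.Adj x z

theorem mem_HN {x z : V} : z ∈ HN G H x ↔ z ∈ H ∧ G.Adj x z := by simp [HN]

theorem deg_split [Fintype V] (hG : Ctx G δ) (hH : Cmp G f H) {x : V} (hx : x ∈ H) :
    δ ≤ (HN G H x).card + (CN G f x).card := by
  classical
  refine (hG.deg x (HN G H x ∪ CN G f x) fun w hw => ?_).trans (card_union_le _ _)
  rcases hH.nbr hx hw with h | h
  · exact mem_union_left _ (mem_HN.2 ⟨h, hw⟩)
  · exact mem_union_right _ (mem_CN.2 ⟨(mem_AS.1 h).1, hw⟩)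

theorem HN_card_lt {x : V} (hx : x ∈ H) : (HN G H x).card + 1 ≤ H.card := by
  classical
  rw [← card_erase_add_one hx]
  refine Nat.add_le_add_right (card_le_card fun z hz => ?_) 1
  rw [mem_HN] at hz
  exact mem_erase.2 ⟨hz.2.ne', hz.1⟩

theorem universal_of_HN {x : V} (hx : x ∈ H) (h : H.card ≤ (HN G H x).card + 1) :
    ∀ z ∈ H, z ≠ x → G.Adj x z := by
  classical
  intro z hz hzx
  have h1 : HN G H x ⊆ H.erase x := fun z hz => by
    rw [mem_HN] at hz
    exact mem_erase.2 ⟨hz.2.ne', hz.1⟩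
  have h2 := eq_of_subset_of_card_le h1 (by rw [card_erase_of_mem hx]; omega)
  have : z ∈ HN G H x := by rw [h2]; exact mem_erase.2 ⟨hzx, hz⟩
  exact (mem_HN.1 this).2

theorem LP.HN_le {x y : V} {L : List V} (h : LP G H x L y) : (HN G H x).card ≤ L.length := by
  classical
  refine (card_le_card (t := L.toFinset) fun z hz => ?_).trans (List.toFinset_card_le _)
  rw [mem_HN] at hz
  simpa using h.nbr hz.1 hz.2

theorem LP.all_of_HN {x y : V} {L : List V} (h : LP G H x L y)
    (hc : L.length ≤ (HN G H x).card) : ∀ z ∈ L, G.Adj x z := by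
  classical
  intro z hz
  have h2 := eq_of_subset_of_card_le (s := HN G H x) (t := L.toFinset)
    (fun z hz => by rw [mem_HN] at hz; simpa using h.nbr hz.1 hz.2)
    ((List.toFinset_card_le _).trans hc)
  have : z ∈ HN G H x := by rw [h2]; simpa using hz
  exact (mem_HN.1 this).2

theorem LP.HN_lt {x y : V} {L : List V} (h : LP G H x L y) (hL : 1 ≤ L.length)
    (hxy : ¬ G.Adj x y) : (HN G H x).card + 1 ≤ L.length ∧
    (L.length ≤ (HN G H x).card + 1 → ∀ z ∈ L, z ≠ y → G.Adj x z) := by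
  classical
  have hy : y ∈ L.toFinset := by
    rcases List.mem_cons.1 h.tr.mem_last with e | e
    · have := h.nodup; have h2 := h.tr
      subst e
      cases L with
      | nil => simp at hL
      | cons z L =>
        have := h2.2.mem_last
        simp_all
    · simpa using e
  have hsub : HN G H x ⊆ L.toFinset.erase y := fun z hz => by
    rw [mem_HN] at hz
    exact mem_erase.2 ⟨by rintro rfl; exact hxy hz.2, by simpa using h.nbr hz.1 hz.2⟩
  have hl := List.toFinset_card_of_nodup h.nodup.of_cons
  have h1 := card_le_card hsub
  rw [card_erase_of_mem hy, hl] at h1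
  refine ⟨by omega, fun h2 z hz hzy => ?_⟩
  have h3 := eq_of_subset_of_card_le hsub (by rw [card_erase_of_mem hy, hl]; omega)
  have : z ∈ HN G H x := by rw [h3]; exact mem_erase.2 ⟨hzy, by simpa using hz⟩
  exact (mem_HN.1 this).2

/-- A cycle inside `H` as long as a longest path is a Hamilton cycle of `H`. -/
theorem LP.ham {x y : V} {L : List V} (h : LP G H x L y) (hH : Cmp G f H) (h2 : 2 ≤ L.length)
    {u : V} {M : List V} (hM : Tr G u M u) (hMn : M.Nodup) (hMs : ∀ z ∈ M, z ∈ H)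
    (hMl : M.length = L.length + 1) :
    H.card = L.length + 1 ∧ ∃ h : ℤ → V, LC G (L.length + 1) h ∧ ∀ v, v ∈ H ↔ ∃ i, h i = v := by
  classical
  obtain ⟨e, he, hem, -⟩ := LC.of_list hM hMn (by omega)
  rw [hMl] at he
  have key : ∀ v ∈ H, v ∈ M := by
    have step : ∀ i, ∀ w ∈ H, G.Adj (e i) w → w ∈ M := by
      intro i w hw hiw
      by_contra hwM
      have hsub : ∀ z ∈ e i :: up e i L.length, z ∈ M := by
        intro z hz
        rw [List.mem_cons, mem_up] at hz
        rcases hz with rfl | ⟨j, _, _, rfl⟩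
        · exact (hem _).2 ⟨i, rfl⟩
        · exact (hem _).2 ⟨j, rfl⟩
      have := h.max w (e i :: up e i L.length) _ ⟨hiw.symm, he.tr_up i L.length⟩
        (by
          refine List.nodup_cons.2 ⟨fun h' => hwM (hsub _ h'), List.nodup_cons.2 ⟨fun h' => ?_,
            he.nodup_up _ _ (by omega)⟩⟩
          obtain ⟨j, h3, h4, h5⟩ := mem_up.1 h'
          have := he.eq_of_lt h5 (by push_cast; omega) (by push_cast; omega)
          omega)
        (by
          intro z hz
          rcases List.mem_cons.1 hz with rfl | hz
          · exact hw
          · exact hMs z (hsub z hz))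
      simp [up_length] at this
    have hw : ∀ (a b : V) (N : List V), Tr G a N b → a ∈ M → (∀ z ∈ N, z ∈ H) → b ∈ M := by
      intro a b N hN
      induction N generalizing a with
      | nil => rw [tr_nil] at hN; subst hN; exact fun h _ => h
      | cons z N ih =>
        intro ha hs
        obtain ⟨i, rfl⟩ := (hem a).1 ha
        exact ih z hN.2 (step i z (hs z (by simp)) hN.1) (fun w hw => hs w (by simp [hw]))
    intro v hv
    have h0 : e 0 ∈ M := (hem _).2 ⟨0, rfl⟩
    obtain ⟨N, hN1, _, hN3⟩ := hH.conn (e 0) (hMs _ h0) v hv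
    exact hw _ _ N hN1 h0 hN3
  refine ⟨?_, e, he, fun v => ⟨fun hv => (hem v).1 (key v hv), fun hv => hMs v ((hem v).2 hv)⟩⟩
  have : H = M.toFinset := by
    ext v; simp only [List.mem_toFinset]; exact ⟨key v, hMs v⟩
  rw [this, List.toFinset_card_of_nodup hMn, hMl]

theorem card_cycle_add [Fintype V] (hC : LC G c f) (hH : Cmp G f H) :
    c + H.card ≤ Fintype.card V := by
  classical
  have h1 : ((Ico (0 : ℤ) c).image f).card = c := by
    rw [card_image_of_injOn]
    · simp
    · intro i hi j hj e
      simp only [coe_Ico, Set.mem_Ico] at hi hj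
      exact hC.eq_of_lt e (by omega) (by omega)
  have h2 : Disjoint ((Ico (0 : ℤ) c).image f) H := by
    rw [Finset.disjoint_left]
    rintro x hx hx'
    obtain ⟨i, _, rfl⟩ := mem_image.1 hx
    exact hH.out i hx'
  have h3 := card_le_univ ((Ico (0 : ℤ) c).image f ∪ H)
  rw [card_union_of_disjoint h2, h1] at h3
  exact h3

/-- Two distinct attachment vertices joined by an ear of `l` vertices force a long cycle. -/
theorem two_ear (hC : LC G c f) (hL : Lg G c) (hH : Cmp G f H) {i j : ℤ} (hij : f i ≠ f j)
    {U : List V} (hU : Ear G H (f i) U (f j)) : 2 * U.length + 2 ≤ c := by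
  obtain ⟨j', h1, h2, h3⟩ := hC.win j i
  rw [← h3] at hij hU
  have hne : j' ≠ i := by rintro rfl; exact hij rfl
  have d1 := dist hC hL hH (by omega) h2 hU
  have d2 := dist hC hL hH (i := j') (j := i + c) (by omega) (by omega)
    (by rw [hC.per]; exact hU.rev)
  simp only [List.length_reverse] at d2
  omega

/-- Equality in the counting inequality when degrees are large compared with the path. -/
theorem lemma_I_eq [Fintype V] [DecidableEq V] (hC : LC G c f) (hL : Lg G c) (hH : Cmp G f H)
    {x y : V} {L : List V} (hT : Tr G x L y) (hn : (x :: L).Nodup) (hs : ∀ z ∈ x :: L, z ∈ H)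
    (hp : 2 ≤ L.length) (hδ : L.length + 2 ≤ δ) (hc : c + L.length ≤ 3 * δ + 1)
    (hX : δ ≤ (CN G f x).card + L.length) (hY : δ ≤ (CN G f y).card + L.length) :
    CN G f x = CN G f y ∧ (CN G f x).card + L.length = δ := by
  have hI := lemma_I hC hL hH hT hn hs (by omega) (by omega)
  set X := CN G f x
  set Y := CN G f y
  have e1 : X.card = (X ∩ Y).card + (X \ Y).card := (card_inter_add_card_sdiff X Y).symm
  have e2 : Y.card = (X ∩ Y).card + (Y \ X).card := by
    rw [inter_comm]; exact (card_inter_add_card_sdiff Y X).symm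
  have e3 := card_union_add_card_inter X Y
  set γ := (X ∩ Y).card
  obtain ⟨q, hq⟩ : ∃ q, L.length = q + 2 := ⟨L.length - 2, by omega⟩
  have e4 : (q + 2) * γ = q * γ + 2 * γ := by ring
  rw [hq] at hp hδ hc hX hY hI ⊢
  rw [e4] at hI
  by_cases hXY : (X \ Y).Nonempty
  · exfalso
    have a1 := card_pos.2 hXY
    rw [if_pos hXY] at hI
    by_cases hYX : (Y \ X).Nonempty
    · have a2 := card_pos.2 hYX
      rw [if_pos hYX] at hI
      have := Nat.zero_le (q * γ)
      omega
    · rw [if_neg hYX] at hI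
      rw [not_nonempty_iff_eq_empty] at hYX
      rw [hYX, card_empty] at e2
      have : 2 ≤ γ := by omega
      have := Nat.mul_le_mul_left q this
      omega
  · rw [if_neg hXY] at hI
    rw [not_nonempty_iff_eq_empty] at hXY
    rw [hXY, card_empty] at e1
    by_cases hYX : (Y \ X).Nonempty
    · exfalso
      have a2 := card_pos.2 hYX
      rw [if_pos hYX] at hI
      have : 2 ≤ γ := by omega
      have := Nat.mul_le_mul_left q this
      omega
    · rw [not_nonempty_iff_eq_empty] at hYX
      have hXeq : X = Y := Subset.antisymm (sdiff_eq_empty_iff_subset.1 hXY)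
        (sdiff_eq_empty_iff_subset.1 hYX)
      refine ⟨hXeq, ?_⟩
      rw [hYX, card_empty] at e2
      simp only [hYX, Finset.not_nonempty_empty, if_false] at hI
      by_contra hne
      have h3 : δ + 1 ≤ X.card + (q + 2) := by omega
      have h4 : 3 ≤ γ := by omega
      have := Nat.mul_le_mul_left q h4
      omega

end

/-! ### Segments joined by chords, and components with two vertices -/

section
variable {G : SimpleGraph V} {c : ℕ} {f : ℤ → V} {H : Finset V} {δ : ℕ}

theorem Cmp.sub_of_closed (hH : Cmp G f H) {S : Set V} {x : V} (hx : x ∈ H) (hxS : x ∈ S)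
    (hS : ∀ u ∈ S, ∀ w ∈ H, G.Adj u w → w ∈ S) : ∀ v ∈ H, v ∈ S := by
  have hw : ∀ (a b : V) (N : List V), Tr G a N b → a ∈ S → (∀ z ∈ N, z ∈ H) → b ∈ S := by
    intro a b N hN
    induction N generalizing a with
    | nil => rw [tr_nil] at hN; subst hN; exact fun h _ => h
    | cons z N ih =>
      intro ha hs
      exact ih z hN.2 (hS a ha z (hs z (by simp)) hN.1) (fun w hw => hs w (by simp [hw]))
  intro v hv
  obtain ⟨N, hN1, _, hN3⟩ := hH.conn x hx v hv
  exact hw _ _ N hN1 hxS hN3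

theorem exists_prev (hC : LC G c f) {Z : Finset V} {m : ℤ} (hm : f m ∈ Z) (i : ℤ) :
    ∃ i0 < i, f i0 ∈ Z ∧ ∀ n, i0 < n → n < i → f n ∉ Z := by
  obtain ⟨m', h1, h2, h3⟩ := hC.win m (i - c)
  obtain ⟨i0, ⟨h4, h5⟩, h6⟩ := Int.exists_greatest_of_bdd (P := fun n => n < i ∧ f n ∈ Z)
    ⟨i, fun z hz => hz.1.le⟩ ⟨m', by omega, h3 ▸ hm⟩
  exact ⟨i0, h4, h5, fun n hn hni hnZ => by have := h6 n ⟨hni, hnZ⟩; omega⟩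

theorem exists_next (hC : LC G c f) {Z : Finset V} {m : ℤ} (hm : f m ∈ Z) (i : ℤ) :
    ∃ i1, i < i1 ∧ f i1 ∈ Z ∧ ∀ n, i < n → n < i1 → f n ∉ Z := by
  obtain ⟨m', h1, h2, h3⟩ := hC.win m (i + 1)
  obtain ⟨i0, ⟨h4, h5⟩, h6⟩ := Int.exists_least_of_bdd (P := fun n => i < n ∧ f n ∈ Z)
    ⟨i, fun z hz => hz.1.le⟩ ⟨m', by omega, h3 ▸ hm⟩
  exact ⟨i0, h4, h5, fun n hn hni hnZ => by have := h6 n ⟨hn, hnZ⟩; omega⟩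

/-- Toughness yields a chord, or an outside detour, between two different segments of the
cycle cut at `Z`. -/
theorem TL2 [Fintype V] (ht : OneTough G) (hC : LC G c f) (hH : Cmp G f H) (hne : H.Nonempty)
    (Z : Finset V) (hZ : ∀ z ∈ Z, ∃ i, f i = z) (hAZ : AS G f H ⊆ Z) (hZ1 : Z.Nonempty)
    (hZs : ∀ i, f i ∈ Z → f (i + 1) ∉ Z) :
    ∃ i0 i i1 j0 j j1 : ℤ, i0 < i ∧ i < i1 ∧ i1 ≤ j0 ∧ j0 < j ∧ j < j1 ∧ j1 ≤ i0 + c ∧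
      f i0 ∈ Z ∧ f i1 ∈ Z ∧ f j0 ∈ Z ∧ f j1 ∈ Z ∧ (∀ n, i0 < n → n < i1 → f n ∉ Z) ∧
      (∀ n, j0 < n → n < j1 → f n ∉ Z) ∧
      ∃ Q, Con G (f i) Q (f j) ∧ Q.Nodup ∧ ∀ x ∈ Q, x ∉ H ∧ ∀ i, f i ≠ x := by
  obtain ⟨i, j, hij, hjc, hi, hj, ⟨m, hm1, hm2, hm3⟩, ⟨m', hm1', hm2', hm3'⟩, hQ⟩ :=
    TL ht hC hH hne Z hZ hAZ hZ1 hZs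
  obtain ⟨i0, a1, a2, a3⟩ := exists_prev hC hm3 i
  obtain ⟨i1, b1, b2, b3⟩ := exists_next hC hm3 i
  obtain ⟨j0, c1, c2, c3⟩ := exists_prev hC hm3 j
  obtain ⟨j1, d1, d2, d3⟩ := exists_next hC hm3 j
  have e1 : i1 ≤ m := by by_contra h; exact b3 m hm1 (by omega) hm3
  have e2 : i1 ≤ j0 := by by_contra h; exact c3 i1 (by omega) (by omega) b2
  have e3 : m' - c ≤ i0 := by
    by_contra h
    refine a3 (m' - c) (by omega) (by omega) ?_
    rw [← hC.per, sub_add_cancel]; exact hm3'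
  have e4 : j1 ≤ i0 + c := by
    by_contra h
    refine d3 (i0 + c) (by omega) (by omega) ?_
    rw [hC.per]; exact a2
  refine ⟨i0, i, i1, j0, j, j1, a1, b1, e2, c1, d1, e4, a2, b2, c2, d2, ?_, ?_, hQ⟩
  · intro n h1 h2 h3
    rcases lt_trichotomy n i with h | rfl | h
    · exact a3 n h1 h h3
    · exact hi h3
    · exact b3 n h h2 h3
  · intro n h1 h2 h3
    rcases lt_trichotomy n j with h | rfl | h
    · exact c3 n h1 h h3
    · exact hj h3
    · exact d3 n h h2 h3

/-- The two crossing inequalities for a chord (or detour `Q`) between two segments. -/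
theorem XL2 (hC : LC G c f) (hL : Lg G c) (hH : Cmp G f H) {A : Finset V} {k : ℕ}
    (hE : ∀ a ∈ A, ∀ b ∈ A, a ≠ b → ∃ U, Ear G H a U b ∧ k ≤ U.length)
    {i0 i i1 j0 j j1 : ℤ} (h1 : i0 < i) (h2 : i < i1) (h3 : i1 ≤ j0) (h4 : j0 < j) (h5 : j < j1)
    (h6 : j1 ≤ i0 + c) (a1 : f i0 ∈ A) (a2 : f i1 ∈ A) (a3 : f j0 ∈ A) (a4 : f j1 ∈ A)
    {Q : List V} (hQ : Con G (f i) Q (f j)) (hQn : Q.Nodup)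
    (hQo : ∀ x ∈ Q, x ∉ H ∧ ∀ i, f i ≠ x) :
    (k : ℤ) + Q.length + 2 ≤ (i - i0) + (j - j0) ∧
    (k : ℤ) + Q.length + 2 ≤ (i1 - i) + (j1 - j) := by
  constructor
  · obtain ⟨U, hU, hk⟩ := hE _ a1 _ a3 (fun e => by
      have := hC.eq_of_lt e (by omega) (by omega); omega)
    have := XL hC hL hH h1 (by omega) h4 (by omega) hU hQ hQn hQo
    omega
  · obtain ⟨U, hU, hk⟩ := hE _ a4 _ a2 (fun e => by
      have := hC.eq_of_lt e (by omega) (by omega); omega)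
    rw [show j1 = (j1 - c) + c by ring, hC.per] at hU
    have := XL' hC hL hH (a := j1 - c) (by omega) h2 (b := i1) (j := j) (by omega) (by omega)
      hU hQ hQn hQo
    omega

/-- If all vertices of `H` have the same neighbourhood `X` on the cycle and `#X + #H = δ + 1`, the
degree condition makes `H` a clique completely joined to its attachment vertices. -/
theorem ST_of [Fintype V] (hG : Ctx G δ) (hH : Cmp G f H) (X : Finset V)
    (hX : ∀ u ∈ H, CN G f u = X) (hc : X.card + H.card = δ + 1) (h2 : H.Nonempty) :
    (∀ u ∈ H, ∀ v ∈ H, v ≠ u → G.Adj u v) ∧ (∀ u ∈ H, ∀ a ∈ AS G f H, G.Adj u a) ∧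
      (AS G f H).card + H.card = δ + 1 := by
  have hAX : AS G f H = X := by
    ext a
    constructor
    · intro ha
      obtain ⟨h1, u, hu, hau⟩ := mem_AS.1 ha
      rw [← hX u hu]; exact mem_CN.2 ⟨h1, hau.symm⟩
    · intro ha
      obtain ⟨u, hu⟩ := h2
      rw [← hX u hu] at ha
      exact CN_sub hu ha
  refine ⟨fun u hu => ?_, fun u hu a ha => ?_, by rw [hAX]; exact hc⟩
  · refine universal_of_HN hu ?_
    have := deg_split hG hH hu
    rw [hX u hu] at this; omega
  · rw [hAX, ← hX u hu] at ha
    exact (mem_CN.1 ha).2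

theorem LC.cong (hC : LC G c f) {i j : ℤ} (h : f i = f j) (k : ℤ) : f (i + k) = f (j + k) :=
  hC.eq_of_dvd (by have := hC.inj i j h; rwa [add_sub_add_right_eq_sub])

/-- If `A` has gaps at least `k` and the cycle has no room for a longer gap, all gaps
equal `k`. -/
theorem gap_exact (hC : LC G c f) (A : Finset V) (hA : ∀ a ∈ A, ∃ i, f i = a) {k : ℕ}
    (hg : ∀ a ∈ A, Gap f A a k) (hc : c ≤ k * A.card) (i : ℤ) (hi : f i ∈ A) : f (i + k) ∈ A := by
  classical
  by_contra hn
  have := gap_sum hC A hA (fun a => k + if a = f i then 1 else 0) (fun a ha => by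
    by_cases hai : a = f i
    · subst hai
      simp only [if_true]
      intro i' hi' m h1 h2 hm
      push_cast at h2
      by_cases h4 : m = i' + k
      · subst h4
        rw [hC.cong hi'] at hm; exact hn hm
      · exact hg (f i) ha i' hi' m h1 (by omega) hm
    · simp only [if_neg hai]; exact hg a ha)
  rw [sum_add_distrib, sum_const, sum_ite_eq' A (f i) (fun _ => 1), if_pos hi, smul_eq_mul,
    mul_comm] at this
  omega

/-- A component with two vertices. -/
theorem ST_two [Fintype V] [DecidableEq V] (ht : OneTough G) (hG : Ctx G δ) (hC : LC G c f)
    (hL : Lg G c) (hH : Cmp G f H) {x y : V} (hxy : G.Adj x y) (hHe : H = {x, y}) :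
    (∀ u ∈ H, ∀ v ∈ H, v ≠ u → G.Adj u v) ∧ (∀ u ∈ H, ∀ a ∈ AS G f H, G.Adj u a) ∧
      (AS G f H).card + H.card = δ + 1 := by
  have hx : x ∈ H := by simp [hHe]
  have hy : y ∈ H := by simp [hHe]
  have hN : H.card = 2 := by rw [hHe, card_pair hxy.ne]
  have hcc := card_cycle_add hC hH
  have hV := hG.card
  have h3 := hG.three
  have hX : δ ≤ (CN G f x).card + 1 := by
    have := deg_split hG hH hx; have := HN_card_lt (G := G) hx; omega
  have hY : δ ≤ (CN G f y).card + 1 := by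
    have := deg_split hG hH hy; have := HN_card_lt (G := G) hy; omega
  have hI := lemma_I hC hL hH (L := [y]) (show Tr G x [y] y from ⟨hxy, rfl⟩) (by simp [hxy.ne])
    (by simp [hx, hy]) (by omega) (by omega)
  have hAu : AS G f H = CN G f x ∪ CN G f y := by
    ext a
    constructor
    · intro ha
      obtain ⟨h1, u, hu, hau⟩ := mem_AS.1 ha
      rw [hHe] at hu
      rcases mem_insert.1 hu with rfl | hu
      · exact mem_union_left _ (mem_CN.2 ⟨h1, hau.symm⟩)
      · rw [mem_singleton] at hu; subst hu
        exact mem_union_right _ (mem_CN.2 ⟨h1, hau.symm⟩)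
    · intro ha
      rcases mem_union.1 ha with h | h
      · exact CN_sub hx h
      · exact CN_sub hy h
  set X := CN G f x with hXd
  set Y := CN G f y with hYd
  have e1 : X.card = (X ∩ Y).card + (X \ Y).card := (card_inter_add_card_sdiff X Y).symm
  have e2 : Y.card = (X ∩ Y).card + (Y \ X).card := by
    rw [inter_comm]; exact (card_inter_add_card_sdiff Y X).symm
  have e3 := card_union_add_card_inter X Y
  simp only [List.length_singleton, one_mul] at hI
  have n1 : (X \ Y).Nonempty ∨ (X \ Y).card = 0 := by
    rcases (X \ Y).eq_empty_or_nonempty with h | h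
    · right; rw [h, card_empty]
    · exact Or.inl h
  have n2 : (Y \ X).Nonempty ∨ (Y \ X).card = 0 := by
    rcases (Y \ X).eq_empty_or_nonempty with h | h
    · right; rw [h, card_empty]
    · exact Or.inl h
  by_cases hT : X = Y ∧ X.card + 1 = δ
  · refine ST_of hG hH X (fun u hu => ?_) (by omega) ⟨x, hx⟩
    rw [hHe] at hu
    rcases mem_insert.1 hu with rfl | hu
    · rfl
    · rw [mem_singleton] at hu; subst hu; exact hT.1.symm
  exfalso
  have hsum : (X ∪ Y).card = δ ∧ c = 3 * δ ∧ (X \ Y).card ≤ 1 ∧ (Y \ X).card ≤ 1 := by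
    rcases n1 with n1 | n1
    · rw [if_pos n1] at hI
      have := card_pos.2 n1
      rcases n2 with n2 | n2
      · rw [if_pos n2] at hI
        have := card_pos.2 n2
        omega
      · rw [if_neg (by rw [← card_pos]; omega)] at hI
        omega
    · rw [if_neg (by rw [← card_pos]; omega)] at hI
      rcases n2 with n2 | n2
      · rw [if_pos n2] at hI
        have := card_pos.2 n2
        omega
      · have hXY : X = Y := Subset.antisymm
          (sdiff_eq_empty_iff_subset.1 (card_eq_zero.1 n1))
          (sdiff_eq_empty_iff_subset.1 (card_eq_zero.1 n2))
        have : X.card + 1 ≠ δ := fun h => hT ⟨hXY, h⟩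
        omega
  obtain ⟨hu, hc3, hα, hβ⟩ := hsum
  rw [← hAu] at hu
  have hE : ∀ a ∈ AS G f H, ∀ b ∈ AS G f H, a ≠ b → ∃ U, Ear G H a U b ∧ 2 ≤ U.length := by
    intro a ha b hb hab
    rw [hAu] at ha hb
    have cr : (a ∈ X ∧ b ∈ Y) ∨ (a ∈ Y ∧ b ∈ X) := by
      by_contra hcon
      by_cases haX : a ∈ X
      · have hbY : b ∉ Y := fun h => hcon (Or.inl ⟨haX, h⟩)
        have hbX : b ∈ X := (mem_union.1 hb).resolve_right hbY
        have haY : a ∉ Y := fun h => hcon (Or.inr ⟨h, hbX⟩)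
        exact hab (card_le_one.1 hα a (mem_sdiff.2 ⟨haX, haY⟩) b (mem_sdiff.2 ⟨hbX, hbY⟩))
      · have haY : a ∈ Y := (mem_union.1 ha).resolve_left haX
        have hbX : b ∉ X := fun h => hcon (Or.inr ⟨haY, h⟩)
        have hbY : b ∈ Y := (mem_union.1 hb).resolve_left hbX
        exact hab (card_le_one.1 hβ a (mem_sdiff.2 ⟨haY, haX⟩) b (mem_sdiff.2 ⟨hbY, hbX⟩))
    rcases cr with ⟨h1, h2⟩ | ⟨h1, h2⟩
    · exact hH.ear_of hx hy (mem_CN.1 h1).2.symm (mem_CN.1 h2).2.symm hxy.ne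
    · exact hH.ear_of hy hx (mem_CN.1 h1).2.symm (mem_CN.1 h2).2.symm hxy.ne'
  have hAC : ∀ a ∈ AS G f H, ∃ i, f i = a := fun a ha => (mem_AS.1 ha).1
  have hg : ∀ a ∈ AS G f H, Gap f (AS G f H) a 3 := by
    rintro a ha i rfl m h1 h2 hm
    obtain ⟨U, hU, hU2⟩ := hE _ ha _ hm (fun e => by
      have := hC.eq_of_lt e (by push_cast at *; omega) (by push_cast at *; omega); omega)
    have := dist hC hL hH h1 (by push_cast at *; omega) hU
    push_cast at *; omega
  have hg3 : ∀ i, f i ∈ AS G f H → f (i + 3) ∈ AS G f H := fun i hi => by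
    have := gap_exact hC _ hAC (k := 3) hg (by omega) i hi
    exact_mod_cast this
  obtain ⟨i0, i, i1, j0, j, j1, a1, a2, a3, a4, a5, a6, z1, z2, z3, z4, g1, g2, Q, q1, q2, q3⟩ :=
    TL2 ht hC hH ⟨x, hx⟩ (AS G f H) hAC (Subset.refl _) (card_pos.1 (by omega)) (fun i hi hi' =>
      hg _ hi i rfl (i + 1) (by omega) (by push_cast; omega) hi')
  have := XL2 hC hL hH hE a1 a2 a3 a4 a5 a6 z1 z2 z3 z4 q1 q2 q3
  have : i1 ≤ i0 + 3 := by
    by_contra h; exact g1 (i0 + 3) (by omega) (by omega) (hg3 _ z1)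
  have : j1 ≤ j0 + 3 := by
    by_contra h; exact g2 (j0 + 3) (by omega) (by omega) (hg3 _ z3)
  push_cast at *
  omega
end

/-! ### Components with more vertices -/

section
variable {G : SimpleGraph V} {c : ℕ} {f : ℤ → V} {H : Finset V} {δ : ℕ}

theorem LP.last_mem {x y : V} {L : List V} (h : LP G H x L y) (hp : 1 ≤ L.length) : y ∈ L := by
  have := h.tr.last (by omega)
  rw [← this]; exact List.getElem_mem _

theorem LP.ne {x y : V} {L : List V} (h : LP G H x L y) (hp : 1 ≤ L.length) : x ≠ y := by
  rintro rfl
  exact (List.nodup_cons.1 h.nodup).1 (h.last_mem hp)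

theorem LP.close {x y : V} {L : List V} (h : LP G H x L y) (hxy : G.Adj x y) :
    ∃ M, Tr G x M x ∧ M.Nodup ∧ (∀ z ∈ M, z ∈ H) ∧ M.length = L.length + 1 := by
  refine ⟨L ++ [x], Tr.con h.tr hxy.symm, ?_, ?_, by simp⟩
  · have := h.nodup
    rw [List.nodup_cons] at this
    simp only [List.nodup_append, List.nodup_singleton, this.2, true_and, List.mem_singleton]
    rintro a ha b rfl rfl
    exact this.1 ha
  · intro z hz
    refine h.sub z ?_
    rcases List.mem_append.1 hz with h1 | h1
    · exact List.mem_cons_of_mem _ h1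
    · rw [List.mem_singleton.1 h1]; exact List.mem_cons_self

/-- The large-degree case: the degree exceeds the order of a longest path of `H`. -/
theorem ST_large [Fintype V] [DecidableEq V] (hG : Ctx G δ) (hC : LC G c f)
    (hL : Lg G c) (hH : Cmp G f H) {x y : V} {L : List V} (hP : LP G H x L y)
    (hp : 2 ≤ L.length) (hδ : L.length + 2 ≤ δ) :
    (∀ u ∈ H, ∀ v ∈ H, v ≠ u → G.Adj u v) ∧ (∀ u ∈ H, ∀ a ∈ AS G f H, G.Adj u a) ∧
      (AS G f H).card + H.card = δ + 1 := by
  have hN := hP.len_lt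
  have hcc := card_cycle_add hC hH
  have hV := hG.card
  have hx : x ∈ H := hP.sub x (by simp)
  have hy : y ∈ H := hP.sub y hP.tr.mem_last
  obtain ⟨M, hM, hMl, -⟩ := hP.rev
  obtain ⟨-, e2⟩ := lemma_I_eq hC hL hH hP.tr hP.nodup hP.sub hp hδ (by omega)
    (by have := deg_split hG hH hx; have := hP.HN_le; omega)
    (by have := deg_split hG hH hy; have := hM.HN_le; omega)
  have hxy : G.Adj x y := hP.all_of_HN (by have := deg_split hG hH hx; omega) y
    (hP.last_mem (by omega))
  obtain ⟨M, m1, m2, m3, m4⟩ := hP.close hxy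
  obtain ⟨hcard, h, hh, hmem⟩ := hP.ham hH hp m1 m2 m3 m4
  have hB : ∀ u ∈ H, δ ≤ (CN G f u).card + L.length := fun u hu => by
    have := deg_split hG hH hu; have := HN_card_lt (G := G) hu; omega
  have hin : ∀ i, h i ∈ H := fun i => (hmem _).2 ⟨i, rfl⟩
  have step : ∀ i, CN G f (h (i + 1)) = CN G f (h i) ∧ (CN G f (h (i + 1))).card + L.length = δ := by
    intro i
    have ht := hh.tr_up (i + 1) L.length
    have he : h (i + 1 + (L.length : ℕ)) = h i := by
      rw [← hh.per i]; congr 1; push_cast; ring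
    rw [he] at ht
    have := lemma_I_eq (δ := δ) hC hL hH ht (by
        refine List.nodup_cons.2 ⟨fun h' => ?_, hh.nodup_up _ _ (by omega)⟩
        obtain ⟨j, h3, h4, h5⟩ := mem_up.1 h'
        have := hh.eq_of_lt h5 (by push_cast; omega) (by push_cast; omega)
        omega)
      (by
        intro z hz
        rcases List.mem_cons.1 hz with rfl | hz
        · exact hin _
        · obtain ⟨j, _, _, rfl⟩ := mem_up.1 hz; exact hin _)
      (by rw [up_length]; exact hp) (by rw [up_length]; exact hδ) (by rw [up_length]; omega)
      (by rw [up_length]; exact hB _ (hin _)) (by rw [up_length]; exact hB _ (hin _))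
    rwa [up_length] at this
  have hall : ∀ n : ℕ, CN G f (h n) = CN G f (h 0) := by
    intro n
    induction n with
    | zero => rfl
    | succ n ih => rw [← ih]; push_cast; exact (step n).1
  refine ST_of hG hH (CN G f (h 0)) (fun u hu => ?_) ?_ ⟨x, hx⟩
  · obtain ⟨i, rfl⟩ := (hmem u).1 hu
    obtain ⟨j, j1, j2, j3⟩ := hh.win i 0
    rw [← j3]
    have := hall j.toNat
    rwa [Int.toNat_of_nonneg j1] at this
  · have := step 0
    rw [← this.1]; omega

/-- No Hamilton cycle of `H` when `δ = #H - 1` and no ear uses all of `H`. -/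
theorem no_ham_full [Fintype V] (hG : Ctx G δ) (hH : Cmp G f H)
    {p : ℕ} (hδ : δ = p) (hN : H.card = p + 1) {h : ℤ → V}
    (hh : LC G (p + 1) h) (hmem : ∀ v, v ∈ H ↔ ∃ i, h i = v)
    (hear : ∀ a b : V, a ≠ b → (∃ i, f i = a) → (∃ i, f i = b) → ∀ U, Ear G H a U b →
      U.length ≤ p) :
    ∀ d : ℕ, ∀ (i : ℤ) (a b : V), d < p → a ≠ b → (∃ i, f i = a) → (∃ i, f i = b) →
      G.Adj a (h i) → G.Adj b (h (i + d + 1)) → False := by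
  classical
  have hin : ∀ i, h i ∈ H := fun i => (hmem _).2 ⟨i, rfl⟩
  intro d
  induction d using Nat.strong_induction_on with
  | _ d ih =>
  intro i a b hd hab ha hb hai hbj
  have hun : ∀ e : ℕ, e < d → ∀ w, (∃ i, f i = w) → ¬ G.Adj w (h (i + e + 1)) := by
    intro e he w hw hadj
    by_cases hwa : w = a
    · subst hwa
      refine ih (d - 1 - e) (by omega) (i + e + 1) w b (by omega) hab ha hb hadj ?_
      rwa [show i + e + 1 + ((d - 1 - e : ℕ) : ℤ) + 1 = i + d + 1 by omega]
    · exact ih e he i a w (by omega) (Ne.symm hwa) ha hw hai hadj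
  have hadj : G.Adj (h (i + 1)) (h (i + d + 2)) := by
    rcases Nat.eq_zero_or_pos d with rfl | hd0
    · have := hh.adj (i + 1)
      rwa [show i + 1 + 1 = i + ((0 : ℕ) : ℤ) + 2 by push_cast; ring] at this
    · refine universal_of_HN (hin _) ?_ _ (hin _) (fun e => ?_)
      · have h1 := deg_split hG hH (hin (i + 1))
        have h2 : CN G f (h (i + 1)) = ∅ := by
          rw [eq_empty_iff_forall_notMem]
          intro w hw
          have := hun 0 hd0 w (mem_CN.1 hw).1
          simp only [Nat.cast_zero, add_zero] at this
          exact this (mem_CN.1 hw).2.symm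
        rw [h2, card_empty] at h1; omega
      · have := hh.eq_of_lt e (by push_cast; omega) (by push_cast; omega)
        omega
  -- the Hamilton path from `h i` backwards to `h (i+d+2)`, then `h (i+1)` up to `h (i+d+1)`
  obtain ⟨n, hn⟩ : ∃ n, p = n + d + 1 := ⟨p - d - 1, by omega⟩
  have t1 : Con G (h (i + 1)) (h (i + d + 2) :: up h (i + d + 2) n) a := by
    refine con_cons.2 ⟨hadj, (hh.tr_up _ n).con ?_⟩
    have : h (i + d + 2 + n) = h i := by rw [← hh.per i]; congr 1; push_cast; omega
    rw [this]; exact hai.symm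
  have t2 : Con G (h (i + 1)) (up h (i + 1) d) b := (hh.tr_up _ d).con (by
    rw [show i + 1 + (d : ℤ) = i + d + 1 by ring]; exact hbj.symm)
  have t3 := t1.rev.append t2
  have := hear a b hab ha hb _ ⟨t3, ?_, ?_⟩
  · simp only [List.length_append, List.length_reverse, List.length_cons, up_length] at this
    omega
  · have u1 : h (i + d + 2) :: up h (i + d + 2) n = up h (i + d + 1) (n + 1) := by
      simp only [up, List.range_succ_eq_map, List.map_cons, List.map_map]
      congr 1
      · congr 1; push_cast; ring
      · refine List.map_congr_left fun j _ => ?_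
        simp only [Function.comp]; congr 1; push_cast; ring
    have u2 : h (i + 1) :: up h (i + 1) d = up h i (d + 1) := by
      simp only [up, List.range_succ_eq_map, List.map_cons, List.map_map]
      congr 1
      · congr 1; push_cast; ring
      · refine List.map_congr_left fun j _ => ?_
        simp only [Function.comp]; congr 1; push_cast; ring
    rw [u1, u2, List.nodup_append]
    refine ⟨List.nodup_reverse.2 (hh.nodup_up _ _ (by omega)), hh.nodup_up _ _ (by omega), ?_⟩
    rintro z hz w hw rfl
    rw [List.mem_reverse] at hz
    obtain ⟨j, h3, h4, h5⟩ := mem_up.1 hz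
    obtain ⟨j', h3', h4', h5'⟩ := mem_up.1 hw
    have := hh.eq_of_lt (h5.trans h5'.symm) (by push_cast at *; omega) (by push_cast at *; omega)
    push_cast at *; omega
  · intro z hz
    simp only [List.mem_append, List.mem_reverse, List.mem_cons] at hz
    rcases hz with (rfl | hz) | rfl | hz
    · exact hin _
    · obtain ⟨j, _, _, rfl⟩ := mem_up.1 hz; exact hin _
    · exact hin _
    · obtain ⟨j, _, _, rfl⟩ := mem_up.1 hz; exact hin _

/-- Ears of extremal length join antipodal vertices of the cycle. -/
theorem antipodal (hC : LC G c f) (hL : Lg G c) (hH : Cmp G f H) {p : ℕ} (hc : c ≤ 2 * p + 4)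
    {s : ℤ} {e : V} (he : ∃ i, f i = e) (hne : e ≠ f s) {U : List V} (hU : Ear G H (f s) U e)
    (hUl : p + 1 ≤ U.length) : e = f (s + p + 2) ∧ c = 2 * p + 4 := by
  obtain ⟨t, rfl⟩ := he
  obtain ⟨t', h1, h2, h3⟩ := hC.win t s
  rw [← h3] at hU hne ⊢
  have h4 : t' ≠ s := by rintro rfl; exact hne rfl
  have d1 := dist hC hL hH (by omega) h2 hU
  have d2 := dist hC hL hH (i := t') (j := s + c) (by omega) (by omega)
    (by rw [hC.per]; exact hU.rev)
  simp only [List.length_reverse] at d2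
  exact ⟨by congr 1; omega, by omega⟩

/-- No Hamilton cycle of `H` when `δ = #H`. -/
theorem no_ham_succ [Fintype V] (hG : Ctx G δ) (hC : LC G c f)
    (hL : Lg G c) (hH : Cmp G f H) {p : ℕ} (hδ : δ = p + 1) (hN : H.card = p + 1)
    {h : ℤ → V} (hh : LC G (p + 1) h) (hmem : ∀ v, v ∈ H ↔ ∃ i, h i = v) : False := by
  classical
  have hin : ∀ i, h i ∈ H := fun i => (hmem _).2 ⟨i, rfl⟩
  have hcc := card_cycle_add hC hH
  have hV := hG.card
  have hne : ∀ i, (CN G f (h i)).Nonempty := fun i => by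
    rw [← card_pos]
    have := deg_split hG hH (hin i); have := HN_card_lt (G := G) (hin i); omega
  have link : ∀ i s e, f s ∈ CN G f (h i) → e ∈ CN G f (h (i + 1)) → e ≠ f s →
      e = f (s + p + 2) ∧ c = 2 * p + 4 := by
    intro i s e h1 h2 h3
    have ht := hh.tr_up (i + 1) p
    have he : h (i + 1 + p) = h i := by
      rw [← hh.per i]; congr 1; push_cast; ring
    rw [he] at ht
    refine antipodal hC hL hH (p := p) (by omega) (mem_CN.1 h2).1 h3
      (Ear.of_tr (mem_CN.1 h2).2.symm (mem_CN.1 h1).2 ht ?_ ?_).rev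
      (by simp [up_length])
    · refine List.nodup_cons.2 ⟨fun h' => ?_, hh.nodup_up _ _ (by omega)⟩
      obtain ⟨j, h3, h4, h5⟩ := mem_up.1 h'
      have := hh.eq_of_lt h5 (by push_cast; omega) (by push_cast; omega)
      omega
    · intro z hz
      rcases List.mem_cons.1 hz with rfl | hz
      · exact hin _
      · obtain ⟨j, _, _, rfl⟩ := mem_up.1 hz; exact hin _
  obtain ⟨a0, ha0⟩ := hne 0
  obtain ⟨s, rfl⟩ := (mem_CN.1 ha0).1
  have key : ∀ n : ℕ, ∀ e ∈ CN G f (h (n + 1)), e = f s ∨ e = f (s + p + 2) := by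
    intro n
    induction n with
    | zero =>
      intro e he
      by_cases h1 : e = f s
      · exact Or.inl h1
      · exact Or.inr (link 0 s e ha0 (by simpa using he) h1).1
    | succ n ih =>
      intro e he
      push_cast at he
      obtain ⟨d, hd⟩ := hne (n + 1)
      rcases ih d hd with rfl | rfl
      · by_cases h1 : e = f s
        · exact Or.inl h1
        · exact Or.inr (link _ s e hd he h1).1
      · by_cases h1 : e = f (s + p + 2)
        · exact Or.inr h1
        · left
          obtain ⟨h2, h3⟩ := link _ _ e hd he h1
          rw [h2, ← hC.per s]; congr 1; push_cast [h3]; ring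
  have hA : AS G f H ⊆ {f s, f (s + p + 2)} := by
    intro a ha
    obtain ⟨h1, u, hu, hau⟩ := mem_AS.1 ha
    obtain ⟨i, rfl⟩ := (hmem u).1 hu
    obtain ⟨j, j1, j2, j3⟩ := hh.win i 1
    rw [← j3] at hau
    have := key (j - 1).toNat a (mem_CN.2 ⟨h1, by
      rw [show ((j - 1).toNat : ℤ) + 1 = j by omega]; exact hau.symm⟩)
    simpa using this
  have := three_le_AS hG hC hL hH ⟨_, hin 0⟩
  have := card_le_card hA
  have := card_le_two (a := f s) (b := f (s + p + 2))
  omega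
end

section
variable {G : SimpleGraph V} {c : ℕ} {f : ℤ → V} {H : Finset V} {δ : ℕ}

/-- A Hamilton cycle of `H` is impossible when the degree is small. -/
theorem no_ham [Fintype V] (hG : Ctx G δ) (hC : LC G c f)
    (hL : Lg G c) (hH : Cmp G f H) {p : ℕ} (hδ : δ = p ∨ δ = p + 1) (hN : H.card = p + 1)
    {h : ℤ → V} (hh : LC G (p + 1) h) (hmem : ∀ v, v ∈ H ↔ ∃ i, h i = v) : False := by
  have hcc := card_cycle_add hC hH
  have hV := hG.card
  have h3 := hG.three
  rcases hδ with hδ | hδ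
  · obtain ⟨a, ha, b, hb, hab, U, hU, hU2⟩ := exists_ear_two hG hC hL hH (by omega)
    have hear : ∀ a b : V, a ≠ b → (∃ i, f i = a) → (∃ i, f i = b) → ∀ U, Ear G H a U b →
        U.length ≤ p := by
      rintro a b hab ⟨i, rfl⟩ ⟨j, rfl⟩ U hU
      have := two_ear hC hL hH hab hU
      omega
    have main := no_ham_full hG hH hδ hN hh hmem hear
    -- the first and the last vertex of the ear are distinct vertices of `H`
    obtain ⟨u, v, hu, hv, hau, hbv, huv⟩ : ∃ u v, u ∈ H ∧ v ∈ H ∧ G.Adj a u ∧ G.Adj b v ∧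
        u ≠ v := by
      cases U with
      | nil => simp at hU2
      | cons u U =>
        obtain ⟨h1, h2⟩ := con_cons.1 hU.con
        obtain ⟨w, h4, h5⟩ := con_iff.1 h2
        refine ⟨u, w, hU.sub u (by simp), hU.sub w h4.mem_last, h1, h5.symm, ?_⟩
        rintro rfl
        have hl : 0 < U.length := by simp at hU2; omega
        have := h4.last hl
        exact (List.nodup_cons.1 hU.nodup).1 (this ▸ List.getElem_mem _)
    obtain ⟨i, rfl⟩ := (hmem u).1 hu
    obtain ⟨j, rfl⟩ := (hmem v).1 hv
    obtain ⟨j', j1, j2, j3⟩ := hh.win j i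
    rw [← j3] at hbv huv
    have : i ≠ j' := by rintro rfl; exact huv rfl
    refine main (j' - i - 1).toNat i a b (by push_cast at *; omega) hab (mem_AS.1 ha).1
      (mem_AS.1 hb).1 hau ?_
    rwa [show i + ((j' - i - 1).toNat : ℤ) + 1 = j' by omega]
  · exact no_ham_succ hG hC hL hH hδ hN hh hmem

/-- The ends of a longest path are attached to the same vertices, and adjacent to everything else
in `H`, in the small-degree case. -/
theorem small_aux [Fintype V] [DecidableEq V] (hG : Ctx G δ) (hC : LC G c f)
    (hL : Lg G c) (hH : Cmp G f H) {x y : V} {L : List V} (hP : LP G H x L y)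
    (hp : 2 ≤ L.length) (hδ : δ = L.length ∨ δ = L.length + 1) (hxy : ¬ G.Adj x y) :
    (∀ z ∈ L, z ≠ y → G.Adj x z) ∧ (δ = L.length + 1 → c ≤ 2 * L.length + 4 ∧
      CN G f x = CN G f y ∧ (CN G f x).card = 2 ∧ H.card = L.length + 1) := by
  have hcc := card_cycle_add hC hH
  have hV := hG.card
  have h3 := hG.three
  have hN := hP.len_lt
  have hx : x ∈ H := hP.sub x (by simp)
  have hy : y ∈ H := hP.sub y hP.tr.mem_last
  obtain ⟨M, hM, hMl, -⟩ := hP.rev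
  obtain ⟨d1, d2⟩ := hP.HN_lt (by omega) hxy
  obtain ⟨d3, -⟩ := hM.HN_lt (by omega) (fun h => hxy h.symm)
  have e1 := deg_split hG hH hx
  have e2 := deg_split hG hH hy
  rcases hδ with hδ | hδ
  · refine ⟨d2 ?_, fun h => by omega⟩
    have : (CN G f x).card ≤ 1 := by
      obtain ⟨b, hb⟩ := card_pos.1 (show 0 < (CN G f y).card by omega)
      have hall : ∀ a ∈ CN G f x, a = b := by
        intro a ha
        by_contra hab
        obtain ⟨⟨i, rfl⟩, ha⟩ := mem_CN.1 ha
        obtain ⟨⟨j, rfl⟩, hb⟩ := mem_CN.1 hb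
        have := two_ear hC hL hH hab (Ear.of_tr ha.symm hb hP.tr hP.nodup hP.sub)
        simp only [List.length_cons] at this
        omega
      exact card_le_one.2 fun a ha a' ha' => (hall a ha).trans (hall a' ha').symm
    omega
  · have hI := lemma_I hC hL hH hP.tr hP.nodup hP.sub (by omega) (by omega)
    set X := CN G f x
    set Y := CN G f y
    have e1 : X.card = (X ∩ Y).card + (X \ Y).card := (card_inter_add_card_sdiff X Y).symm
    have e2 : Y.card = (X ∩ Y).card + (Y \ X).card := by
      rw [inter_comm]; exact (card_inter_add_card_sdiff Y X).symm
    have e3 := card_union_add_card_inter X Y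
    set γ := (X ∩ Y).card
    have hγ : L.length * γ = 0 ∧ γ = 0 ∨ L.length * γ = L.length ∧ γ = 1 ∨
        2 * L.length ≤ L.length * γ ∧ γ = 2 ∨ 3 * L.length ≤ L.length * γ ∧ 3 ≤ γ := by
      rcases Nat.lt_or_ge γ 3 with h | h
      · interval_cases γ <;> omega
      · have := Nat.mul_le_mul_left L.length h
        omega
    have hres : X = Y ∧ X.card = 2 ∧ H.card = L.length + 1 := by
      by_cases hXY : (X \ Y).Nonempty
      · exfalso
        rw [if_pos hXY] at hI
        have := card_pos.2 hXY
        by_cases hYX : (Y \ X).Nonempty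
        · rw [if_pos hYX] at hI
          have := card_pos.2 hYX
          omega
        · rw [if_neg hYX] at hI
          rw [not_nonempty_iff_eq_empty] at hYX
          rw [hYX, card_empty] at e2
          omega
      · rw [if_neg hXY] at hI
        rw [not_nonempty_iff_eq_empty] at hXY
        by_cases hYX : (Y \ X).Nonempty
        · exfalso
          rw [if_pos hYX] at hI
          have := card_pos.2 hYX
          rw [hXY, card_empty] at e1
          omega
        · rw [if_neg hYX] at hI
          rw [not_nonempty_iff_eq_empty] at hYX
          refine ⟨Subset.antisymm (sdiff_eq_empty_iff_subset.1 hXY)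
            (sdiff_eq_empty_iff_subset.1 hYX), ?_⟩
          rw [hXY, card_empty] at e1
          rw [hYX, card_empty] at e2
          omega
    obtain ⟨r1, r2, r3⟩ := hres
    exact ⟨d2 (by omega), fun _ => ⟨by omega, r1, r2, r3⟩⟩

/-- The minimum degree is neither the length of a longest path of `H` nor one more, when that path
has at least two edges. -/
theorem ST_small [Fintype V] [DecidableEq V] (hG : Ctx G δ) (hC : LC G c f)
    (hL : Lg G c) (hH : Cmp G f H) {x y : V} {L : List V} (hP : LP G H x L y)
    (hp : 2 ≤ L.length) (hδ : δ = L.length ∨ δ = L.length + 1) : False := by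
  have h3 := hG.three
  have noM : ∀ u M, Tr G u M u → M.Nodup → (∀ z ∈ M, z ∈ H) → M.length = L.length + 1 → False := by
    intro u M m1 m2 m3 m4
    obtain ⟨h1, h, h2, h3⟩ := hP.ham hH hp m1 m2 m3 m4
    exact no_ham hG hC hL hH hδ h1 h2 h3
  have hxy : ¬ G.Adj x y := fun h => by
    obtain ⟨M, m1, m2, m3, m4⟩ := hP.close h
    exact noM _ M m1 m2 m3 m4
  obtain ⟨a1, a2⟩ := small_aux hG hC hL hH hP hp hδ hxy
  obtain ⟨M, hM, hMl, hMm⟩ := hP.rev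
  obtain ⟨b1, -⟩ := small_aux hG hC hL hH hM (by omega) (by omega) (fun h => hxy h.symm)
  have hPn := hP.nodup
  have hPt := hP.tr
  have hPs := hP.sub
  have hlast := hP.last_mem (by omega)
  match L, hp, hP, hPn, hPt, hPs, a1, a2, hδ, noM, hlast, hMl, hMm with
  | [p1, p2], hp, hP, hPn, hPt, hPs, a1, a2, hδ, noM, hlast, hMl, hMm =>
    have hδ3 : δ = 3 := by simp at hδ; omega
    obtain ⟨r1, r2, r3, r4⟩ := a2 (by simpa using hδ3)
    obtain rfl : p2 = y := hPt.2.2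
    simp only [List.length_cons, List.length_nil] at r1 r4
    have hHm : ∀ z ∈ H, z = x ∨ z = p1 ∨ z = p2 := by
      have : [x, p1, p2].toFinset = H := eq_of_subset_of_card_le (fun z hz => hPs z (by simpa using hz))
        (by rw [List.toFinset_card_of_nodup hPn, r4]; simp)
      intro z hz
      rw [← this] at hz; simpa using hz
    have hA3 := three_le_AS hG hC hL hH ⟨x, hPs x (by simp)⟩
    obtain ⟨x1, x2, hx12, hX⟩ := card_eq_two.1 r3
    obtain ⟨x3, hx3, hx3X⟩ := exists_mem_notMem_of_card_lt_card (s := CN G f x) (t := AS G f H)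
      (by omega)
    obtain ⟨⟨t, ht⟩, u, hu, hx3u⟩ := mem_AS.1 hx3
    have hx3m : G.Adj x3 p1 := by
      rcases hHm u hu with rfl | rfl | rfl
      · exact absurd (mem_CN.2 ⟨⟨t, ht⟩, hx3u.symm⟩) hx3X
      · exact hx3u
      · rw [r2] at hx3X; exact absurd (mem_CN.2 ⟨⟨t, ht⟩, hx3u.symm⟩) hx3X
    have m1 : x1 ∈ CN G f x := by rw [hX]; simp
    have m2 : x2 ∈ CN G f x := by rw [hX]; simp
    have n2 : x2 ∈ CN G f p2 := r2 ▸ m2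
    have ear12 := Ear.of_tr (mem_CN.1 m1).2.symm (mem_CN.1 n2).2 hPt hPn hPs
    have ear3 : ∀ w ∈ CN G f x, Ear G H x3 [p1, x] w := fun w hw =>
      Ear.of_tr hx3m (mem_CN.1 hw).2 (show Tr G p1 [x] x from ⟨hPt.1.symm, rfl⟩)
        (by simp [hPt.1.ne']) (by
          intro z hz; simp at hz
          rcases hz with rfl | rfl <;> exact hPs _ (by simp))
    obtain ⟨s, hs⟩ := (mem_CN.1 m1).1
    obtain ⟨w, hw⟩ := (mem_CN.1 m2).1
    obtain ⟨w', w1, w2, w3⟩ := hC.win w s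
    obtain ⟨t', t1, t2, t3⟩ := hC.win t s
    rw [hw] at w3
    rw [ht] at t3
    have ne1 : w' ≠ s := by rintro rfl; exact hx12 (hs.symm.trans w3)
    have ne2 : t' ≠ s := by rintro rfl; exact hx3X (by rw [← t3, hs]; exact m1)
    have ne3 : t' ≠ w' := by rintro rfl; exact hx3X (by rw [← t3, w3]; exact m2)
    have g1 := dist hC hL hH (i := s) (j := w') (by omega) w2 (by rw [hs, w3]; exact ear12)
    have g2 := dist hC hL hH (i := w') (j := s + c) (by omega) (by omega)
      (by rw [hC.per, hs, w3]; exact ear12.rev)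
    have g3 := dist hC hL hH (i := s) (j := t') (by omega) t2
      (by rw [hs, t3]; exact (ear3 _ m1).rev)
    have g4 := dist hC hL hH (i := t') (j := s + c) (by omega) (by omega)
      (by rw [hC.per, hs, t3]; exact ear3 _ m1)
    simp only [List.length_reverse, List.length_cons, List.length_nil] at g1 g2 g3 g4
    rcases lt_or_gt_of_ne ne3 with h | h
    · have := dist hC hL hH (i := t') (j := w') h (by omega) (by rw [t3, w3]; exact ear3 _ m2)
      simp only [List.length_cons, List.length_nil] at this
      push_cast at *; omega
    · have := dist hC hL hH (i := w') (j := t') h (by omega)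
        (by rw [t3, w3]; exact (ear3 _ m2).rev)
      simp only [List.length_reverse, List.length_cons, List.length_nil] at this
      push_cast at *; omega
  | p1 :: p2 :: p3 :: R, hp, hP, hPn, hPt, hPs, a1, a2, hδ, noM, hlast, hMl, hMm =>
    have hy2 : y ∈ p3 :: R := by
      have := hPt.2.2
      have h := this.last (L := p3 :: R) (by simp)
      rw [← h]; exact List.getElem_mem _
    have hp2 : p2 ≠ y := by
      rintro rfl
      simp only [List.nodup_cons] at hPn
      exact hPn.2.2.1 hy2
    have hp1 : p1 ≠ x := by
      rintro rfl; simp at hPn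
    have hyx : G.Adj y p1 := by
      have : p1 ∈ y :: M := (hMm p1).2 (by simp)
      rcases List.mem_cons.1 this with rfl | h
      · simp only [List.nodup_cons] at hPn
        exact absurd (List.mem_cons_of_mem _ hy2) hPn.2.1
      · exact b1 p1 h hp1
    have T : Tr G x ((p2 :: p3 :: R) ++ [p1, x]) x :=
      Tr.append (v := y) ⟨a1 p2 (by simp) hp2, hPt.2.2⟩ ⟨hyx, hPt.1.symm, rfl⟩
    have perm : ((p2 :: p3 :: R) ++ [p1, x]).Perm (x :: p1 :: p2 :: p3 :: R) := by
      refine List.perm_append_comm.trans ?_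
      exact List.Perm.swap _ _ _
    refine noM x _ T (perm.nodup_iff.2 hPn) (fun z hz => hPs z (perm.mem_iff.1 hz)) ?_
    rw [perm.length_eq]; simp

/-- Structure of a nontrivial component off a longest cycle: it is a clique, completely joined to
its attachment vertices. -/
theorem ST [Fintype V] [DecidableEq V] (hG : Ctx G δ) (hC : LC G c f)
    (hL : Lg G c) (hH : Cmp G f H) (h2 : 2 ≤ H.card) :
    (∀ u ∈ H, ∀ v ∈ H, v ≠ u → G.Adj u v) ∧ (∀ u ∈ H, ∀ a ∈ AS G f H, G.Adj u a) ∧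
      (AS G f H).card + H.card = δ + 1 := by
  obtain ⟨x, L, y, hP⟩ := LP.exists (G := G) (H := H) (card_pos.1 (by omega))
  have hK := lemma_K hG hC hL hH h2
  have hV := hG.card
  have hN := hP.len_lt
  have hx : x ∈ H := hP.sub x (by simp)
  rcases Nat.lt_or_ge L.length 2 with hl | hl
  · -- some vertex of `H` has a neighbour in `H`
    obtain ⟨z, hz, hzx⟩ := exists_mem_ne (by omega : 1 < H.card) x
    have hcl : ∀ v ∈ H, v ∈ ({v | v = x ∨ v = y} : Set V) := by
      refine hH.sub_of_closed hx (Or.inl rfl) ?_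
      obtain ⟨M, hM, hMl, hMm⟩ := hP.rev
      rintro u (rfl | rfl) w hw huw
      · have := hP.nbr hw huw
        match L, hl, hP.tr, this with
        | [l], _, ht, h => 
          obtain rfl : l = y := ht.2
          right; simpa using h
      · have := hM.nbr hw huw
        rw [← hMl] at hl
        match M, hl, hM.tr, this with
        | [l], _, ht, h => 
          obtain rfl : l = x := ht.2
          left; simpa using h
    have hzy : z = y := (hcl z hz).resolve_left hzx
    subst hzy
    have hxz : G.Adj x z := by
      match L, hl, hP.tr with
      | [], _, ht => exact absurd ht (Ne.symm hzx)
      | [l], _, ht => 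
        obtain rfl : l = z := ht.2
        exact ht.1
    refine ST_two hG.tough hG hC hL hH hxz ?_
    ext v
    rw [mem_insert, mem_singleton]
    refine ⟨fun hv => hcl v hv, ?_⟩
    rintro (rfl | rfl) <;> assumption
  · rcases Nat.lt_or_ge δ (L.length + 2) with h | h
    · exact (ST_small hG hC hL hH hP hl (by omega)).elim
    · exact ST_large hG hC hL hH hP hl h
end

/-! ### The extremal configuration and the budget for segment lengths -/

/-- The extremal configuration: a longest cycle `f` and a component `H` of its complement with at
least two vertices, of the largest order among all such pairs. -/
structure FS [Fintype V] (G : SimpleGraph V) (δ c : ℕ) (f : ℤ → V) (H : Finset V) : Prop where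
  hG : Ctx G δ
  hC : LC G c f
  hL : Lg G c
  hH : Cmp G f H
  k2 : 2 ≤ H.card
  mx : ∀ f' H', LC G c f' → Cmp G f' H' → H'.card ≤ H.card

/-- `(i, i')` delimits a segment of the cycle: consecutive positions of members of `A`. -/
structure Seg (f : ℤ → V) (A : Finset V) (i i' : ℤ) : Prop where
  lt : i < i'
  m0 : f i ∈ A
  m1 : f i' ∈ A
  none : ∀ n, i < n → n < i' → f n ∉ A

section
variable {G : SimpleGraph V} {c : ℕ} {f : ℤ → V} {H : Finset V} {δ : ℕ}

/-- In a clique any list of distinct vertices is a path. -/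
theorem tr_clique (hcl : ∀ u ∈ H, ∀ v ∈ H, v ≠ u → G.Adj u v) (x : V) (L : List V)
    (hn : (x :: L).Nodup) (hs : ∀ z ∈ x :: L, z ∈ H) : ∃ y, Tr G x L y := by
  induction L generalizing x with
  | nil => exact ⟨x, rfl⟩
  | cons z L ih =>
    obtain ⟨y, hy⟩ := ih z hn.of_cons (fun w hw => hs w (List.mem_cons_of_mem _ hw))
    refine ⟨y, hcl x (hs x (by simp)) z (hs z (by simp)) ?_, hy⟩
    rintro rfl
    simp at hn

variable [Fintype V]

theorem AS_mir : AS G (fun i => f (-i)) H = AS G f H := by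
  ext v
  rw [mem_AS, mem_AS]
  refine and_congr_left fun _ => ⟨?_, ?_⟩ <;> rintro ⟨i, rfl⟩ <;> exact ⟨-i, by simp⟩

theorem FS.mir (h : FS G δ c f H) : FS G δ c (fun i => f (-i)) H :=
  ⟨h.hG, h.hC.mir, h.hL, h.hH.mir, h.k2, h.mx⟩

theorem FS.st (h : FS G δ c f H) : (∀ u ∈ H, ∀ v ∈ H, v ≠ u → G.Adj u v) ∧
    (∀ u ∈ H, ∀ a ∈ AS G f H, G.Adj u a) ∧ (AS G f H).card + H.card = δ + 1 := by
  classical exact ST h.hG h.hC h.hL h.hH h.k2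

theorem FS.ear (h : FS G δ c f H) {a b : V} (ha : a ∈ AS G f H) (hb : b ∈ AS G f H) :
    ∃ U, Ear G H a U b ∧ U.length = H.card := by
  obtain ⟨h1, h2, -⟩ := h.st
  have hl : H.toList.length = H.card := length_toList _
  have hn : H.toList.Nodup := nodup_toList _
  have hm : ∀ z ∈ H.toList, z ∈ H := fun z hz => mem_toList.1 hz
  have k2 := h.k2
  cases hL : H.toList with
  | nil => rw [hL] at hl; simp at hl; omega
  | cons x L =>
    rw [hL] at hl hn hm
    obtain ⟨y, hy⟩ := tr_clique h1 x L hn hm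
    exact ⟨x :: L, Ear.of_tr (h2 x (hm x (by simp)) a ha).symm
      (h2 y (hm y hy.mem_last) b hb) hy hn hm, hl⟩

theorem FS.s3 (h : FS G δ c f H) : 3 ≤ (AS G f H).card :=
  three_le_AS h.hG h.hC h.hL h.hH (card_pos.1 (by have := h.k2; omega))

theorem FS.pos (h : FS G δ c f H) {a : V} (ha : a ∈ AS G f H) : ∃ i, f i = a := (mem_AS.1 ha).1

theorem FS.exA (h : FS G δ c f H) : ∃ i, f i ∈ AS G f H := by
  obtain ⟨a, ha⟩ := card_pos.1 (show 0 < (AS G f H).card by have := h.s3; omega)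
  obtain ⟨i, rfl⟩ := h.pos ha
  exact ⟨i, ha⟩

theorem FS.seg_next (h : FS G δ c f H) {i : ℤ} (hi : f i ∈ AS G f H) :
    ∃ i', Seg f (AS G f H) i i' := by
  obtain ⟨i', h1, h2, h3⟩ := exists_next h.hC hi i
  exact ⟨i', h1, hi, h2, h3⟩

theorem Seg.shift {A : Finset V} (hC : LC G c f) {i i' j : ℤ} (h : Seg f A i i')
    (e : f i = f j) : Seg f A j (j + (i' - i)) := by
  have hc : ∀ k, f (j + k) = f (i + k) := fun k => (hC.cong e k).symm
  refine ⟨by have := h.lt; omega, e ▸ h.m0, ?_, fun n h1 h2 => ?_⟩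
  · rw [hc, add_sub_cancel]; exact h.m1
  · rw [show n = j + (n - j) by ring, hc]
    exact h.none _ (by omega) (by omega)

theorem Seg.unique {A : Finset V} {i i' i'' : ℤ} (h : Seg f A i i') (h' : Seg f A i i'') :
    i' = i'' := by
  rcases lt_trichotomy i' i'' with h1 | h1 | h1
  · exact (h'.none _ h.lt h1 h.m1).elim
  · exact h1
  · exact (h.none _ h'.lt h1 h'.m1).elim

theorem Seg.mir {A : Finset V} {i i' : ℤ} (h : Seg f A i i') :
    Seg (fun n => f (-n)) A (-i') (-i) :=
  ⟨by have := h.lt; omega, by simpa using h.m1, by simpa using h.m0,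
    fun n h1 h2 => h.none _ (by omega) (by omega)⟩

theorem FS.seg_lt (h : FS G δ c f H) {i i' : ℤ} (hs : Seg f (AS G f H) i i') : i' < i + c := by
  by_contra hlt
  obtain ⟨b, hb, hbi⟩ := exists_mem_ne (by have := h.s3; omega : 1 < (AS G f H).card) (f i)
  obtain ⟨m, rfl⟩ := h.pos hb
  obtain ⟨n, h1, h2, h3⟩ := h.hC.win m i
  have : n ≠ i := by rintro rfl; exact hbi h3.symm
  exact hs.none n (by omega) (by omega) (h3 ▸ hb)

/-- An ear through all of `H` joins any two attachment vertices, so every segment has length at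
least `#H + 1`. -/
theorem FS.seg_len (h : FS G δ c f H) {i i' : ℤ} (hs : Seg f (AS G f H) i i') :
    (H.card : ℤ) + 1 ≤ i' - i := by
  obtain ⟨U, hU, hUl⟩ := h.ear hs.m0 hs.m1
  have := dist h.hC h.hL h.hH hs.lt (h.seg_lt hs) hU
  omega

/-- Two segments with different initial vertices, in a common window. -/
theorem FS.two_of (h : FS G δ c f H) {i i' j j' : ℤ} (hi : Seg f (AS G f H) i i')
    (hj : Seg f (AS G f H) j j') (hne : f i ≠ f j) :
    ∃ l, f l = f j ∧ Seg f (AS G f H) l (l + (j' - j)) ∧ i' ≤ l ∧ l + (j' - j) ≤ i + c := by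
  obtain ⟨l, h1, h2, h3⟩ := h.hC.win j i
  have hl := hj.shift h.hC h3.symm
  have : i ≠ l := by rintro rfl; exact hne h3
  refine ⟨l, h3, hl, ?_, ?_⟩
  · by_contra hlt
    exact hi.none l (by omega) (by omega) hl.m0
  · by_contra hlt
    refine hl.none (i + c) (by omega) (by omega) ?_
    rw [h.hC.per]; exact hi.m0

/-- The lengths of the segments exceed `#H + 1` by a small total; the outside vertices share this
budget. -/
theorem FS.budget (h : FS G δ c f H) : ∃ ex : V → ℕ,
    (∀ i i', Seg f (AS G f H) i i' → i' - i = H.card + 1 + ex (f i)) ∧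
    ∀ (B T : Finset V), B ⊆ AS G f H → (∀ x ∈ T, x ∉ H ∧ ∀ n, f n ≠ x) →
      ∑ a ∈ B, ex a + T.card + (H.card - 2) * (AS G f H).card ≤ 2 * (H.card - 2) + 3 := by
  classical
  have hp : ∀ a : V, ∃ e : ℕ, ∀ i i', f i = a → Seg f (AS G f H) i i' →
      i' - i = H.card + 1 + e := by
    intro a
    by_cases ha : ∃ i, f i = a ∧ a ∈ AS G f H
    · obtain ⟨i, rfl, ha⟩ := ha
      obtain ⟨i', hi'⟩ := h.seg_next ha
      have := h.seg_len hi'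
      refine ⟨(i' - i - (H.card + 1)).toNat, fun j j' e hj => ?_⟩
      have := (hj.shift h.hC e).unique hi'
      omega
    · refine ⟨0, fun i i' e hs => absurd ⟨i, e, e ▸ hs.m0⟩ ha⟩
  choose ex hex using hp
  refine ⟨ex, fun i i' hs => hex _ i i' rfl hs, fun B T hB hT => ?_⟩
  have hsum := gap_sum h.hC (AS G f H) (fun a ha => h.pos ha) (fun a => H.card + 1 + ex a) (by
    rintro a ha i rfl m h1 h2
    obtain ⟨i', hi'⟩ := h.seg_next ha
    have := hex _ i i' rfl hi'
    exact hi'.none m h1 (by push_cast at h2; omega))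
  rw [sum_add_distrib, sum_const, smul_eq_mul] at hsum
  have hBs := sum_le_sum_of_subset (f := ex) hB
  have hout : c + H.card + T.card ≤ Fintype.card V := by
    have h1 : ((Ico (0 : ℤ) c).image f).card = c := by
      rw [card_image_of_injOn]
      · simp
      · intro i hi j hj e
        simp only [coe_Ico, Set.mem_Ico] at hi hj
        exact h.hC.eq_of_lt e (by omega) (by omega)
    have h2 : Disjoint ((Ico (0 : ℤ) c).image f) (H ∪ T) := by
      rw [Finset.disjoint_left]
      rintro x hx hx'
      obtain ⟨i, _, rfl⟩ := mem_image.1 hx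
      rcases mem_union.1 hx' with h3 | h3
      · exact h.hH.out i h3
      · exact (hT _ h3).2 i rfl
    have h3 := card_le_univ ((Ico (0 : ℤ) c).image f ∪ (H ∪ T))
    rw [card_union_of_disjoint h2, h1, card_union_of_disjoint
      (Finset.disjoint_right.2 fun x hx => (hT x hx).1)] at h3
    omega
  have hV := h.hG.card
  have hd := h.st.2.2
  obtain ⟨κ, hκ⟩ : ∃ κ, H.card = κ + 2 := ⟨H.card - 2, by have := h.k2; omega⟩
  rw [hκ] at hsum hout hd ⊢
  have : (AS G f H).card * (κ + 2 + 1) = κ * (AS G f H).card + 3 * (AS G f H).card := by ring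
  simp only [Nat.add_sub_cancel]
  omega

/-- A path outside the cycle and `H` between the interiors of two segments is an edge: the
crossing inequalities bound the positions of its ends, and the budget leaves no outside vertex on
it and at most three vertices in `H`. -/
theorem FS.cross (h : FS G δ c f H) {i i' j j' n m : ℤ} (hi : Seg f (AS G f H) i i')
    (hj : Seg f (AS G f H) j j') (h1 : i' ≤ j) (h2 : j' ≤ i + c) (hn : i < n) (hn' : n < i')
    (hm : j < m) (hm' : m < j') {Q : List V} (hQ : Con G (f n) Q (f m)) (hQn : Q.Nodup)
    (hQo : ∀ x ∈ Q, x ∉ H ∧ ∀ i, f i ≠ x) :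
    Q = [] ∧ (H.card : ℤ) + 2 ≤ (n - i) + (m - j) ∧
      (H.card : ℤ) + 2 ≤ (i' - n) + (j' - m) ∧
      (H.card = 2 ∨ H.card = 3 ∧ (AS G f H).card = 3) := by
  classical
  have hX := XL2 h.hC h.hL h.hH (A := AS G f H) (k := H.card) (fun a ha b hb _ => by
    obtain ⟨U, hU, hl⟩ := h.ear ha hb; exact ⟨U, hU, hl.ge⟩) hn hn' h1 hm hm' h2 hi.m0 hi.m1
    hj.m0 hj.m1 hQ hQn hQo
  obtain ⟨ex, e1, e2⟩ := h.budget
  have hne : f i ≠ f j := fun e => by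
    have := h.hC.eq_of_lt e (by omega) (by have := hj.lt; omega)
    have := hi.lt; omega
  have hb := e2 {f i, f j} Q.toFinset (by
    intro x hx; simp only [mem_insert, mem_singleton] at hx
    rcases hx with rfl | rfl
    exacts [hi.m0, hj.m0]) (fun x hx => hQo x (by simpa using hx))
  rw [sum_pair hne, List.toFinset_card_of_nodup hQn] at hb
  have := e1 _ _ hi
  have := e1 _ _ hj
  have hs := h.s3
  have hk := h.k2
  obtain ⟨κ, hκ⟩ : ∃ κ, H.card = κ + 2 := ⟨H.card - 2, by omega⟩
  obtain ⟨σ, hσ⟩ : ∃ σ, (AS G f H).card = σ + 3 := ⟨(AS G f H).card - 3, by omega⟩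
  rw [hκ, hσ, Nat.add_sub_cancel] at hb
  have h5 : κ * (σ + 3) = κ * σ + 3 * κ := by ring
  have h6 : Q.length = 0 := by omega
  have h7 : κ ≤ 1 := by omega
  refine ⟨List.length_eq_zero_iff.1 h6, by omega, by omega, ?_⟩
  rcases (by omega : κ = 0 ∨ κ = 1) with rfl | rfl
  · left; omega
  · right; omega

/-- `R` stays in the interiors of the two segments and the outside vertices. -/
def InR (f : ℤ → V) (H : Finset V) (i i' j j' : ℤ) (R : List V) : Prop :=
  ∀ x ∈ R, (x ∉ H ∧ ∀ n, f n ≠ x) ∨ ∃ n, (i < n ∧ n < i' ∨ j < n ∧ n < j') ∧ f n = x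

theorem InR.disj (hC : LC G c f) {i i' j j' : ℤ} (h1 : i' ≤ j) (h2 : j' ≤ i + c)
    (hi : i < i') (hj : j < j') {R : List V} (hR : InR f H i i' j j' R) :
    ∀ n, i' ≤ n ∧ n ≤ j ∨ j' ≤ n ∧ n ≤ i + c → f n ∉ R := by
  intro n hn hnR
  rcases hR _ hnR with ⟨_, h⟩ | ⟨m, hm, e⟩
  · exact h n rfl
  · have := hC.eq_of_lt e (by omega) (by omega)
    omega

theorem InR.notH (hH : Cmp G f H) {i i' j j' : ℤ} {R : List V} (hR : InR f H i i' j j' R) :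
    ∀ x ∈ R, x ∉ H := by
  intro x hx
  rcases hR _ hx with ⟨h, _⟩ | ⟨m, hm, rfl⟩
  · exact h
  · exact hH.out m

/-- Replacing the interiors of two segments: a path `R` joining one of `f i'`, `f j` to one of
`f i`, `f j'` has bounded length. -/
theorem FS.NL (h : FS G δ c f H) {i i' j j' : ℤ} (hi : Seg f (AS G f H) i i')
    (hj : Seg f (AS G f H) j j') (h1 : i' ≤ j) (h2 : j' ≤ i + c) {R : List V} (hRn : R.Nodup)
    (hR : InR f H i i' j j' R) {e e' : V} (he : e = f i' ∨ e = f j) (he' : e' = f i ∨ e' = f j')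
    (hc : Con G e R e') : (R.length : ℤ) + H.card + 2 ≤ (i' - i) + (j' - j) := by
  have hil := hi.lt
  have hjl := hj.lt
  have hd := hR.disj h.hC h1 h2 hil hjl
  have hN := hR.notH h.hH
  have hEd : ∀ {a b : V} {U : List V}, Ear G H a U b → ∀ n,
      i' ≤ n ∧ n ≤ j ∨ j' ≤ n ∧ n ≤ i + c → f n ∉ U :=
    fun hU n _ hn => h.hH.out n (hU.sub _ hn)
  rcases he with rfl | rfl <;> rcases he' with rfl | rfl
  · obtain ⟨U, hU, hl⟩ := h.ear hj.m0 hj.m1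
    have := TA_par h.hC h.hL (a := i') (b := j) (a' := j') (b' := i + c) h1 hjl h2 (by omega)
      hU.con (W := R.reverse) (by rw [h.hC.per]; exact hc.rev) hU.nodup
      (List.nodup_reverse.2 hRn) (fun x hx hx' => hN x (List.mem_reverse.1 hx') (hU.sub x hx))
      (hEd hU) (fun n hn hx => hd n hn (List.mem_reverse.1 hx))
    simp only [List.length_reverse] at this
    omega
  · obtain ⟨U, hU, hl⟩ := h.ear hj.m0 hi.m0
    have := TA_rev h.hC h.hL (a := i') (b := j) (a' := j') (b' := i + c) h1 hjl h2 (by omega)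
      (U := U) (by rw [h.hC.per]; exact hU.con) (W := R.reverse) hc.rev hU.nodup
      (List.nodup_reverse.2 hRn) (fun x hx hx' => hN x (List.mem_reverse.1 hx') (hU.sub x hx))
      (hEd hU) (fun n hn hx => hd n hn (List.mem_reverse.1 hx))
    simp only [List.length_reverse] at this
    omega
  · obtain ⟨U, hU, hl⟩ := h.ear hj.m1 hi.m1
    have := TA_rev h.hC h.hL (a := i') (b := j) (a' := j') (b' := i + c) h1 hjl h2 (by omega)
      (U := R) (by rw [h.hC.per]; exact hc) hU.con hRn hU.nodup
      (fun x hx hx' => hN x hx (hU.sub x hx')) hd (hEd hU)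
    omega
  · obtain ⟨U, hU, hl⟩ := h.ear hi.m0 hi.m1
    have := TA_par h.hC h.hL (a := i') (b := j) (a' := j') (b' := i + c) h1 hjl h2 (by omega)
      (U := R) hc (W := U) (by rw [h.hC.per]; exact hU.con) hRn hU.nodup
      (fun x hx hx' => hN x hx (hU.sub x hx')) hd (hEd hU)
    omega

/-- The version of `FS.NL` for segments that share the vertex `f i`: the shared vertex is reached
through the interior `K` of a third segment. -/
theorem FS.N4 (h : FS G δ c f H) {i i' j m m' : ℤ} (hi : Seg f (AS G f H) i i')
    (hj : Seg f (AS G f H) j (i + c)) (hm : Seg f (AS G f H) m m') (h1 : i' ≤ m) (h2 : m' ≤ j)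
    {R : List V} (hRn : R.Nodup) (hR : InR f H i i' j (i + c) R) (hc : Con G (f j) R (f i'))
    {K : List V} (hKn : K.Nodup) (hK : ∀ x ∈ K, ∃ n, m < n ∧ n < m' ∧ f n = x)
    (hKc : Con G (f i) K (f m') ∨ Con G (f m) K (f i)) :
    (R.length : ℤ) + K.length + H.card + 3 ≤ (i' - i) + (i + c - j) + (m' - m) := by
  have hil := hi.lt
  have hjl := hj.lt
  have hml := hm.lt
  have hd := hR.disj h.hC (by omega) le_rfl hil hjl
  have hN := hR.notH h.hH
  have hKN : ∀ x ∈ K, x ∉ H := fun x hx => by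
    obtain ⟨n, _, _, rfl⟩ := hK x hx; exact h.hH.out n
  have hKd : ∀ n, i' ≤ n ∧ n ≤ m ∨ m' ≤ n ∧ n ≤ j → f n ∉ K := by
    intro n hn hx
    obtain ⟨q, q1, q2, q3⟩ := hK _ hx
    have := h.hC.eq_of_lt q3 (by omega) (by omega)
    omega
  have hoK : f i ∉ K := fun hx => by
    obtain ⟨q, q1, q2, q3⟩ := hK _ hx
    have := h.hC.eq_of_lt q3 (by omega) (by omega)
    omega
  have hoR : f i ∉ R := fun hx => hd (i + c) (by omega) (by rw [h.hC.per]; exact hx)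
  have hKR : ∀ x ∈ K, x ∉ R := fun x hx hx' => by
    obtain ⟨q, q1, q2, rfl⟩ := hK _ hx
    exact hd q (by omega) hx'
  have hon : ∀ n, i' ≤ n ∧ n ≤ m ∨ m' ≤ n ∧ n ≤ j → f n ≠ f i := fun n hn e => by
    have := h.hC.eq_of_lt e (by omega) (by omega)
    omega
  obtain ⟨W, hWc, hWn, hWm, hWl⟩ : ∃ W, Con G (f m) W (f m') ∧ W.Nodup ∧
      (∀ x ∈ W, x ∈ H ∨ x = f i ∨ x ∈ K) ∧ W.length = H.card + 1 + K.length := by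
    rcases hKc with hKc | hKc
    · obtain ⟨U, hU, hl⟩ := h.ear hm.m0 hi.m0
      refine ⟨U ++ f i :: K, hU.con.append hKc, ?_, ?_, by simp; omega⟩
      · rw [List.nodup_append]
        refine ⟨hU.nodup, List.nodup_cons.2 ⟨hoK, hKn⟩, ?_⟩
        rintro x hx y hy rfl
        rcases List.mem_cons.1 hy with rfl | hy
        · exact h.hH.out _ (hU.sub _ hx)
        · exact hKN _ hy (hU.sub _ hx)
      · intro x hx
        rcases List.mem_append.1 hx with hx | hx
        · exact Or.inl (hU.sub _ hx)
        · exact Or.inr (List.mem_cons.1 hx)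
    · obtain ⟨U, hU, hl⟩ := h.ear hi.m0 hm.m1
      refine ⟨K ++ f i :: U, hKc.append hU.con, ?_, ?_, by simp; omega⟩
      · rw [List.nodup_append]
        refine ⟨hKn, List.nodup_cons.2 ⟨fun hx => h.hH.out _ (hU.sub _ hx), hU.nodup⟩, ?_⟩
        rintro x hx y hy rfl
        rcases List.mem_cons.1 hy with rfl | hy
        · exact hoK hx
        · exact hKN _ hx (hU.sub _ hy)
      · intro x hx
        rcases List.mem_append.1 hx with hx | hx
        · exact Or.inr (Or.inr hx)
        · rcases List.mem_cons.1 hx with rfl | hx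
          · exact Or.inr (Or.inl rfl)
          · exact Or.inl (hU.sub _ hx)
  have := TA_par h.hC h.hL (a := i') (b := m) (a' := m') (b' := j) h1 hml h2 (by omega)
    hWc hc hWn hRn (fun x hx hx' => by
      rcases hWm x hx with h3 | rfl | h3
      · exact hN x hx' h3
      · exact hoR hx'
      · exact hKR x h3 hx') (fun n hn hx => by
      rcases hWm _ hx with h3 | h3 | h3
      · exact h.hH.out n h3
      · exact hon n hn h3
      · exact hKd n hn h3) (fun n hn hx => hd n (by omega) hx)
  omega
end

/-! ### Pairs of segments -/

/-- Two different segments of the cycle, placed in a common window of one period. -/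
structure Pr (f : ℤ → V) (c : ℕ) (A : Finset V) (i i' j j' : ℤ) : Prop where
  hi : Seg f A i i'
  hj : Seg f A j j'
  h1 : i' ≤ j
  h2 : j' ≤ i + c

section
variable {G : SimpleGraph V} {c : ℕ} {f : ℤ → V} {H : Finset V} {δ : ℕ}

theorem LC.step (hC : LC G c f) {p q : ℤ} (h : p + 1 = q ∨ q + 1 = p) : G.Adj (f p) (f q) := by
  rcases h with rfl | rfl
  · exact hC.adj p
  · exact (hC.adj q).symm

/-- A vertex off the cycle lies in a component of the complement of the cycle. -/
theorem Cmp.exists [Fintype V] (f : ℤ → V) {v : V} (hv : ∀ i, f i ≠ v) :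
    ∃ H, v ∈ H ∧ Cmp G f H := by
  classical
  let G' : SimpleGraph V :=
    { Adj := fun a b => G.Adj a b ∧ (∀ i, f i ≠ a) ∧ ∀ i, f i ≠ b
      symm := ⟨fun a b h => ⟨h.1.symm, h.2.2, h.2.1⟩⟩
      loopless := ⟨fun a h => G.loopless.irrefl a h.1⟩ }
  have hle : G' ≤ G := fun a b h => h.1
  have hw : ∀ (a b : V) (L : List V), Tr G' a L b → (∀ i, f i ≠ a) →
      (∀ z ∈ a :: L, G'.Reachable a z) ∧ ∀ i, f i ≠ b := by
    intro a b L hL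
    induction L generalizing a with
    | nil => intro ha; rw [tr_nil] at hL; subst hL; simpa using ha
    | cons x L ih =>
      intro ha
      obtain ⟨h1, h2⟩ := ih x hL.2 hL.1.2.2
      refine ⟨?_, h2⟩
      intro z hz
      rcases List.mem_cons.1 hz with rfl | hz
      · exact Reachable.refl _
      · exact hL.1.reachable.trans (h1 z hz)
  refine ⟨univ.filter fun z => G'.Reachable v z, by simp, ⟨?_, ?_, ?_⟩⟩
  · intro i hi
    obtain ⟨L, h1, h2⟩ := Tr.of_reachable (mem_filter.1 hi).2
    exact (hw _ _ _ h1 hv).2 i rfl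
  · intro x hx y hxy hy
    have hx := (mem_filter.1 hx).2
    obtain ⟨L, h1, h2⟩ := Tr.of_reachable hx
    refine mem_filter.2 ⟨mem_univ _, hx.trans (Adj.reachable ?_)⟩
    exact ⟨hxy, (hw _ _ _ h1 hv).2, hy⟩
  · intro x hx y hy
    have hx := (mem_filter.1 hx).2
    have hy := (mem_filter.1 hy).2
    obtain ⟨L, h1, h2⟩ := Tr.of_reachable hx
    obtain ⟨M, h3, h4⟩ := Tr.of_reachable (hx.symm.trans hy)
    refine ⟨M, h3.mono hle, h4, fun z hz => ?_⟩
    exact mem_filter.2 ⟨mem_univ _, hx.trans ((hw _ _ _ h3 (hw _ _ _ h1 hv).2).1 z (by simp [hz]))⟩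

variable [Fintype V]

theorem Seg.add {A : Finset V} (hC : LC G c f) {i i' : ℤ} (h : Seg f A i i') :
    Seg f A (i + c) (i' + c) := by
  have := h.shift hC (hC.per i).symm
  rwa [show i + c + (i' - i) = i' + c by ring] at this

theorem Pr.swap {A : Finset V} (hC : LC G c f) {i i' j j' : ℤ} (h : Pr f c A i i' j j') :
    Pr f c A j j' (i + c) (i' + c) :=
  ⟨h.hj, h.hi.add hC, h.h2, by have := h.h1; omega⟩

theorem Pr.mir {A : Finset V} {i i' j j' : ℤ} (h : Pr f c A i i' j j') :
    Pr (fun i => f (-i)) c A (-j') (-j) (-i') (-i) :=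
  ⟨h.hj.mir, h.hi.mir, by have := h.h1; omega, by have := h.h2; omega⟩

theorem Pr.ne (hC : LC G c f) {A : Finset V} {i i' j j' : ℤ} (h : Pr f c A i i' j j') :
    f i ≠ f j := fun e => by
  have := hC.eq_of_lt e (by have := h.h1; have := h.hi.lt; omega)
    (by have := h.hj.lt; have := h.h2; omega)
  have := h.hi.lt
  have := h.h1
  omega

/-- `FS.NL` for a path given by positions on the cycle. -/
theorem FS.NLp (h : FS G δ c f H) {i i' j j' : ℤ} (hp : Pr f c (AS G f H) i i' j j')
    {l : List ℤ} (hl : l.Nodup) (hm : ∀ n ∈ l, i < n ∧ n < i' ∨ j < n ∧ n < j') {e e' : V}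
    (he : e = f i' ∨ e = f j) (he' : e' = f i ∨ e' = f j') (hc : Con G e (l.map f) e') :
    (l.length : ℤ) + H.card + 2 ≤ (i' - i) + (j' - j) := by
  have h1 := hp.h1
  have h2 := hp.h2
  have h3 := hp.hi.lt
  have h4 := hp.hj.lt
  have := h.NL hp.hi hp.hj hp.h1 hp.h2 (R := l.map f) ?_ ?_ he he' hc
  · simpa using this
  · refine hl.map_on ?_
    intro x hx y hy e
    have := hm x hx
    have := hm y hy
    exact h.hC.eq_of_lt e (by omega) (by omega)
  · intro x hx
    obtain ⟨n, hn, rfl⟩ := List.mem_map.1 hx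
    exact Or.inr ⟨n, hm n hn, rfl⟩

/-- The segment containing a position off `A`. -/
theorem FS.seg_at (h : FS G δ c f H) {n : ℤ} (hn : f n ∉ AS G f H) :
    ∃ i i', Seg f (AS G f H) i i' ∧ i < n ∧ n < i' := by
  obtain ⟨m, hm⟩ := h.exA
  obtain ⟨i, h1, h2, h3⟩ := exists_prev h.hC hm n
  obtain ⟨i', h4, h5, h6⟩ := exists_next h.hC hm n
  refine ⟨i, i', ⟨by omega, h2, h5, fun q hq hq' hqA => ?_⟩, h1, h4⟩
  rcases lt_trichotomy q n with h7 | rfl | h7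
  · exact h3 q hq h7 hqA
  · exact hn hqA
  · exact h6 q h7 hq' hqA

/-- Where the neighbours of a cycle vertex off `A` may lie. -/
theorem FS.nbr (h : FS G δ c f H) {i i' n : ℤ} (hs : Seg f (AS G f H) i i') (h1 : i < n)
    (h2 : n < i') {w : V} (hw : G.Adj (f n) w) : w ∈ AS G f H ∨
      (∃ m, i < m ∧ m < i' ∧ m ≠ n ∧ f m = w) ∨
      (∃ j j' m, Pr f c (AS G f H) i i' j j' ∧ j < m ∧ m < j' ∧ f m = w) ∨
      (w ∉ H ∧ ∀ m, f m ≠ w) := by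
  by_cases hwA : w ∈ AS G f H
  · exact Or.inl hwA
  by_cases hwC : ∃ m, f m = w
  · obtain ⟨m, rfl⟩ := hwC
    obtain ⟨j, j', hj, h3, h4⟩ := h.seg_at hwA
    by_cases e : f i = f j
    · right; left
      have hj2 := hj.shift h.hC e.symm
      have := hj2.unique hs
      refine ⟨i + (m - j), by omega, by omega, ?_, ?_⟩
      · intro e2
        have := h.hC.cong e (m - j)
        rw [e2, show j + (m - j) = m by ring] at this
        rw [this] at hw
        exact G.loopless.irrefl _ hw
      · have := h.hC.cong e (m - j)
        rwa [show j + (m - j) = m by ring] at this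
    · right; right; left
      obtain ⟨l, h5, h6, h7, h8⟩ := h.two_of hs hj e
      refine ⟨l, l + (j' - j), l + (m - j), ⟨hs, h6, h7, h8⟩, by omega, by omega, ?_⟩
      have := h.hC.cong h5 (m - j)
      rwa [show j + (m - j) = m by ring] at this
  · right; right; right
    push Not at hwC
    refine ⟨fun hwH => ?_, hwC⟩
    exact hs.none n h1 h2 (mem_AS.2 ⟨⟨n, rfl⟩, w, hwH, hw⟩)

/-- Toughness in terms of segments: some edge or detour outside the cycle and `H` either passes
over a vertex of `Z` within one segment or joins the interiors of two segments. -/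
theorem FS.TL (h : FS G δ c f H) {Z : Finset V} (hAZ : AS G f H ⊆ Z)
    (hZ : ∀ z ∈ Z, ∃ i, f i = z) (hZs : ∀ i, f i ∈ Z → f (i + 1) ∉ Z) :
    ∃ Q, Q.Nodup ∧ (∀ x ∈ Q, x ∉ H ∧ ∀ i, f i ≠ x) ∧
    ((∃ p p' i n j, Seg f (AS G f H) p p' ∧ p < i ∧ i < n ∧ n < j ∧ j < p' ∧ f n ∈ Z ∧ f i ∉ Z ∧
        f j ∉ Z ∧ Con G (f i) Q (f j)) ∨
      ∃ p p' q q' i j, Pr f c (AS G f H) p p' q q' ∧ p < i ∧ i < p' ∧ q < j ∧ j < q' ∧ f i ∉ Z ∧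
        f j ∉ Z ∧ Con G (f i) Q (f j)) := by
  have hne : H.Nonempty := card_pos.1 (by have := h.k2; omega)
  obtain ⟨m, hm⟩ := h.exA
  obtain ⟨i0, i, i1, j0, j, j1, a1, a2, a3, a4, a5, a6, b1, b2, b3, b4, n1, n2, Q, hQ, hQn, hQo⟩ :=
    TL2 h.hG.tough h.hC h.hH hne Z hZ hAZ ⟨_, hAZ hm⟩ hZs
  have hiZ := n1 i a1 a2
  have hjZ := n2 j a4 a5
  obtain ⟨p, p', hp, p1, p2⟩ := h.seg_at (fun hA => hiZ (hAZ hA))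
  obtain ⟨q, q', hq, q1, q2⟩ := h.seg_at (fun hA => hjZ (hAZ hA))
  have hpi : p ≤ i0 := by
    by_contra hlt
    exact n1 p (by omega) (by omega) (hAZ hp.m0)
  have hpi' : i1 ≤ p' := by
    by_contra hlt
    exact n1 p' (by omega) (by omega) (hAZ hp.m1)
  have hqj : q ≤ j0 := by
    by_contra hlt
    exact n2 q (by omega) (by omega) (hAZ hq.m0)
  have hqj' : j1 ≤ q' := by
    by_contra hlt
    exact n2 q' (by omega) (by omega) (hAZ hq.m1)
  have hpc := h.seg_lt hp
  have hqc := h.seg_lt hq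
  have hpq : p ≤ q := by
    by_contra hlt
    exact hq.none p (by omega) (by omega) hp.m0
  rcases hpq.eq_or_lt with rfl | hpq
  · exact ⟨Q, hQn, hQo, Or.inl ⟨p, p', i, i1, j, hp, p1, a2, by omega, by
      have := hp.unique hq; omega, b2, hiZ, hjZ, hQ⟩⟩
  have hpq' : p' ≤ q := by
    by_contra hlt
    exact hp.none q (by omega) (by omega) hq.m0
  by_cases hqp : q' ≤ p + c
  · exact ⟨Q, hQn, hQo, Or.inr ⟨p, p', q, q', i, j, ⟨hp, hq, hpq', hqp⟩, p1, p2, q1, q2, hiZ, hjZ,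
      hQ⟩⟩
  · have e : q = p + c := by
      rcases lt_trichotomy q (p + c) with h5 | h5 | h5
      · refine absurd ?_ (hq.none (p + c) h5 (by omega))
        rw [h.hC.per]; exact hp.m0
      · exact h5
      · exact absurd hq.m0 ((hp.add h.hC).none q h5 (by omega))
    subst e
    have e2 : f (j - c) = f j := by rw [← h.hC.per (j - c), sub_add_cancel]
    refine ⟨Q.reverse, List.nodup_reverse.2 hQn, fun x hx => hQo x (List.mem_reverse.1 hx),
      Or.inl ⟨p, p', j - c, i0, i, hp, by omega, by omega, by omega, by omega, b1, ?_, hiZ, ?_⟩⟩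
    · rw [e2]; exact hjZ
    · rw [e2]; exact hQ.rev
end

/-! ### Segments of minimal length -/

section
variable {G : SimpleGraph V} {c : ℕ} {f : ℤ → V} {H : Finset V} {δ : ℕ}
variable [Fintype V]

/-- Exchanging `H` with the interior of a segment of minimal length gives another extremal
configuration, so the interior of such a segment has the same structure as `H`. -/
theorem FS.RL (h : FS G δ c f H) {i i' : ℤ} (hs : Seg f (AS G f H) i i')
    (hr : i' = i + H.card + 1) : ∃ A' : Finset V, A'.card = (AS G f H).card ∧
      (∀ n, i < n → n < i' → ∀ w, G.Adj (f n) w → w ∈ A' ∨ ∃ m, i < m ∧ m < i' ∧ f m = w) ∧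
      (∀ n, i < n → n < i' → ∀ a ∈ A', G.Adj (f n) a) ∧
      ∀ a ∈ A', ∃ n, i' ≤ n ∧ n ≤ i + c ∧ f n = a := by
  classical
  obtain ⟨U, hU, hUl⟩ := h.ear hs.m0 hs.m1
  have hlt := h.seg_lt hs
  have hk := h.k2
  obtain ⟨N, hN⟩ : ∃ N : ℕ, (c : ℤ) = H.card + 1 + N := ⟨c - H.card - 1, by omega⟩
  -- the cycle with the interior of the segment replaced by an ear through all of `H`
  have hT : Tr G (f i) ((U ++ [f i']) ++ up f i' N) (f i) := by
    have := Tr.append hU.con (h.hC.tr_up i' N)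
    rwa [show i' + N = i + c by omega, h.hC.per] at this
  have hmem : ∀ v, v ∈ (U ++ [f i']) ++ up f i' N ↔ v ∈ U ∨ ∃ n, i' ≤ n ∧ n ≤ i + c ∧ f n = v := by
    intro v
    rw [List.mem_append, List.mem_append, List.mem_singleton, mem_up, or_assoc]
    refine or_congr_right ⟨?_, ?_⟩
    · rintro (rfl | ⟨n, h1, h2, h3⟩)
      · exact ⟨i', le_rfl, by omega, rfl⟩
      · exact ⟨n, by omega, by omega, h3⟩
    · rintro ⟨n, h1, h2, h3⟩
      rcases h1.eq_or_lt with rfl | h1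
      · exact Or.inl h3.symm
      · exact Or.inr ⟨n, h1, by omega, h3⟩
  have hnd : ((U ++ [f i']) ++ up f i' N).Nodup := by
    rw [List.append_assoc, List.nodup_append]
    refine ⟨hU.nodup, ?_, ?_⟩
    · rw [List.singleton_append, List.nodup_cons]
      refine ⟨fun hx => ?_, h.hC.nodup_up _ _ (by omega)⟩
      obtain ⟨n, h1, h2, h3⟩ := mem_up.1 hx
      have := h.hC.eq_of_lt h3 (by omega) (by omega)
      omega
    · rintro x hx y hy rfl
      have := (hmem x).1 (by rw [List.append_assoc]; exact List.mem_append_right _ hy)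
      rw [List.singleton_append] at hy
      rcases List.mem_cons.1 hy with rfl | hy
      · exact h.hH.out _ (hU.sub _ hx)
      · obtain ⟨n, h1, h2, rfl⟩ := mem_up.1 hy
        exact h.hH.out _ (hU.sub _ hx)
  have hlen : ((U ++ [f i']) ++ up f i' N).length = c := by
    simp only [List.length_append, List.length_singleton, up_length]
    omega
  have h3c := h.hC.three
  obtain ⟨f', hf', hmf, -⟩ := LC.of_list hT hnd (by omega)
  rw [hlen] at hf'
  have hoff : ∀ n, i < n → n < i' → ∀ m, f' m ≠ f n := by
    intro n h1 h2 m e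
    rcases (hmem _).1 ((hmf (f n)).2 ⟨m, e⟩) with h4 | ⟨q, h4, h5, h6⟩
    · exact h.hH.out _ (hU.sub _ h4)
    · have := h.hC.eq_of_lt h6 (by omega) (by omega)
      omega
  obtain ⟨H', hvH', hH'⟩ := Cmp.exists (G := G) f' (hoff (i + 1) (by omega) (by omega))
  have hJ : ∀ t : ℕ, i + 1 + t < i' → f (i + 1 + t) ∈ H' := by
    intro t
    induction t with
    | zero => intro _; simpa using hvH'
    | succ t ih =>
      intro ht
      push_cast at ht ⊢
      exact hH'.closed _ (ih (by omega)) _ (h.hC.step (Or.inl (by omega))) (hoff _ (by omega) ht)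
  have hJsub : (Ioo i i').image f ⊆ H' := by
    intro x hx
    obtain ⟨n, hn, rfl⟩ := mem_image.1 hx
    rw [mem_Ioo] at hn
    have := hJ (n - i - 1).toNat (by omega)
    rwa [show i + 1 + ((n - i - 1).toNat : ℤ) = n by omega] at this
  have hJc : ((Ioo i i').image f).card = H.card := by
    rw [card_image_of_injOn]
    · rw [Int.card_Ioo]; omega
    · intro x hx y hy e
      simp only [coe_Ioo, Set.mem_Ioo] at hx hy
      exact h.hC.eq_of_lt e (by omega) (by omega)
  -- maximality of `H` makes the interior of the segment a whole component
  have hJH := eq_of_subset_of_card_le hJsub (by rw [hJc]; exact h.mx _ _ hf' hH')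
  have hF : FS G δ c f' H' := ⟨h.hG, hf', h.hL, hH', by rw [← hJH, hJc]; exact hk, fun f2 H2 a b => by
    rw [← hJH, hJc]; exact h.mx f2 H2 a b⟩
  obtain ⟨-, s2, s3⟩ := hF.st
  have s3' := h.st.2.2
  have hin : ∀ n, i < n → n < i' → f n ∈ H' := fun n h1 h2 =>
    hJsub (mem_image.2 ⟨n, mem_Ioo.2 ⟨h1, h2⟩, rfl⟩)
  refine ⟨AS G f' H', ?_, ?_, ?_, ?_⟩
  · rw [← hJH, hJc] at s3; rw [← hJH]; omega
  · intro n h1 h2 w hw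
    rcases hH'.nbr (hin n h1 h2) hw with h4 | h4
    · rw [← hJH] at h4
      obtain ⟨m, hm, rfl⟩ := mem_image.1 h4
      rw [mem_Ioo] at hm
      exact Or.inr ⟨m, hm.1, hm.2, rfl⟩
    · exact Or.inl h4
  · exact fun n h1 h2 a ha => s2 _ (hin n h1 h2) a ha
  · intro a ha
    rcases (hmem a).1 ((hmf a).2 (mem_AS.1 ha).1) with h4 | h4
    · exfalso
      have hadj := s2 _ (hin (i + 1) (by omega) (by omega)) a ha
      exact hs.none (i + 1) (by omega) (by omega) (mem_AS.2 ⟨⟨_, rfl⟩, a, hU.sub _ h4, hadj⟩)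
    · exact h4

/-- A segment of minimal length whose interior has a neighbour inside another segment. -/
theorem FS.RL2 (h : FS G δ c f H) {i i' j j' n m : ℤ} (hp : Pr f c (AS G f H) i i' j j')
    (hr : i' = i + H.card + 1) (h1 : i < n) (h2 : n < i') (h3 : j < m) (h4 : m < j')
    (ha : G.Adj (f n) (f m)) : H.card = 2 ∧ j' = j + 6 ∧ m = j + 3 ∧
      (∀ q, i < q → q < i' → G.Adj (f q) (f m)) := by
  have hk := h.k2
  have hq1 := hp.h1
  have hq2 := hp.h2
  have hlt := hp.hi.lt
  obtain ⟨A', a1, a2, a3, a4⟩ := h.RL hp.hi hr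
  have hall : ∀ q, i < q → q < i' → G.Adj (f q) (f m) := by
    rcases a2 n h1 h2 _ ha with h5 | ⟨q, h5, h6, h7⟩
    · exact fun q hq hq' => a3 q hq hq' _ h5
    · have := h.hC.eq_of_lt h7 (by omega) (by omega)
      omega
  have e1 := (h.cross hp.hi hp.hj hp.h1 hp.h2 (n := i + 1) (by omega) (by omega) h3 h4 (Q := [])
    (con_nil.2 (hall _ (by omega) (by omega))) List.nodup_nil (by simp)).2
  have e2 := (h.cross hp.hi hp.hj hp.h1 hp.h2 (n := i' - 1) (by omega) (by omega) h3 h4 (Q := [])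
    (con_nil.2 (hall _ (by omega) (by omega))) List.nodup_nil (by simp)).2
  obtain ⟨ex, b1, b2⟩ := h.budget
  have hb := b2 {f j} ∅ (by simpa using hp.hj.m0) (by simp)
  rw [sum_singleton, card_empty] at hb
  have hbj := b1 _ _ hp.hj
  have hs := h.s3
  rcases e2.2.2 with h6 | ⟨h6, h7⟩
  · rw [h6] at hb hbj e1 e2 hr
    exact ⟨h6, by omega, by omega, hall⟩
  · rw [h6, h7] at hb
    omega

/-- The case of a segment of length six whose middle vertex is adjacent to the interior of a
segment of length three. -/
theorem FS.five (h : FS G δ c f H) {i i' j j' : ℤ} (hp : Pr f c (AS G f H) i i' j j')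
    (k2 : H.card = 2) (hr : i' = i + 3) (hj : j' = j + 6)
    (hall : ∀ q, i < q → q < i' → G.Adj (f q) (f (j + 3))) : False := by
  classical
  have hq1 := hp.h1
  have hq2 := hp.h2
  have hlt := hp.hi.lt
  obtain ⟨ex, b1, b2⟩ := h.budget
  have hexj := b1 _ _ hp.hj
  -- the segment of length six uses up the whole budget
  have hout : ∀ Q : List V, Q.Nodup → (∀ x ∈ Q, x ∉ H ∧ ∀ i, f i ≠ x) → Q = [] := by
    intro Q h1 h2
    have := b2 {f j} Q.toFinset (by simpa using hp.hj.m0) (fun x hx => h2 x (by simpa using hx))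
    rw [sum_singleton, List.toFinset_card_of_nodup h1, k2] at this
    rw [k2] at hexj
    exact List.length_eq_zero_iff.1 (by omega)
  have hreg : ∀ p p', Seg f (AS G f H) p p' → f p ≠ f j → p' = p + 3 := by
    intro p p' hpp hne
    have h1 := b2 {f j, f p} ∅ (by
      intro x hx; simp only [mem_insert, mem_singleton] at hx
      rcases hx with rfl | rfl
      exacts [hp.hj.m0, hpp.m0]) (by simp)
    rw [sum_pair hne.symm, card_empty, k2] at h1
    have h2 := b1 _ _ hpp
    rw [k2] at h2 hexj
    omega
  have hm3 : f (j + 3) ∉ AS G f H := hp.hj.none _ (by omega) (by omega)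
  have hZs : ∀ n, f n ∈ insert (f (j + 3)) (AS G f H) →
      f (n + 1) ∉ insert (f (j + 3)) (AS G f H) := by
    intro n hn hn1
    rw [mem_insert] at hn hn1
    rcases hn with hn | hn <;> rcases hn1 with hn1 | hn1
    · have := h.hC.eq_of_lt (hn.trans hn1.symm) (by have := h.hC.three; omega) (by omega)
      omega
    · rw [h.hC.cong hn 1] at hn1
      exact hp.hj.none _ (by omega) (by omega) hn1
    · have := h.hC.cong hn1 (-1)
      rw [show n + 1 + -1 = n by ring] at this
      rw [this] at hn
      exact hp.hj.none _ (by omega) (by omega) hn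
    · exact not_att_succ h.hC h.hL h.hH (mem_AS.1 hn).2 (mem_AS.1 hn1).2
  -- deleting the attachment vertices and the middle vertex of the long segment
  obtain ⟨Q, hQ1, hQ2, hQ⟩ := h.TL (Z := insert (f (j + 3)) (AS G f H)) (subset_insert _ _) (by
    intro z hz
    rcases mem_insert.1 hz with rfl | hz
    exacts [⟨_, rfl⟩, h.pos hz]) hZs
  obtain rfl := hout Q hQ1 hQ2
  have st : ∀ p q : ℤ, p + 1 = q ∨ q + 1 = p → G.Adj (f p) (f q) := fun p q => h.hC.step
  have key : ∀ (l : List ℤ), 6 ≤ l.length → l.Nodup →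
      (∀ n ∈ l, i < n ∧ n < i' ∨ j < n ∧ n < j') → (Con G (f j) (l.map f) (f i) ∨
        Con G (f i') (l.map f) (f j')) → False := by
    intro l h1 h2 h3 h4
    rcases h4 with h4 | h4
    · have := h.NLp hp h2 h3 (Or.inr rfl) (Or.inl rfl) h4
      rw [k2] at this; omega
    · have := h.NLp hp h2 h3 (Or.inl rfl) (Or.inr rfl) h4
      rw [k2] at this; omega
  rcases hQ with ⟨p, p', a, n, b, hpp, g1, g2, g3, g4, hnZ, haZ, hbZ, hc⟩ |
    ⟨p, p', q, q', a, b, hpq, g1, g2, g3, g4, haZ, hbZ, hc⟩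
  · rw [con_nil] at hc
    have hn : f n = f (j + 3) := by
      rcases mem_insert.1 hnZ with h1 | h1
      · exact h1
      · exact absurd h1 (hpp.none n (by omega) (by omega))
    -- move the chord to the segment starting at `j`
    have hcg := h.hC.cong hn
    have hp1 : f (p + (j + 3 - n)) ∈ AS G f H := by
      have := hcg (p - n)
      rw [show n + (p - n) = p by ring] at this
      rw [show p + (j + 3 - n) = j + 3 + (p - n) by ring, ← this]; exact hpp.m0
    have hp2 : f (p' + (j + 3 - n)) ∈ AS G f H := by
      have := hcg (p' - n)
      rw [show n + (p' - n) = p' by ring] at this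
      rw [show p' + (j + 3 - n) = j + 3 + (p' - n) by ring, ← this]; exact hpp.m1
    have r1 : p + (j + 3 - n) ≤ j := by
      by_contra hx
      exact hp.hj.none _ (by omega) (by omega) hp1
    have r2 : j ≤ p + (j + 3 - n) := by
      by_contra hx
      have := hpp.shift h.hC (j := p + (j + 3 - n)) (by
        have := hcg (p - n)
        rw [show n + (p - n) = p by ring] at this
        rw [show p + (j + 3 - n) = j + 3 + (p - n) by ring, ← this])
      exact this.none j (by omega) (by omega) hp.hj.m0
    have r3 : j + 6 ≤ p' + (j + 3 - n) := by
      by_contra hx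
      exact hp.hj.none _ (by omega) (by omega) hp2
    have hpj : f p = f j := by
      have := hcg (p - n)
      rw [show n + (p - n) = p by ring, show j + 3 + (p - n) = j by omega] at this
      exact this
    have r4 : p' - p = 6 := by
      have := (hpp.shift h.hC hpj).unique hp.hj
      omega
    have hca := h.hC.cong hpj (a - p)
    have hcb := h.hC.cong hpj (b - p)
    rw [show p + (a - p) = a by ring] at hca
    rw [show p + (b - p) = b by ring] at hcb
    rw [hca, hcb] at hc
    have hi1 := hall (i + 1) (by omega) (by omega)
    have hi2 := hall (i + 2) (by omega) (by omega)
    subst hr hj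
    rcases (by omega : a - p = 1 ∨ a - p = 2) with e1 | e1 <;>
      rcases (by omega : b - p = 4 ∨ b - p = 5) with e2 | e2 <;> rw [e1, e2] at hc
    · refine key [i + 2, i + 1, j + 3, j + 2, j + 1, j + 4, j + 5] (by simp) (by simp; try omega) (by simp; try omega) (Or.inr ?_)
      simp only [List.map_cons, List.map_nil, con_cons, con_nil]
      refine ⟨?_, ?_, hi1, ?_, ?_, hc, ?_, ?_⟩ <;> exact st _ _ (by omega)
    · refine key [j + 1, j + 5, j + 4, j + 3, i + 2, i + 1] (by simp) (by simp; try omega) (by simp; try omega) (Or.inl ?_)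
      simp only [List.map_cons, List.map_nil, con_cons, con_nil]
      refine ⟨?_, hc, ?_, ?_, hi2.symm, ?_, ?_⟩ <;> exact st _ _ (by omega)
    · refine key [j + 1, j + 2, j + 4, j + 3, i + 2, i + 1] (by simp) (by simp; try omega) (by simp; try omega) (Or.inl ?_)
      simp only [List.map_cons, List.map_nil, con_cons, con_nil]
      refine ⟨?_, ?_, hc, ?_, hi2.symm, ?_, ?_⟩ <;> exact st _ _ (by omega)
    · refine key [j + 1, j + 2, j + 5, j + 4, j + 3, i + 2, i + 1] (by simp) (by simp; try omega) (by simp; try omega) (Or.inl ?_)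
      simp only [List.map_cons, List.map_nil, con_cons, con_nil]
      refine ⟨?_, ?_, hc, ?_, ?_, hi2.symm, ?_, ?_⟩ <;> exact st _ _ (by omega)
  · rw [con_nil] at hc
    have hcr := (h.cross hpq.hi hpq.hj hpq.h1 hpq.h2 g1 g2 g3 g4 (con_nil.2 hc) List.nodup_nil
      (by simp)).2
    rw [k2] at hcr
    rw [mem_insert, not_or] at haZ hbZ
    by_cases e1 : f p = f j
    · have h5 := hreg q q' hpq.hj (fun e => hpq.ne h.hC (e1.trans e.symm))
      have h6 := (h.RL2 (hpq.swap h.hC) (by omega) g3 g4 (m := a + c) (by omega) (by omega)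
        (by rw [h.hC.per]; exact hc.symm)).2.2.1
      have := h.hC.cong e1 3
      rw [show p + 3 = a by omega] at this
      exact haZ.1 this
    · have h5 := hreg p p' hpq.hi e1
      have h6 := h.RL2 hpq (by omega) g1 g2 g3 g4 hc
      by_cases e2 : f q = f j
      · have := h.hC.cong e2 3
        rw [show q + 3 = b by omega] at this
        exact hbZ.1 this
      · have := hreg q q' hpq.hj e2
        omega

/-- The interior of a segment of minimal length is completely joined to the attachment set and has
no other neighbours outside itself. -/
theorem FS.reg (h : FS G δ c f H) {i i' : ℤ} (hs : Seg f (AS G f H) i i')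
    (hr : i' = i + H.card + 1) :
    (∀ n, i < n → n < i' → ∀ w, G.Adj (f n) w →
      w ∈ AS G f H ∨ ∃ m, i < m ∧ m < i' ∧ f m = w) ∧
    (∀ n, i < n → n < i' → ∀ a ∈ AS G f H, G.Adj (f n) a) := by
  obtain ⟨A', a1, a2, a3, a4⟩ := h.RL hs hr
  have hk := h.k2
  have hA : A' = AS G f H := by
    refine eq_of_subset_of_card_le (fun a ha => ?_) a1.ge
    have hadj := a3 (i + 1) (by omega) (by omega) a ha
    rcases h.nbr hs (by omega) (by omega) hadj with h1 | ⟨m, h1, h2, -, h3⟩ |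
      ⟨j, j', m, hp, h1, h2, h3⟩ | h1
    · exact h1
    · obtain ⟨q, h4, h5, h6⟩ := a4 a ha
      have := h.hC.eq_of_lt (h3.trans h6.symm) (by omega) (by omega)
      omega
    · subst h3
      obtain ⟨b1, b2, rfl, b4⟩ := h.RL2 hp hr (by omega) (by omega) h1 h2 hadj
      exact (h.five hp b1 (by omega) b2 b4).elim
    · obtain ⟨q, -, -, h6⟩ := a4 a ha
      exact absurd h6 (h1.2 q)
  subst hA
  exact ⟨a2, a3⟩
end

/-! ### Edges between two segments -/

section
variable {G : SimpleGraph V} {c : ℕ} {f : ℤ → V} {H : Finset V} {δ : ℕ}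
variable [Fintype V]

/-- Two segments with a common interior vertex agree up to a period. -/
theorem Seg.loc {A : Finset V} (hC : LC G c f) {p p' n i i' x : ℤ} (hp : Seg f A p p')
    (h1 : p < n) (h2 : n < p') (hi : Seg f A i i') (h3 : i < x) (h4 : x < i') (e : f n = f x) :
    n - p = x - i ∧ p' - p = i' - i ∧ ∀ q, f (p + q) = f (i + q) := by
  have e1 : f p = f (p + (x - n)) := by
    have := hC.cong e (p - n)
    rwa [show n + (p - n) = p by ring, show x + (p - n) = p + (x - n) by ring] at this
  have hs := hp.shift hC e1
  have e2 : p + (x - n) = i := by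
    rcases lt_trichotomy (p + (x - n)) i with h5 | h5 | h5
    · exact absurd hi.m0 (hs.none i h5 (by omega))
    · exact h5
    · exact absurd hs.m0 (hi.none _ h5 (by omega))
  rw [e2] at hs e1
  have := hs.unique hi
  exact ⟨by omega, by omega, fun q => hC.cong e1 q⟩

/-- The degree bound at a vertex that misses `B` and whose neighbours lie in `A` or in `T`. -/
theorem FS.dg (h : FS G δ c f H) {v : V} (B : Finset V) (T : List V) (hB : B ⊆ AS G f H)
    (hvB : ∀ b ∈ B, ¬ G.Adj v b) (hv : ∀ w, G.Adj v w → w ∈ AS G f H ∨ w ∈ T) :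
    B.card + H.card ≤ T.length + 1 := by
  classical
  have h1 := h.hG.deg v ((AS G f H \ B) ∪ T.toFinset) (fun w hw => by
    rw [mem_union, mem_sdiff, List.mem_toFinset]
    rcases hv w hw with h2 | h2
    · exact Or.inl ⟨h2, fun h3 => hvB w h3 hw⟩
    · exact Or.inr h2)
  have h2 := card_union_le (AS G f H \ B) T.toFinset
  have h3 := card_sdiff_add_card_eq_card hB
  have h4 := T.toFinset_card_le
  have h5 := h.st.2.2
  omega

/-- A segment with an edge to another segment has more than the minimal length. -/
theorem FS.irr (h : FS G δ c f H) {i i' j j' n m : ℤ} (hp : Pr f c (AS G f H) i i' j j')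
    (h1 : i < n) (h2 : n < i') (h3 : j < m) (h4 : m < j') (ha : G.Adj (f n) (f m)) :
    (H.card : ℤ) + 2 ≤ i' - i := by
  have := h.seg_len hp.hi
  by_contra hlt
  have hq1 := hp.h1
  have hq2 := hp.h2
  rcases (h.reg hp.hi (by omega)).1 n h1 h2 _ ha with h5 | ⟨q, h5, h6, h7⟩
  · exact hp.hj.none m h3 h4 h5
  · have := h.hC.eq_of_lt h7 (by omega) (by omega)
    omega

/-- The analogue of `FS.irr` for the second segment. -/
theorem FS.irr' (h : FS G δ c f H) {i i' j j' n m : ℤ} (hp : Pr f c (AS G f H) i i' j j')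
    (h1 : i < n) (h2 : n < i') (h3 : j < m) (h4 : m < j') (ha : G.Adj (f n) (f m)) :
    (H.card : ℤ) + 2 ≤ j' - j :=
  h.irr (hp.swap h.hC) h3 h4 (m := n + c) (by omega) (by omega) (by rw [h.hC.per]; exact ha.symm)

/-- Since there are at least three attachment vertices, two segments with the common end `f i`
leave a third one on the other side. -/
theorem FS.third (h : FS G δ c f H) {i i' j : ℤ} (hp : Pr f c (AS G f H) i i' j (i + c)) :
    ∃ m m', Seg f (AS G f H) m m' ∧ i' ≤ m ∧ m' ≤ j := by
  classical
  have hq1 := hp.h1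
  have hij : i' ≠ j := by
    rintro rfl
    have hs := h.s3
    obtain ⟨b, hb, hb2⟩ := exists_mem_notMem_of_card_lt_card (s := {f i, f i'}) (t := AS G f H)
      (lt_of_le_of_lt card_le_two (by omega))
    obtain ⟨q, rfl⟩ := h.pos hb
    obtain ⟨q', h1, h2, h3⟩ := h.hC.win q i
    rw [← h3] at hb hb2
    simp only [mem_insert, mem_singleton, not_or] at hb2
    have n1 : q' ≠ i := by rintro rfl; exact hb2.1 rfl
    have n2 : q' ≠ i' := by rintro rfl; exact hb2.2 rfl
    rcases lt_or_ge q' i' with h4 | h4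
    · exact hp.hi.none q' (by omega) h4 hb
    · exact hp.hj.none q' (by omega) h2 hb
  obtain ⟨m', hm⟩ := h.seg_next hp.hi.m1
  refine ⟨i', m', hm, le_rfl, ?_⟩
  by_contra hlt
  exact hm.none j (by omega) (by omega) hp.hj.m0

/-- A long path, given by positions, through the interiors of two segments from `f i'` to `f j`:
its ends are not adjacent to `f i` or `f j'`, and if these two coincide then no segment between
them has the minimal length. -/
theorem FS.Qp (h : FS G δ c f H) {i i' j j' a b : ℤ} (hp : Pr f c (AS G f H) i i' j j')
    {l : List ℤ} (hl : (a :: l).Nodup) (hm : ∀ n ∈ a :: l, i < n ∧ n < i' ∨ j < n ∧ n < j')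
    (hT : Tr G (f a) (l.map f) (f b)) (ha : G.Adj (f i') (f a)) (hb : G.Adj (f b) (f j))
    (hlen : (i' - i) + (j' - j) < (l.length : ℤ) + 1 + H.card + 2) :
    (∀ e', e' = f i ∨ e' = f j' → ¬ G.Adj (f a) e' ∧ ¬ G.Adj (f b) e') ∧
    (j' = i + c → ∀ m m', Seg f (AS G f H) m m' → i' ≤ m → m' ≤ j → m' ≠ m + H.card + 1) := by
  classical
  have hq1 := hp.h1
  have hq2 := hp.h2
  have hcon : Con G (f i') ((a :: l).map f) (f j) := by
    rw [List.map_cons, con_cons]; exact ⟨ha, hT.con hb⟩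
  have hrev := hcon.rev
  refine ⟨fun e' he' => ⟨fun hadj => ?_, fun hadj => ?_⟩, ?_⟩
  · have hc2 : Con G (f j) ((a :: l).reverse.map f) e' := by
      rw [List.map_reverse, List.map_cons, List.reverse_cons]
      rw [List.map_cons, List.reverse_cons] at hrev
      obtain ⟨w, hw, hw2⟩ := con_iff.1 hrev
      obtain ⟨w', h1, h2, h3⟩ := tr_snoc.1 hw
      rw [con_iff]
      exact ⟨f a, tr_snoc.2 ⟨w', h1, h2, rfl⟩, hadj⟩
    have := h.NLp hp (List.nodup_reverse.2 hl) (fun n hn => hm n (List.mem_reverse.1 hn))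
      (Or.inr rfl) he' hc2
    simp only [List.length_reverse, List.length_cons] at this
    push_cast at this
    omega
  · have hc2 : Con G (f i') ((a :: l).map f) e' := by
      rw [List.map_cons, con_cons]; exact ⟨ha, hT.con hadj⟩
    have := h.NLp hp hl hm (Or.inl rfl) he' hc2
    simp only [List.length_cons] at this
    push_cast at this
    omega
  · rintro rfl m m' hmm hm1 hm2 hreg
    have hk := h.k2
    have hilt := hp.hi.lt
    have hjlt := hp.hj.lt
    have hK : Con G (f i) (up f m H.card) (f m') := by
      obtain ⟨κ, hκ⟩ : ∃ κ, H.card = κ + 1 := ⟨H.card - 1, by omega⟩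
      have hadj := (h.reg hmm hreg).2 (m + 1) (by omega) (by omega) _ hp.hi.m0
      have htr := h.hC.tr_up (m + 1) κ
      have hup : up f m H.card = f (m + 1) :: up f (m + 1) κ := by
        rw [hκ, up, List.range_succ_eq_map, List.map_cons, List.map_map, up]
        congr 1
        · simp
        · refine List.map_congr_left fun t _ => ?_
          simp only [Function.comp_apply, Nat.cast_succ]
          congr 1; ring
      rw [hup, con_cons]
      refine ⟨hadj.symm, htr.con ?_⟩
      exact h.hC.step (Or.inl (by omega))
    have := h.N4 hp.hi hp.hj hmm hm1 hm2 (R := ((a :: l).map f).reverse) ?_ ?_ hrev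
      (K := up f m H.card) (h.hC.nodup_up _ _ (by omega)) ?_ (Or.inl hK)
    · simp only [List.length_reverse, List.length_map, List.length_cons, up_length] at this
      push_cast at this
      omega
    · refine List.nodup_reverse.2 (hl.map_on ?_)
      intro x hx y hy e
      have := hm x hx
      have := hm y hy
      exact h.hC.eq_of_lt e (by omega) (by omega)
    · intro x hx
      obtain ⟨n, hn, rfl⟩ := List.mem_map.1 (List.mem_reverse.1 hx)
      exact Or.inr ⟨n, hm n hn, rfl⟩
    · intro x hx
      obtain ⟨n, h1, h2, h3⟩ := mem_up.1 hx
      exact ⟨n, h1, by omega, h3⟩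

/-- All segments but the two of the pair have the minimal length, and the cycle and `H` cover
everything. -/
structure Only (G : SimpleGraph V) (f : ℤ → V) (H : Finset V) (i j : ℤ) : Prop where
  reg : ∀ p p', Seg f (AS G f H) p p' → f p ≠ f i → f p ≠ f j → p' = p + H.card + 1
  out : ∀ v, v ∉ H → ∃ n, f n = v

theorem Only.mir {i j : ℤ} (o : Only G f H i j) (hC : LC G c f) {i' j' : ℤ}
    (hp : Pr f c (AS G f H) i i' j j') :
    Only G (fun n => f (-n)) H (-j') (-i') := by
  refine ⟨fun p p' hs h1 h2 => ?_, fun v hv => ?_⟩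
  · rw [AS_mir] at hs
    have hs' := hs.mir
    simp only [neg_neg] at hs'
    have hloc : ∀ x x', Seg f (AS G f H) x x' → f (-p') = f x → f (-p) = f x' := by
      intro x x' hx e
      have h3 := (hs'.shift hC e).unique hx
      have h4 := hC.cong e (p' - p)
      rwa [show -p' + (p' - p) = -p by ring, show x + (p' - p) = x' by omega] at h4
    have := o.reg _ _ hs' (fun e => h2 (by simpa using hloc _ _ hp.hi e))
      (fun e => h1 (by simpa using hloc _ _ hp.hj e))
    omega
  · obtain ⟨n, rfl⟩ := o.out v hv
    exact ⟨-n, by simp⟩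

theorem Only.swap {i j : ℤ} (o : Only G f H i j) (hC : LC G c f) : Only G f H j (i + c) :=
  ⟨fun p p' hs h1 h2 => o.reg p p' hs (by rwa [hC.per] at h2) h1, o.out⟩

/-- Neighbours of an interior vertex of either segment of the pair, when `Only` holds. -/
theorem FS.nbr2 (h : FS G δ c f H) {i i' j j' n : ℤ} (hp : Pr f c (AS G f H) i i' j j')
    (o : Only G f H i j) (h1 : i < n ∧ n < i' ∨ j < n ∧ n < j') {w : V} (hw : G.Adj (f n) w) :
    w ∈ AS G f H ∨ ∃ m, (i < m ∧ m < i' ∨ j < m ∧ m < j') ∧ m ≠ n ∧ f m = w := by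
  have hq1 := hp.h1
  have hq2 := hp.h2
  rcases h1 with h1 | h1
  · rcases h.nbr hp.hi h1.1 h1.2 hw with h2 | ⟨m, h2, h3, h4, h5⟩ | ⟨q, q', m, hq, h2, h3, rfl⟩ | h2
    · exact Or.inl h2
    · exact Or.inr ⟨m, Or.inl ⟨h2, h3⟩, h4, h5⟩
    · right
      have hirr := h.irr' hq h1.1 h1.2 h2 h3 hw
      by_cases e : f q = f j
      · have e2 := (hq.hj.shift h.hC e).unique hp.hj
        have e3 := h.hC.cong e (m - q)
        rw [show q + (m - q) = m by ring] at e3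
        exact ⟨j + (m - q), by omega, by omega, e3.symm⟩
      · have := o.reg _ _ hq.hj (fun e' => hq.ne h.hC e'.symm) e
        omega
    · obtain ⟨m, hm⟩ := o.out w h2.1
      exact absurd hm (h2.2 m)
  · rcases h.nbr hp.hj h1.1 h1.2 hw with h2 | ⟨m, h2, h3, h4, h5⟩ | ⟨q, q', m, hq, h2, h3, rfl⟩ | h2
    · exact Or.inl h2
    · exact Or.inr ⟨m, Or.inr ⟨h2, h3⟩, h4, h5⟩
    · right
      have hirr := h.irr' hq h1.1 h1.2 h2 h3 hw
      by_cases e : f q = f i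
      · have e2 := (hq.hj.shift h.hC e).unique hp.hi
        have e3 := h.hC.cong e (m - q)
        rw [show q + (m - q) = m by ring] at e3
        exact ⟨i + (m - q), by omega, by omega, e3.symm⟩
      · have := o.reg _ _ hq.hj e (fun e' => hq.ne h.hC e'.symm)
        omega
    · obtain ⟨m, hm⟩ := o.out w h2.1
      exact absurd hm (h2.2 m)

/-- Under `Only`, the last vertex of a long path through the interiors of both segments is
adjacent to neither `f i` nor `f j'`, and these two vertices are different: otherwise a third
segment lies between `i'` and `j`, which has minimal length by `Only`, against `FS.Qp`. -/
theorem FS.Qo (h : FS G δ c f H) {i i' j j' a b : ℤ} (hp : Pr f c (AS G f H) i i' j j')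
    (o : Only G f H i j)
    {l : List ℤ} (hl : (a :: l).Nodup) (hm : ∀ n ∈ a :: l, i < n ∧ n < i' ∨ j < n ∧ n < j')
    (hT : Tr G (f a) (l.map f) (f b)) (ha : G.Adj (f i') (f a)) (hb : G.Adj (f b) (f j))
    (hlen : (i' - i) + (j' - j) < (l.length : ℤ) + 1 + H.card + 2) :
    ¬ G.Adj (f b) (f i) ∧ ¬ G.Adj (f b) (f j') ∧ f i ≠ f j' := by
  obtain ⟨h1, h2⟩ := h.Qp hp hl hm hT ha hb hlen
  refine ⟨(h1 _ (Or.inl rfl)).2, (h1 _ (Or.inr rfl)).2, fun e => ?_⟩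
  have hq1 := hp.h1
  have hq2 := hp.h2
  have hilt := hp.hi.lt
  have hjlt := hp.hj.lt
  have e2 : j' = i + c := by
    have := h.hC.eq_of_lt ((h.hC.per i).trans e) (by omega) (by omega)
    exact this.symm
  subst e2
  obtain ⟨m, m', hmm, h3, h4⟩ := h.third hp
  have hml := hmm.lt
  refine h2 rfl m m' hmm h3 h4 (o.reg _ _ hmm (fun e => ?_) (fun e => ?_))
  · have := h.hC.eq_of_lt e (by omega) (by omega)
    omega
  · have := h.hC.eq_of_lt e (by omega) (by omega)
    omega
end

/-! ### Lengths of two segments joined by an edge -/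

section
variable {G : SimpleGraph V} {c : ℕ} {f : ℤ → V} {H : Finset V} {δ : ℕ}
variable [Fintype V]

/-- Two segments that exhaust the budget. -/
theorem FS.only (h : FS G δ c f H) {i i' j j' : ℤ} (hp : Pr f c (AS G f H) i i' j j')
    (hk : H.card = 2 ∧ 9 ≤ (i' - i) + (j' - j) ∨
      H.card = 3 ∧ (AS G f H).card = 3 ∧ 10 ≤ (i' - i) + (j' - j)) : Only G f H i j := by
  classical
  obtain ⟨ex, e1, e2⟩ := h.budget
  have hi := e1 _ _ hp.hi
  have hj := e1 _ _ hp.hj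
  have hne := hp.ne h.hC
  refine ⟨fun p p' hs h1 h2 => ?_, fun v hv => ?_⟩
  · have hb := e2 {f p, f i, f j} ∅ (by
      intro x hx; simp only [mem_insert, mem_singleton] at hx
      rcases hx with rfl | rfl | rfl
      exacts [hs.m0, hp.hi.m0, hp.hj.m0]) (by simp)
    rw [sum_insert (by simp [h1, h2]), sum_pair hne, card_empty] at hb
    have := e1 _ _ hs
    rcases hk with ⟨hk, hk2⟩ | ⟨hk, hk2, hk3⟩
    · rw [hk] at hb hi hj this ⊢; omega
    · rw [hk, hk2] at hb; rw [hk] at hi hj this ⊢; omega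
  · by_contra hvC
    push Not at hvC
    have hb := e2 {f i, f j} {v} (by
      intro x hx; simp only [mem_insert, mem_singleton] at hx
      rcases hx with rfl | rfl
      exacts [hp.hi.m0, hp.hj.m0]) (by
      intro x hx; rw [mem_singleton] at hx; subst hx; exact ⟨hv, hvC⟩)
    rw [sum_pair hne, card_singleton] at hb
    rcases hk with ⟨hk, hk2⟩ | ⟨hk, hk2, hk3⟩
    · rw [hk] at hb hi hj; omega
    · rw [hk, hk2] at hb; rw [hk] at hi hj; omega

/-- The lengths of two segments joined by an edge. -/
theorem FS.types (h : FS G δ c f H) {i i' j j' n m : ℤ} (hp : Pr f c (AS G f H) i i' j j')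
    (h1 : i < n) (h2 : n < i') (h3 : j < m) (h4 : m < j') (ha : G.Adj (f n) (f m)) :
    H.card = 3 ∧ (AS G f H).card = 3 ∧ i' = i + 5 ∧ j' = j + 5 ∧ (n - i) + (m - j) = 5 ∨
    H.card = 2 ∧ 4 ≤ (n - i) + (m - j) ∧ 4 ≤ (i' - n) + (j' - m) ∧
      (i' = i + 4 ∧ j' = j + 4 ∨ i' = i + 5 ∧ j' = j + 4 ∨ i' = i + 4 ∧ j' = j + 5) := by
  classical
  have a1 := h.irr hp h1 h2 h3 h4 ha
  have a2 := h.irr' hp h1 h2 h3 h4 ha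
  have a3 := h.cross hp.hi hp.hj hp.h1 hp.h2 h1 h2 h3 h4 (con_nil.2 ha) List.nodup_nil (by simp)
  obtain ⟨ex, e1, e2⟩ := h.budget
  have hi := e1 _ _ hp.hi
  have hj := e1 _ _ hp.hj
  have hb := e2 {f i, f j} ∅ (by
    intro x hx; simp only [mem_insert, mem_singleton] at hx
    rcases hx with rfl | rfl
    exacts [hp.hi.m0, hp.hj.m0]) (by simp)
  rw [sum_pair (hp.ne h.hC), card_empty] at hb
  obtain ⟨-, a3, a4, a5 | ⟨a5, a6⟩⟩ := a3
  · rw [a5] at a1 a2 a3 a4 hi hj hb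
    right
    omega
  · rw [a5, a6] at hb
    rw [a5] at a1 a2 a3 a4 hi hj
    left
    omega

/-- If `H` has three vertices, two segments of length five are not joined by an edge. -/
theorem FS.k3 (h : FS G δ c f H) {i i' j j' n m : ℤ} (hp : Pr f c (AS G f H) i i' j j')
    (k3 : H.card = 3) (s3 : (AS G f H).card = 3) (hi : i' = i + 5) (hj : j' = j + 5)
    (hn : n = i + 1 ∧ m = j + 4 ∨ n = i + 2 ∧ m = j + 3) (ha : G.Adj (f n) (f m)) : False := by
  classical
  have o := h.only hp (Or.inr ⟨k3, s3, by omega⟩)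
  have hq1 := hp.h1
  have hq2 := hp.h2
  have st : ∀ p q : ℤ, p + 1 = q ∨ q + 1 = p → G.Adj (f p) (f q) := fun p q => h.hC.step
  -- a path through both interiors that ends at `f (j + 1)`
  have g1 : ¬ G.Adj (f (j + 1)) (f i) ∧ ¬ G.Adj (f (j + 1)) (f j') ∧ f i ≠ f j' := by
    rcases hn with ⟨rfl, rfl⟩ | ⟨rfl, rfl⟩
    · have hx := h.Qo hp o (a := i + 4) (b := j + 1) (l := [i + 3, i + 2, i + 1, j + 4, j + 3, j + 2, j + 1])
        (by simp; try omega) (by simp; try omega) (by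
          simp only [List.map_cons, List.map_nil, tr_cons, tr_nil]
          refine ⟨?_, ?_, ?_, ha, ?_, ?_, ?_, trivial⟩ <;> exact st _ _ (by omega))
        (st _ _ (by omega)) (st _ _ (by omega))
        (by simp only [List.length_cons, List.length_nil]; omega)
      exact hx
    · have hx := h.Qo hp o (a := i + 4) (b := j + 1) (l := [i + 3, i + 2, j + 3, j + 2, j + 1])
        (by simp; try omega) (by simp; try omega) (by
          simp only [List.map_cons, List.map_nil, tr_cons, tr_nil]
          refine ⟨?_, ?_, ha, ?_, ?_, trivial⟩ <;> exact st _ _ (by omega))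
        (st _ _ (by omega)) (st _ _ (by omega))
        (by simp only [List.length_cons, List.length_nil]; omega)
      exact hx
  have g2 : ¬ G.Adj (f (i + 4)) (f (j + 1)) := by
    intro hb
    rcases hn with ⟨rfl, rfl⟩ | ⟨rfl, rfl⟩
    · have hx := h.NLp hp (l := [i + 4, j + 1, j + 2, j + 3, j + 4, i + 1]) (by simp; try omega)
        (by simp; try omega) (e := f i') (e' := f i) (Or.inl rfl) (Or.inl rfl) (by
          simp only [List.map_cons, List.map_nil, con_cons, con_nil]
          refine ⟨?_, hb, ?_, ?_, ?_, ha.symm, ?_⟩ <;> exact st _ _ (by omega))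
      simp only [List.length_cons, List.length_nil] at hx
      omega
    · have hx := h.NLp hp (l := [i + 4, j + 1, j + 2, j + 3, i + 2, i + 1]) (by simp; try omega)
        (by simp; try omega) (e := f i') (e' := f i) (Or.inl rfl) (Or.inl rfl) (by
          simp only [List.map_cons, List.map_nil, con_cons, con_nil]
          refine ⟨?_, hb, ?_, ?_, ha.symm, ?_, ?_⟩ <;> exact st _ _ (by omega))
      simp only [List.length_cons, List.length_nil] at hx
      omega
  -- degree count at `f (j + 1)`: two attachment vertices are missed
  have hd := h.dg (v := f (j + 1)) {f i, f j'} [f (j + 2), f (j + 3), f (j + 4)] (by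
    intro x hx; simp only [mem_insert, mem_singleton] at hx
    rcases hx with rfl | rfl
    exacts [hp.hi.m0, hp.hj.m1]) (by
    intro x hx; simp only [mem_insert, mem_singleton] at hx
    rcases hx with rfl | rfl
    exacts [g1.1, g1.2.1]) (by
    intro w hw
    rcases h.nbr2 hp o (Or.inr ⟨by omega, by omega⟩) hw with h1 | ⟨q, h1 | h1, h2, rfl⟩
    · exact Or.inl h1
    · have := h.types hp h1.1 h1.2 (by omega) (by omega) hw.symm
      obtain rfl : q = i + 4 := by omega
      exact absurd hw.symm g2
    · right
      rcases (by omega : q = j + 2 ∨ q = j + 3 ∨ q = j + 4) with rfl | rfl | rfl <;> simp)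
  rw [card_pair g1.2.2] at hd
  simp only [List.length_cons, List.length_nil] at hd
  omega

/-- Segments of lengths five and four: an edge to the last interior vertex of the short one. -/
theorem FS.L543 (h : FS G δ c f H) {i i' j j' n : ℤ} (hp : Pr f c (AS G f H) i i' j j')
    (k2 : H.card = 2) (hi : i' = i + 5) (hj : j' = j + 4) (hn : i < n) (hn' : n < i')
    (ha : G.Adj (f n) (f (j + 3))) : False := by
  classical
  have o := h.only hp (Or.inl ⟨k2, by omega⟩)
  have hq1 := hp.h1
  have hq2 := hp.h2
  have st : ∀ p q : ℤ, p + 1 = q ∨ q + 1 = p → G.Adj (f p) (f q) := fun p q => h.hC.step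
  have hn : n = i + 1 ∨ n = i + 2 := by
    have := h.types hp hn hn' (by omega) (by omega) ha
    omega
  -- a path through both interiors that ends at `f (j + 1)`
  have g1 : ¬ G.Adj (f (j + 1)) (f i) ∧ ¬ G.Adj (f (j + 1)) (f j') ∧ f i ≠ f j' := by
    rcases hn with rfl | rfl
    · have hx := h.Qo hp o (a := i + 4) (b := j + 1) (l := [i + 3, i + 2, i + 1, j + 3, j + 2, j + 1])
        (by simp; try omega) (by simp; try omega) (by
          simp only [List.map_cons, List.map_nil, tr_cons, tr_nil]
          refine ⟨?_, ?_, ?_, ha, ?_, ?_, trivial⟩ <;> exact st _ _ (by omega))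
        (st _ _ (by omega)) (st _ _ (by omega))
        (by simp only [List.length_cons, List.length_nil]; omega)
      exact hx
    · have hx := h.Qo hp o (a := i + 4) (b := j + 1) (l := [i + 3, i + 2, j + 3, j + 2, j + 1])
        (by simp; try omega) (by simp; try omega) (by
          simp only [List.map_cons, List.map_nil, tr_cons, tr_nil]
          refine ⟨?_, ?_, ha, ?_, ?_, trivial⟩ <;> exact st _ _ (by omega))
        (st _ _ (by omega)) (st _ _ (by omega))
        (by simp only [List.length_cons, List.length_nil]; omega)
      exact hx
  have g3 : ¬ G.Adj (f (i + 3)) (f (j + 1)) := by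
    intro hb
    rcases hn with rfl | rfl
    · have hx := h.NLp hp (l := [i + 4, i + 3, j + 1, j + 2, j + 3, i + 1]) (by simp; try omega)
        (by simp; try omega) (e := f i') (e' := f i) (Or.inl rfl) (Or.inl rfl) (by
          simp only [List.map_cons, List.map_nil, con_cons, con_nil]
          refine ⟨?_, ?_, hb, ?_, ?_, ha.symm, ?_⟩ <;> exact st _ _ (by omega))
      simp only [List.length_cons, List.length_nil] at hx
      omega
    · have hx := h.NLp hp (l := [i + 4, i + 3, j + 1, j + 2, j + 3, i + 2, i + 1]) (by simp; try omega)
        (by simp; try omega) (e := f i') (e' := f i) (Or.inl rfl) (Or.inl rfl) (by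
          simp only [List.map_cons, List.map_nil, con_cons, con_nil]
          refine ⟨?_, ?_, hb, ?_, ?_, ha.symm, ?_, ?_⟩ <;> exact st _ _ (by omega))
      simp only [List.length_cons, List.length_nil] at hx
      omega
  have g4 : ¬ G.Adj (f (i + 4)) (f (j + 1)) := by
    intro hb
    rcases hn with rfl | rfl
    · have hx := h.NLp hp (l := [j + 1, i + 4, i + 3, i + 2, i + 1, j + 3]) (by simp; try omega)
        (by simp; try omega) (e := f j) (e' := f j') (Or.inr rfl) (Or.inr rfl) (by
          simp only [List.map_cons, List.map_nil, con_cons, con_nil]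
          refine ⟨?_, hb.symm, ?_, ?_, ?_, ha, ?_⟩ <;> exact st _ _ (by omega))
      simp only [List.length_cons, List.length_nil] at hx
      omega
    · have hx := h.NLp hp (l := [i + 4, j + 1, j + 2, j + 3, i + 2, i + 1]) (by simp; try omega)
        (by simp; try omega) (e := f i') (e' := f i) (Or.inl rfl) (Or.inl rfl) (by
          simp only [List.map_cons, List.map_nil, con_cons, con_nil]
          refine ⟨?_, hb, ?_, ?_, ha.symm, ?_, ?_⟩ <;> exact st _ _ (by omega))
      simp only [List.length_cons, List.length_nil] at hx
      omega
  -- degree count at `f (j + 1)`: two attachment vertices are missed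
  have hd := h.dg (v := f (j + 1)) {f i, f j'} [f (j + 2), f (j + 3)] (by
    intro x hx; simp only [mem_insert, mem_singleton] at hx
    rcases hx with rfl | rfl
    exacts [hp.hi.m0, hp.hj.m1]) (by
    intro x hx; simp only [mem_insert, mem_singleton] at hx
    rcases hx with rfl | rfl
    exacts [g1.1, g1.2.1]) (by
    intro w hw
    rcases h.nbr2 hp o (Or.inr ⟨by omega, by omega⟩) hw with h1 | ⟨q, h1 | h1, h2, rfl⟩
    · exact Or.inl h1
    · have := h.types hp h1.1 h1.2 (by omega) (by omega) hw.symm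
      rcases (by omega : q = i + 3 ∨ q = i + 4) with rfl | rfl
      exacts [absurd hw.symm g3, absurd hw.symm g4]
    · right
      rcases (by omega : q = j + 2 ∨ q = j + 3) with rfl | rfl <;> simp)
  rw [card_pair g1.2.2] at hd
  simp only [List.length_cons, List.length_nil] at hd
  omega

/-- The mirror image of `FS.L543`: an edge to the first interior vertex of the short segment. -/
theorem FS.L541 (h : FS G δ c f H) {i i' j j' n : ℤ} (hp : Pr f c (AS G f H) i i' j j')
    (k2 : H.card = 2) (hi : i' = i + 5) (hj : j' = j + 4) (hn : i < n) (hn' : n < i')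
    (ha : G.Adj (f n) (f (j + 1))) : False := by
  have hm := h.mir
  have hpm := hp.mir
  rw [← AS_mir (G := G)] at hpm
  refine hm.L543 (hpm.swap hm.hC) k2 (by omega) (by omega) (n := -n) (by omega) (by omega) ?_
  have hper := h.hC.per (j + 1 - c)
  rw [sub_add_cancel] at hper
  simp only [neg_neg]
  rw [show -(-j' + c + 3) = j + 1 - c by omega, ← hper]
  exact ha

/-- `FS.TL` for the attachment set enlarged by a set `M` of vertices far apart. -/
theorem FS.TLM [DecidableEq V] (h : FS G δ c f H) (M : Finset V) (hM : ∀ v ∈ M, ∃ n, f n = v)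
    (hM1 : ∀ n, f n ∈ M → f (n + 1) ∉ AS G f H ∧ f (n + 1) ∉ M ∧ f (n - 1) ∉ AS G f H) :
    ∃ Q, Q.Nodup ∧ (∀ x ∈ Q, x ∉ H ∧ ∀ i, f i ≠ x) ∧
    ((∃ p p' i n j, Seg f (AS G f H) p p' ∧ p < i ∧ i < n ∧ n < j ∧ j < p' ∧ f n ∈ M ∧
        Con G (f i) Q (f j)) ∨
      ∃ p p' q q' i j, Pr f c (AS G f H) p p' q q' ∧ p < i ∧ i < p' ∧ q < j ∧ j < q' ∧ f i ∉ M ∧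
        f j ∉ M ∧ Con G (f i) Q (f j)) := by
  obtain ⟨Q, h1, h2, h3⟩ := h.TL (Z := AS G f H ∪ M) subset_union_left (by
    intro z hz
    rcases mem_union.1 hz with hz | hz
    exacts [h.pos hz, hM z hz]) (by
    intro n hn hn1
    rw [mem_union] at hn hn1
    rcases hn with hn | hn <;> rcases hn1 with hn1 | hn1
    · exact not_att_succ h.hC h.hL h.hH (mem_AS.1 hn).2 (mem_AS.1 hn1).2
    · exact (hM1 _ hn1).2.2 (by rwa [add_sub_cancel_right])
    · exact (hM1 _ hn).1 hn1
    · exact (hM1 _ hn).2.1 hn1)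
  refine ⟨Q, h1, h2, ?_⟩
  rcases h3 with ⟨p, p', i, n, j, hs, a1, a2, a3, a4, a5, -, -, a6⟩ |
    ⟨p, p', q, q', i, j, hp, a1, a2, a3, a4, a5, a6, a7⟩
  · refine Or.inl ⟨p, p', i, n, j, hs, a1, a2, a3, a4, ?_, a6⟩
    rcases mem_union.1 a5 with a5 | a5
    · exact absurd a5 (hs.none n (by omega) (by omega))
    · exact a5
  · rw [mem_union, not_or] at a5 a6
    exact Or.inr ⟨p, p', q, q', i, j, hp, a1, a2, a3, a4, a5.2, a6.2, a7⟩

/-- Segments of lengths five and four: an edge to the middle vertex of the short one. Toughness is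
applied to the attachment vertices together with the two ends of this edge. -/
theorem FS.L542 (h : FS G δ c f H) {i i' j j' : ℤ} (hp : Pr f c (AS G f H) i i' j j')
    (k2 : H.card = 2) (hi : i' = i + 5) (hj : j' = j + 4)
    (ha : G.Adj (f (i + 2)) (f (j + 2))) : False := by
  classical
  have o := h.only hp (Or.inl ⟨k2, by omega⟩)
  have hq1 := hp.h1
  have hq2 := hp.h2
  have st : ∀ p q : ℤ, p + 1 = q ∨ q + 1 = p → G.Adj (f p) (f q) := fun p q => h.hC.step
  have h3c := h.hC.three
  have hM1 : ∀ n, f n ∈ ({f (i + 2), f (j + 2)} : Finset V) → f (n + 1) ∉ AS G f H ∧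
      f (n + 1) ∉ ({f (i + 2), f (j + 2)} : Finset V) ∧ f (n - 1) ∉ AS G f H := by
    intro n hn
    have hne : ∀ x y : ℤ, x < y → y < x + c → f x ≠ f y := fun x y h1 h2 e => by
      have := h.hC.eq_of_lt e (by omega) (by omega); omega
    simp only [mem_insert, mem_singleton, not_or] at hn ⊢
    rcases hn with hn | hn <;> rw [h.hC.cong hn 1, sub_eq_add_neg, h.hC.cong hn (-1)]
    · refine ⟨hp.hi.none _ (by omega) (by omega), ⟨?_, hne _ _ (by omega) (by omega)⟩,
        hp.hi.none _ (by omega) (by omega)⟩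
      exact (hne _ _ (by omega) (by omega)).symm
    · refine ⟨hp.hj.none _ (by omega) (by omega), ⟨?_, ?_⟩, hp.hj.none _ (by omega) (by omega)⟩
      · exact (hne _ _ (by omega) (by omega)).symm
      · exact (hne _ _ (by omega) (by omega)).symm
  obtain ⟨Q, b1, b2, b3⟩ := h.TLM {f (i + 2), f (j + 2)} (by
    intro v hv; simp only [mem_insert, mem_singleton] at hv
    rcases hv with rfl | rfl
    exacts [⟨_, rfl⟩, ⟨_, rfl⟩]) hM1
  obtain rfl : Q = [] := by
    cases Q with
    | nil => rfl
    | cons x Q =>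
      obtain ⟨n, hn⟩ := o.out x (b2 x (by simp)).1
      exact absurd hn ((b2 x (by simp)).2 n)
  simp only [con_nil, mem_insert, mem_singleton, not_or] at b3
  -- a chord over one of the two deleted vertices gives a long path; an edge between the two
  -- segments would end at a vertex other than the deleted ones
  rcases b3 with ⟨p, p', a, n, b, hs, c1, c2, c3, c4, hn, hc⟩ |
    ⟨p, p', q, q', a, b, hpq, c1, c2, c3, c4, hn, hm, hc⟩
  · rcases hn with hn | hn
    · obtain ⟨d1, d2, d3⟩ := hs.loc h.hC (by omega) (by omega) hp.hi (by omega) (by omega) hn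
      have ea := d3 (a - p)
      have eb := d3 (b - p)
      rw [show p + (a - p) = a by ring] at ea
      rw [show p + (b - p) = b by ring] at eb
      rw [ea, eb, show a - p = 1 by omega] at hc
      rcases (by omega : b - p = 3 ∨ b - p = 4) with e | e <;> rw [e] at hc
      · have hx := h.NLp hp (l := [i + 4, i + 3, i + 1, i + 2, j + 2, j + 3]) (by simp; try omega)
          (by simp; try omega) (e := f i') (e' := f j') (Or.inl rfl) (Or.inr rfl) (by
            simp only [List.map_cons, List.map_nil, con_cons, con_nil]
            refine ⟨?_, ?_, hc.symm, ?_, ha, ?_, ?_⟩ <;> exact st _ _ (by omega))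
        simp only [List.length_cons, List.length_nil] at hx
        omega
      · have hx := h.NLp hp (l := [j + 1, j + 2, i + 2, i + 3, i + 4, i + 1]) (by simp; try omega)
          (by simp; try omega) (e := f j) (e' := f i) (Or.inr rfl) (Or.inl rfl) (by
            simp only [List.map_cons, List.map_nil, con_cons, con_nil]
            refine ⟨?_, ?_, ha.symm, ?_, ?_, hc.symm, ?_⟩ <;> exact st _ _ (by omega))
        simp only [List.length_cons, List.length_nil] at hx
        omega
    · obtain ⟨d1, d2, d3⟩ := hs.loc h.hC (by omega) (by omega) hp.hj (by omega) (by omega) hn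
      have ea := d3 (a - p)
      have eb := d3 (b - p)
      rw [show p + (a - p) = a by ring] at ea
      rw [show p + (b - p) = b by ring] at eb
      rw [ea, eb, show a - p = 1 by omega, show b - p = 3 by omega] at hc
      have hx := h.NLp hp (l := [i + 4, i + 3, i + 2, j + 2, j + 1, j + 3]) (by simp; try omega)
        (by simp; try omega) (e := f i') (e' := f j') (Or.inl rfl) (Or.inr rfl) (by
          simp only [List.map_cons, List.map_nil, con_cons, con_nil]
          refine ⟨?_, ?_, ?_, ha, ?_, hc, ?_⟩ <;> exact st _ _ (by omega))
      simp only [List.length_cons, List.length_nil] at hx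
      omega
  · have hir := h.irr hpq c1 c2 c3 c4 hc
    have hir' := h.irr' hpq c1 c2 c3 c4 hc
    have key : ∀ x x' y y' r t, Pr f c (AS G f H) x x' y y' → x < r → r < x' → y < t → t < y' →
        G.Adj (f r) (f t) → f x = f i → f y = f j → f t = f (j + 2) := by
      intro x x' y y' r t hxy f1 f2 f3 f4 hc e1 e2
      have e3 := (hxy.hi.shift h.hC e1).unique hp.hi
      have e4 := (hxy.hj.shift h.hC e2).unique hp.hj
      have := h.types hxy f1 f2 f3 f4 hc
      have e5 := h.hC.cong e2 (t - y)
      rw [show y + (t - y) = t by ring] at e5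
      rw [e5]
      rcases (by omega : t - y = 1 ∨ t - y = 2 ∨ t - y = 3) with e | e | e
      · exact (h.L541 hxy k2 (by omega) (by omega) f1 f2 (by
          rwa [show t = y + 1 by omega] at hc)).elim
      · rw [e]
      · exact (h.L543 hxy k2 (by omega) (by omega) f1 f2 (by
          rwa [show t = y + 3 by omega] at hc)).elim
    have hne := hpq.ne h.hC
    by_cases e1 : f p = f i
    · by_cases e2 : f q = f j
      · exact hm.2 (key _ _ _ _ _ _ hpq c1 c2 c3 c4 hc e1 e2)
      · have := o.reg _ _ hpq.hj (fun e => hne (e1.trans e.symm)) e2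
        omega
    · by_cases e2 : f p = f j
      · by_cases e3 : f q = f i
        · refine hn.2 ?_
          rw [← h.hC.per a]
          exact key _ _ _ _ _ (a + c) (hpq.swap h.hC) c3 c4 (by omega) (by omega)
            (by rw [h.hC.per]; exact hc.symm) e3 (by rw [h.hC.per]; exact e2)
        · have := o.reg _ _ hpq.hj e3 (fun e => hne (e2.trans e.symm))
          omega
      · have := o.reg _ _ hpq.hi e1 e2
        omega

/-- Two segments joined by an edge have length four, and `H` has two vertices. -/
theorem FS.c44 (h : FS G δ c f H) {i i' j j' n m : ℤ} (hp : Pr f c (AS G f H) i i' j j')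
    (h1 : i < n) (h2 : n < i') (h3 : j < m) (h4 : m < j') (ha : G.Adj (f n) (f m)) :
    H.card = 2 ∧ i' = i + 4 ∧ j' = j + 4 ∧ (n - i) + (m - j) = 4 := by
  have hm := h.mir
  have mir : ∀ x x' y y', Pr f c (AS G f H) x x' y y' →
      Pr (fun n => f (-n)) c (AS G (fun n => f (-n)) H) (-x') (-x) (-y' + c) (-y + c) := by
    intro x x' y y' hx
    have h2 := hx.mir
    rw [← AS_mir (G := G)] at h2
    have h3 := (h2.swap hm.hC)
    exact h3
  have mper : ∀ x, f (-(x + c)) = f (-x) := fun x => by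
    rw [← h.hC.per (-(x + c))]; congr 1; ring
  have L54 : ∀ x x' y y' r t, Pr f c (AS G f H) x x' y y' → x < r → r < x' → y < t → t < y' →
      G.Adj (f r) (f t) → H.card = 2 → x' = x + 5 → y' = y + 4 → False := by
    intro x x' y y' r t hxy f1 f2 f3 f4 hc k2 e1 e2
    have := h.types hxy f1 f2 f3 f4 hc
    rcases (by omega : t = y + 1 ∨ t = y + 2 ∨ t = y + 3) with rfl | rfl | rfl
    · exact h.L541 hxy k2 e1 e2 f1 f2 hc
    · rcases (by omega : r = x + 2 ∨ r = x + 3) with rfl | rfl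
      · exact h.L542 hxy k2 e1 e2 hc
      · refine hm.L542 (mir _ _ _ _ hxy) k2 (by omega) (by omega) ?_
        rw [show -y' + (c : ℤ) + 2 = (-y' + 2) + c by ring, mper,
          show -(-x' + 2) = x + 3 by omega, show -(-y' + 2) = y + 2 by omega]
        exact hc
    · exact h.L543 hxy k2 e1 e2 f1 f2 hc
  rcases h.types hp h1 h2 h3 h4 ha with ⟨b1, b2, b3, b4, b5⟩ | ⟨b1, b2, b3, b4 | b4 | b4⟩
  · exfalso
    rcases (by omega : n - i ≤ 2 ∨ 3 ≤ n - i) with b6 | b6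
    · exact h.k3 hp b1 b2 b3 b4 (by omega) ha
    · have hp' := mir _ _ _ _ hp
      have hb2 : (AS G (fun n => f (-n)) H).card = 3 := by rw [AS_mir]; exact b2
      refine hm.k3 hp' b1 hb2 (by omega) (by omega) (n := -n) (m := -m + c) (by omega) ?_
      rw [mper, neg_neg, neg_neg]
      exact ha
  · exact ⟨b1, b4.1, b4.2, by omega⟩
  · exact (L54 _ _ _ _ _ _ hp h1 h2 h3 h4 ha b1 b4.1 b4.2).elim
  · exact (L54 _ _ _ _ _ (n + c) (hp.swap h.hC) h3 h4 (by omega) (by omega)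
      (by rw [h.hC.per]; exact ha.symm) b1 (by omega) (by omega)).elim
end

/-! ### Segments of length four -/

section
variable {G : SimpleGraph V} {c : ℕ} {f : ℤ → V} {H : Finset V} {δ : ℕ}
variable [Fintype V]

/-- Four different segments cannot all exceed the minimal length when `H` has two vertices. -/
theorem FS.bud4 (h : FS G δ c f H) (k2 : H.card = 2) {p1 q1 p2 q2 p3 q3 p4 q4 : ℤ}
    (s1 : Seg f (AS G f H) p1 q1) (s2 : Seg f (AS G f H) p2 q2) (s3 : Seg f (AS G f H) p3 q3)
    (s4 : Seg f (AS G f H) p4 q4) (l1 : p1 + 4 ≤ q1) (l2 : p2 + 4 ≤ q2) (l3 : p3 + 4 ≤ q3)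
    (l4 : p4 + 4 ≤ q4) (n12 : f p1 ≠ f p2) (n13 : f p1 ≠ f p3) (n14 : f p1 ≠ f p4)
    (n23 : f p2 ≠ f p3) (n24 : f p2 ≠ f p4) (n34 : f p3 ≠ f p4) : False := by
  classical
  obtain ⟨ex, e1, e2⟩ := h.budget
  have hb := e2 {f p1, f p2, f p3, f p4} ∅ (by
    intro x hx; simp only [mem_insert, mem_singleton] at hx
    rcases hx with rfl | rfl | rfl | rfl
    exacts [s1.m0, s2.m0, s3.m0, s4.m0]) (by simp)
  rw [sum_insert (by simp [n12, n13, n14]), sum_insert (by simp [n23, n24]), sum_pair n34, k2,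
    card_empty] at hb
  have := e1 _ _ s1
  have := e1 _ _ s2
  have := e1 _ _ s3
  have := e1 _ _ s4
  omega

/-- Three long segments exhaust the budget: none is longer than four, and nothing lies outside
the cycle and `H`. -/
theorem FS.bud3 (h : FS G δ c f H) (k2 : H.card = 2) {p1 q1 p2 q2 p3 q3 : ℤ}
    (s1 : Seg f (AS G f H) p1 q1) (s2 : Seg f (AS G f H) p2 q2) (s3 : Seg f (AS G f H) p3 q3)
    (l1 : p1 + 4 ≤ q1) (l2 : p2 + 4 ≤ q2) (l3 : p3 + 4 ≤ q3)
    (n12 : f p1 ≠ f p2) (n13 : f p1 ≠ f p3) (n23 : f p2 ≠ f p3) :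
    q3 = p3 + 4 ∧ ∀ v, v ∉ H → ∃ n, f n = v := by
  classical
  obtain ⟨ex, e1, e2⟩ := h.budget
  have hs : ({f p1, f p2, f p3} : Finset V) ⊆ AS G f H := by
    intro x hx; simp only [mem_insert, mem_singleton] at hx
    rcases hx with rfl | rfl | rfl
    exacts [s1.m0, s2.m0, s3.m0]
  have := e1 _ _ s1
  have := e1 _ _ s2
  have := e1 _ _ s3
  refine ⟨?_, fun v hv => ?_⟩
  · have hb := e2 _ ∅ hs (by simp)
    rw [sum_insert (by simp [n12, n13]), sum_pair n23, k2, card_empty] at hb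
    omega
  · by_contra hvC
    push Not at hvC
    have hb := e2 _ {v} hs (by
      intro x hx; rw [mem_singleton] at hx; subst hx; exact ⟨hv, hvC⟩)
    rw [sum_insert (by simp [n12, n13]), sum_pair n23, k2, card_singleton] at hb
    omega

/-- Two different long segments leave room for at most one vertex outside the cycle and `H`. -/
theorem FS.bud2 (h : FS G δ c f H) (k2 : H.card = 2) {p1 q1 p2 q2 : ℤ}
    (s1 : Seg f (AS G f H) p1 q1) (s2 : Seg f (AS G f H) p2 q2)
    (l1 : p1 + 4 ≤ q1) (l2 : p2 + 4 ≤ q2) (n12 : f p1 ≠ f p2) {v w : V} (hv : v ∉ H)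
    (hv' : ∀ n, f n ≠ v) (hw : w ∉ H) (hw' : ∀ n, f n ≠ w) : v = w := by
  classical
  by_contra hne
  obtain ⟨ex, e1, e2⟩ := h.budget
  have := e1 _ _ s1
  have := e1 _ _ s2
  have hb := e2 {f p1, f p2} {v, w} (by
    intro x hx; simp only [mem_insert, mem_singleton] at hx
    rcases hx with rfl | rfl
    exacts [s1.m0, s2.m0]) (by
    intro x hx; simp only [mem_insert, mem_singleton] at hx
    rcases hx with rfl | rfl
    exacts [⟨hv, hv'⟩, ⟨hw, hw'⟩])
  rw [sum_pair n12, k2, card_pair hne] at hb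
  omega

/-- All edges between two segments leave from a single interior vertex of the first one: two of
them with different ends there would give a path on at least five interior vertices, longer than
`FS.NL` permits. -/
theorem FS.uniq (h : FS G δ c f H) {i i' j j' a b a' b' : ℤ} (hp : Pr f c (AS G f H) i i' j j')
    (a1 : i < a) (a2 : a < b) (a3 : b < i') (a4 : j < a') (a5 : a' < j') (a6 : j < b')
    (a7 : b' < j')
    (ha : G.Adj (f a) (f a')) (hb : G.Adj (f b) (f b')) : False := by
  obtain ⟨k2, hi, hj, e1⟩ := h.c44 hp a1 (by omega) a4 a5 ha
  obtain ⟨-, -, -, e2⟩ := h.c44 hp (by omega) a3 a6 a7 hb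
  have hq1 := hp.h1
  have hq2 := hp.h2
  have st : ∀ p q : ℤ, p + 1 = q ∨ q + 1 = p → G.Adj (f p) (f q) := fun p q => h.hC.step
  rcases (by omega : a = i + 1 ∧ b = i + 2 ∨ a = i + 2 ∧ b = i + 3 ∨ a = i + 1 ∧ b = i + 3) with
    ⟨rfl, rfl⟩ | ⟨rfl, rfl⟩ | ⟨rfl, rfl⟩
  · obtain rfl : a' = j + 3 := by omega
    obtain rfl : b' = j + 2 := by omega
    have hx := h.NLp hp (l := [i + 3, i + 2, j + 2, j + 3, i + 1]) (by simp; try omega)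
      (by simp; try omega) (e := f i') (e' := f i) (Or.inl rfl) (Or.inl rfl) (by
        simp only [List.map_cons, List.map_nil, con_cons, con_nil]
        refine ⟨?_, ?_, hb, ?_, ha.symm, ?_⟩ <;> exact st _ _ (by omega))
    simp only [List.length_cons, List.length_nil] at hx
    omega
  · obtain rfl : a' = j + 2 := by omega
    obtain rfl : b' = j + 1 := by omega
    have hx := h.NLp hp (l := [i + 3, j + 1, j + 2, i + 2, i + 1]) (by simp; try omega)
      (by simp; try omega) (e := f i') (e' := f i) (Or.inl rfl) (Or.inl rfl) (by
        simp only [List.map_cons, List.map_nil, con_cons, con_nil]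
        refine ⟨?_, hb, ?_, ha.symm, ?_, ?_⟩ <;> exact st _ _ (by omega))
    simp only [List.length_cons, List.length_nil] at hx
    omega
  · obtain rfl : a' = j + 3 := by omega
    obtain rfl : b' = j + 1 := by omega
    have hx := h.NLp hp (l := [i + 3, j + 1, j + 2, j + 3, i + 1]) (by simp; try omega)
      (by simp; try omega) (e := f i') (e' := f i) (Or.inl rfl) (Or.inl rfl) (by
        simp only [List.map_cons, List.map_nil, con_cons, con_nil]
        refine ⟨?_, hb, ?_, ?_, ha.symm, ?_⟩ <;> exact st _ _ (by omega))
    simp only [List.length_cons, List.length_nil] at hx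
    omega

/-- Toughness yields two segments of length four and an edge from the first interior vertex of one
to the last interior vertex of the other; moreover `H` has two vertices. -/
theorem FS.ex13 (h : FS G δ c f H) : ∃ i j : ℤ, Pr f c (AS G f H) i (i + 4) j (j + 4) ∧
    H.card = 2 ∧ G.Adj (f (i + 1)) (f (j + 3)) := by
  classical
  by_contra hno
  have hno' : ∀ i i' j j' : ℤ, Pr f c (AS G f H) i i' j j' → i' = i + 4 → j' = j + 4 →
      H.card = 2 → ¬ G.Adj (f (i + 1)) (f (j + 3)) := by
    rintro i _ j _ hp rfl rfl k2 ha
    exact hno ⟨i, j, hp, k2, ha⟩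
  -- the middle vertices that are joined to the middle vertex of another segment of length four
  set M : Finset V := univ.filter fun v => ∃ p p' q q' : ℤ, Pr f c (AS G f H) p p' q q' ∧
    p' = p + 4 ∧ q' = q + 4 ∧ H.card = 2 ∧ f (p + 2) = v ∧ G.Adj (f (p + 2)) (f (q + 2)) with hMd
  have hMm : ∀ v, v ∈ M ↔ ∃ p p' q q' : ℤ, Pr f c (AS G f H) p p' q q' ∧ p' = p + 4 ∧
      q' = q + 4 ∧ H.card = 2 ∧ f (p + 2) = v ∧ G.Adj (f (p + 2)) (f (q + 2)) := by
    intro v; simp [hMd]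
  obtain ⟨Q, b1, b2, b3⟩ := h.TLM M (by
    intro v hv
    obtain ⟨p, -, -, -, -, -, -, -, e, -⟩ := (hMm v).1 hv
    exact ⟨_, e⟩) (by
    intro n hn
    obtain ⟨p, p', q, q', hp, rfl, -, -, e, -⟩ := (hMm _).1 hn
    rw [← h.hC.cong e 1, sub_eq_add_neg, ← h.hC.cong e (-1)]
    refine ⟨hp.hi.none _ (by omega) (by omega), fun hm => ?_, hp.hi.none _ (by omega) (by omega)⟩
    obtain ⟨r, r', s, s', hr, rfl, -, -, e', -⟩ := (hMm _).1 hm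
    have := (hr.hi.loc h.hC (by omega) (by omega) hp.hi (by omega) (by omega) e').1
    omega)
  rcases b3 with ⟨p, p', a, n, b, hs, c1, c2, c3, c4, hn, hc⟩ |
    ⟨p, p', q, q', a, b, hp, c1, c2, c3, c4, hn, hm, hc⟩
  · obtain ⟨i, i', j, j', hp, e1, e2, k2, e, ha⟩ := (hMm _).1 hn
    obtain ⟨d1, d2, d3⟩ := hs.loc h.hC (by omega) (by omega) hp.hi (by omega) (by omega) e.symm
    have ea := d3 (a - p)
    have eb := d3 (b - p)
    rw [show p + (a - p) = a by ring] at ea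
    rw [show p + (b - p) = b by ring] at eb
    rw [ea, eb, show a - p = 1 by omega, show b - p = 3 by omega] at hc
    have hq1 := hp.h1
    have hq2 := hp.h2
    have st : ∀ p q : ℤ, p + 1 = q ∨ q + 1 = p → G.Adj (f p) (f q) := fun p q => h.hC.step
    have hpos : ∀ m ∈ [j + 1, j + 2, i + 2, i + 3, i + 1], i < m ∧ m < i' ∨ j < m ∧ m < j' := by
      simp; omega
    have hnd : ([j + 1, j + 2, i + 2, i + 3, i + 1].map f).Nodup := by
      refine List.Nodup.map_on ?_ (by simp; omega)
      intro x hx y hy e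
      have := hpos x hx
      have := hpos y hy
      exact h.hC.eq_of_lt e (by omega) (by omega)
    have hQ : ∀ x ∈ Q, ∀ m, f m ≠ x := fun x hx => (b2 x hx).2
    have hcon : Con G (f j) ([f (j + 1), f (j + 2), f (i + 2)] ++ f (i + 3) ::
        (Q.reverse ++ f (i + 1) :: [])) (f i) := by
      refine Con.append ?_ (Con.append hc.rev ?_)
      · simp only [con_cons, con_nil]
        refine ⟨?_, ?_, ha.symm, ?_⟩ <;> exact st _ _ (by omega)
      · rw [con_nil]; exact st _ _ (by omega)
    have hx := h.NL hp.hi hp.hj hp.h1 hp.h2 ?_ ?_ (Or.inr rfl) (Or.inl rfl) hcon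
    · simp only [List.length_append, List.length_cons, List.length_nil] at hx
      omega
    · refine (List.Perm.nodup_iff (l₂ := Q ++ [j + 1, j + 2, i + 2, i + 3, i + 1].map f) ?_).2 ?_
      · simp only [List.map_cons, List.map_nil]
        classical
        rw [List.perm_iff_count]
        intro x
        simp only [List.count_append, List.count_cons, List.count_nil, List.count_reverse]
        omega
      · refine List.nodup_append'.2 ⟨b1, hnd, fun x hx hx' => ?_⟩
        obtain ⟨m, -, hm⟩ := List.mem_map.1 hx'
        exact hQ x hx m hm
    · intro x hx
      simp only [List.mem_append, List.mem_cons, List.mem_reverse, List.not_mem_nil, or_false] at hx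
      by_cases hxQ : x ∈ Q
      · exact Or.inl (b2 x hxQ)
      · refine Or.inr ?_
        rcases hx with (hx | hx | hx) | hx | hx | hx
        · exact ⟨_, hpos (j + 1) (by simp), hx.symm⟩
        · exact ⟨_, hpos (j + 2) (by simp), hx.symm⟩
        · exact ⟨_, hpos (i + 2) (by simp), hx.symm⟩
        · exact ⟨_, hpos (i + 3) (by simp), hx.symm⟩
        · exact absurd hx hxQ
        · exact ⟨_, hpos (i + 1) (by simp), hx.symm⟩
  · obtain ⟨rfl, -⟩ := h.cross hp.hi hp.hj hp.h1 hp.h2 c1 c2 c3 c4 hc b1 b2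
    rw [con_nil] at hc
    obtain ⟨k2, e1, e2, e3⟩ := h.c44 hp c1 c2 c3 c4 hc
    rcases (by omega : a = p + 1 ∨ a = p + 2 ∨ a = p + 3) with rfl | rfl | rfl
    · obtain rfl : b = q + 3 := by omega
      exact hno' _ _ _ _ hp e1 e2 k2 hc
    · obtain rfl : b = q + 2 := by omega
      exact hn ((hMm _).2 ⟨p, p', q, q', hp, e1, e2, k2, rfl, hc⟩)
    · obtain rfl : b = q + 1 := by omega
      refine hno' _ _ _ _ (hp.swap h.hC) e2 (by omega) k2 ?_
      rw [show p + c + 3 = p + 3 + c by ring, h.hC.per]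
      exact hc.symm

/-- Neighbours of an interior vertex of a segment of length four. -/
theorem FS.nb4 (h : FS G δ c f H) {i t : ℤ} (hs : Seg f (AS G f H) i (i + 4)) (h1 : 1 ≤ t)
    (h2 : t ≤ 3) {w : V} (hw : G.Adj (f (i + t)) w) : w ∈ AS G f H ∨
      (∃ u, 1 ≤ u ∧ u ≤ 3 ∧ u ≠ t ∧ f (i + u) = w) ∨
      (∃ q, Pr f c (AS G f H) i (i + 4) q (q + 4) ∧ f (q + (4 - t)) = w) ∨
      (w ∉ H ∧ ∀ m, f m ≠ w) := by
  rcases h.nbr hs (by omega) (by omega) hw with h3 | ⟨m, h3, h4, h5, rfl⟩ |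
    ⟨q, q', m, hq, h3, h4, rfl⟩ | h3
  · exact Or.inl h3
  · refine Or.inr (Or.inl ⟨m - i, by omega, by omega, by omega, by congr 1; ring⟩)
  · obtain ⟨-, -, rfl, e⟩ := h.c44 hq (by omega) (by omega) h3 h4 hw
    exact Or.inr (Or.inr (Or.inl ⟨q, hq, by congr 1; omega⟩))
  · exact Or.inr (Or.inr (Or.inr h3))

/-- A vertex off the cycle is not adjacent to two consecutive vertices of the longest cycle. -/
theorem FS.consec (h : FS G δ c f H) {o : V} (ho : ∀ m, f m ≠ o) {n : ℤ} (h1 : G.Adj o (f n))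
    (h2 : G.Adj o (f (n + 1))) : False := by
  have h3 := h.hC.three
  have := OA h.hC h.hL (a := n + 1) (b := n + c) (by omega) (by omega) (U := [o]) (by
    rw [h.hC.per]; simp only [con_cons, con_nil]; exact ⟨h1.symm, h2⟩) (by simp) (by
    intro m _ _ hm; rw [List.mem_singleton] at hm; exact ho m hm)
  simp only [List.length_cons, List.length_nil] at this
  omega

/-- The last interior vertex of a segment of length four has no neighbour outside the cycle and
`H`, when another segment has length four as well. -/
theorem FS.no_out (h : FS G δ c f H) {i j : ℤ} (hp : Pr f c (AS G f H) i (i + 4) j (j + 4))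
    (k2 : H.card = 2) {o : V} (ho : o ∉ H) (ho' : ∀ m, f m ≠ o) (ha : G.Adj (f (i + 3)) o) :
    False := by
  classical
  have hlt := h.seg_lt hp.hi
  have hN : ∀ w, G.Adj o w → w ∈ AS G f H ∨ w = f (i + 1) ∨ w = f (i + 3) := by
    intro w hw
    by_cases hwA : w ∈ AS G f H
    · exact Or.inl hwA
    by_cases hwC : ∃ m, f m = w
    · obtain ⟨m, rfl⟩ := hwC
      obtain ⟨p, p', hs, h1, h2⟩ := h.seg_at hwA
      by_cases e : f p = f i
      · have e2 := (hs.shift h.hC e).unique hp.hi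
        have e3 := h.hC.cong e (m - p)
        rw [show p + (m - p) = m by ring] at e3
        rw [e3] at hw ⊢
        rcases (by omega : m - p = 1 ∨ m - p = 2 ∨ m - p = 3) with e4 | e4 | e4 <;> rw [e4] at hw ⊢
        · exact Or.inr (Or.inl rfl)
        · exact (h.consec ho' hw (by rw [show i + 2 + 1 = i + 3 by ring]; exact ha.symm)).elim
        · exact Or.inr (Or.inr rfl)
      · obtain ⟨l, h3, h4, h5, h6⟩ := h.two_of hp.hi hs (Ne.symm e)
        have e3 := h.hC.cong h3 (m - p)
        rw [show p + (m - p) = m by ring] at e3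
        have := (h.cross hp.hi h4 h5 h6 (n := i + 3) (m := l + (m - p)) (by omega) (by omega)
          (by omega) (by omega) (Q := [o]) (by
            simp only [con_cons, con_nil]; rw [e3]; exact ⟨ha, hw⟩) (by simp) (by
            intro x hx; rw [List.mem_singleton] at hx; subst hx; exact ⟨ho, ho'⟩)).1
        simp at this
    · push Not at hwC
      have hwH : w ∉ H := fun hwH => ho (h.hH.closed w hwH o hw.symm ho')
      have := h.bud2 k2 hp.hi hp.hj (by omega) (by omega) (hp.ne h.hC) ho ho' hwH hwC
      subst this
      exact (G.loopless.irrefl _ hw).elim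
  have n4 : ¬ G.Adj o (f (i + 4)) := fun hb => h.consec ho' (n := i + 3) ha.symm (by
    rw [show i + 3 + 1 = i + 4 by ring]; exact hb)
  by_cases h1 : G.Adj o (f (i + 1))
  · have n0 : ¬ G.Adj o (f i) := fun hb => h.consec ho' hb h1
    have hne : f i ≠ f (i + 4) := fun e => by
      have := h.hC.eq_of_lt e (by omega) (by omega); omega
    have hd := h.dg (v := o) {f i, f (i + 4)} [f (i + 1), f (i + 3)] (by
      intro x hx; simp only [mem_insert, mem_singleton] at hx
      rcases hx with rfl | rfl
      exacts [hp.hi.m0, hp.hi.m1]) (by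
      intro x hx; simp only [mem_insert, mem_singleton] at hx
      rcases hx with rfl | rfl
      exacts [n0, n4]) (by
      intro w hw
      rcases hN w hw with h2 | h2 | h2
      exacts [Or.inl h2, Or.inr (by simp [h2]), Or.inr (by simp [h2])])
    rw [card_pair hne, k2] at hd
    simp only [List.length_cons, List.length_nil] at hd
    omega
  · have hd := h.dg (v := o) {f (i + 4)} [f (i + 3)] (by
      intro x hx; rw [mem_singleton] at hx; subst hx
      exact hp.hi.m1) (by
      intro x hx; rw [mem_singleton] at hx; subst hx
      exact n4) (by
      intro w hw
      rcases hN w hw with h2 | rfl | h2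
      exacts [Or.inl h2, (h1 hw).elim, Or.inr (by simp [h2])])
    rw [card_singleton, k2] at hd
    simp only [List.length_cons, List.length_nil] at hd
    omega

/-- No edge joins the first interior vertex of a segment of length four to the last interior
vertex of another one, unless the segments share the vertex `f i`. -/
theorem FS.E1 (h : FS G δ c f H) {i j : ℤ} (hp : Pr f c (AS G f H) i (i + 4) j (j + 4))
    (k2 : H.card = 2) (hne : j + 4 ≠ i + c) (ha : G.Adj (f (i + 1)) (f (j + 3))) : False := by
  classical
  have hq1 := hp.h1
  have hq2 := hp.h2
  have hij := hp.ne h.hC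
  have st : ∀ p q : ℤ, p + 1 = q ∨ q + 1 = p → G.Adj (f p) (f q) := fun p q => h.hC.step
  have hne' : f i ≠ f (j + 4) := fun e => by
    have := h.hC.eq_of_lt e (by omega) (by omega); omega
  have hsub : ({f i, f (j + 4)} : Finset V) ⊆ AS G f H := by
    intro x hx; simp only [mem_insert, mem_singleton] at hx
    rcases hx with rfl | rfl
    exacts [hp.hi.m0, hp.hj.m1]
  have g3 := (h.Qp hp (a := i + 3) (b := j + 1) (l := [i + 2, i + 1, j + 3, j + 2, j + 1])
    (by simp; try omega) (by simp; try omega) (by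
      simp only [List.map_cons, List.map_nil, tr_cons, tr_nil]
      refine ⟨?_, ?_, ha, ?_, ?_, trivial⟩ <;> exact st _ _ (by omega))
    (st _ _ (by omega)) (st _ _ (by omega))
    (by simp only [List.length_cons, List.length_nil]; omega)).1
  have hB3 : ∀ b ∈ ({f i, f (j + 4)} : Finset V), ¬ G.Adj (f (i + 3)) b := by
    intro x hx; simp only [mem_insert, mem_singleton] at hx
    exact (g3 x hx).1
  -- a cross edge at the other end leads to a third segment
  have hcr : ∀ t q, 2 ≤ t → t ≤ 3 → Pr f c (AS G f H) i (i + 4) q (q + 4) →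
      G.Adj (f (i + t)) (f (q + (4 - t))) → f q ≠ f j := by
    intro t q t1 t2 hq hw e
    have h1 := hq.h1
    have h2 := hq.h2
    obtain rfl : q = j := h.hC.eq_of_lt e (by omega) (by omega)
    exact h.uniq hp (a := i + 1) (b := i + t) (by omega) (by omega) (by omega) (by omega)
      (by omega) (by omega) (by omega) ha hw
  have hdg : ∀ T : List V, (∀ w, G.Adj (f (i + 3)) w → w ∈ AS G f H ∨ w ∈ T) → 3 ≤ T.length := by
    intro T hT
    have hd := h.dg _ T hsub hB3 hT
    rw [card_pair hne', k2] at hd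
    omega
  -- the degree of `f (i + 3)`, which misses two attachment vertices, forces an edge to another
  -- segment
  have h3 : ∃ q, Pr f c (AS G f H) i (i + 4) q (q + 4) ∧ G.Adj (f (i + 3)) (f (q + (4 - 3))) := by
    by_contra hno
    have := hdg [f (i + 1), f (i + 2)] (by
      intro w hw
      rcases h.nb4 hp.hi (by omega) le_rfl hw with h1 | ⟨u, h1, h2, h4, rfl⟩ | ⟨q, hq, rfl⟩ | h1
      · exact Or.inl h1
      · rcases (by omega : u = 1 ∨ u = 2) with rfl | rfl <;> simp
      · exact absurd ⟨q, hq, hw⟩ hno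
      · exact (h.no_out hp k2 h1.1 h1.2 hw).elim)
    simp at this
  obtain ⟨q, hq, hqa⟩ := h3
  have hqj := hcr 3 q (by omega) le_rfl hq hqa
  have hiq := hq.ne h.hC
  have huq : ∀ r t, 2 ≤ t → t ≤ 3 → Pr f c (AS G f H) i (i + 4) r (r + 4) →
      G.Adj (f (i + t)) (f (r + (4 - t))) → r = q := by
    intro r t t1 t2 hr hw
    have hrj := hcr t r t1 t2 hr hw
    by_cases e : f r = f q
    · have h1 := hq.h1
      have h2 := hq.h2
      have h4 := hr.h1
      have h5 := hr.h2
      exact h.hC.eq_of_lt e (by omega) (by omega)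
    · exact (h.bud4 k2 hp.hi hp.hj hq.hj hr.hj le_rfl le_rfl le_rfl le_rfl hij hiq (hr.ne h.hC)
        hqj.symm hrj.symm (Ne.symm e)).elim
  -- the same count forces the chord
  have h13 : G.Adj (f (i + 1)) (f (i + 3)) := by
    by_contra hno
    have := hdg [f (i + 2), f (q + (4 - 3))] (by
      intro w hw
      rcases h.nb4 hp.hi (by omega) le_rfl hw with h1 | ⟨u, h1, h2, h4, rfl⟩ | ⟨r, hr, rfl⟩ | h1
      · exact Or.inl h1
      · rcases (by omega : u = 1 ∨ u = 2) with rfl | rfl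
        · exact absurd hw.symm hno
        · simp
      · rw [huq r 3 (by omega) le_rfl hr hw]; simp
      · exact (h.no_out hp k2 h1.1 h1.2 hw).elim)
    simp at this
  have hB2 : ∀ b ∈ ({f i, f (j + 4)} : Finset V), ¬ G.Adj (f (i + 2)) b := by
    intro x hx hadj; simp only [mem_insert, mem_singleton] at hx
    have hx := h.NLp hp (l := [j + 1, j + 2, j + 3, i + 1, i + 3, i + 2]) (by simp; try omega)
      (by simp; try omega) (e := f j) (e' := x) (Or.inr rfl) hx (by
        simp only [List.map_cons, List.map_nil, con_cons, con_nil]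
        refine ⟨?_, ?_, ?_, ha.symm, h13, ?_, hadj⟩ <;> exact st _ _ (by omega))
    simp only [List.length_cons, List.length_nil] at hx
    omega
  -- now the degree of `f (i + 2)` is too small
  have hd := h.dg _ [f (i + 1), f (i + 3)] hsub hB2 (by
    intro w hw
    rcases h.nb4 hp.hi (by omega) (by omega) hw with h1 | ⟨u, h1, h2, h4, rfl⟩ | ⟨r, hr, rfl⟩ | h1
    · exact Or.inl h1
    · rcases (by omega : u = 1 ∨ u = 3) with rfl | rfl <;> simp
    · have := huq r 2 le_rfl (by omega) hr hw
      subst this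
      have h2 := hr.h1
      exact (h.uniq hr (a := i + 2) (b := i + 3) (by omega) (by omega) (by omega) (by omega)
        (by omega) (by omega) (by omega) hw hqa).elim
    · obtain ⟨m, hm⟩ := (h.bud3 k2 hp.hi hp.hj hq.hj le_rfl le_rfl le_rfl hij hiq hqj.symm).2 w h1.1
      exact absurd hm (h1.2 m))
  rw [card_pair hne', k2] at hd
  simp only [List.length_cons, List.length_nil] at hd
  omega
end

/-! ### The twelve-cycle -/

section
variable {G : SimpleGraph V} {c : ℕ} {f : ℤ → V} {H : Finset V} {δ : ℕ}

theorem AS_rot [Fintype V] (k : ℤ) : AS G (fun i => f (i + k)) H = AS G f H := by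
  ext v
  rw [mem_AS, mem_AS]
  refine and_congr_left fun _ => ⟨?_, ?_⟩
  · rintro ⟨i, rfl⟩; exact ⟨_, rfl⟩
  · rintro ⟨i, rfl⟩; exact ⟨i - k, by simp⟩

variable [Fintype V]

theorem FS.rot (h : FS G δ c f H) (k : ℤ) : FS G δ c (fun i => f (i + k)) H :=
  ⟨h.hG, h.hC.rot k, h.hL, h.hH.rot k, h.k2, h.mx⟩

theorem Seg.rot {A : Finset V} {i i' : ℤ} (h : Seg f A i i') (k : ℤ) :
    Seg (fun n => f (n + k)) A (i - k) (i' - k) :=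
  ⟨by have := h.lt; omega, by simpa using h.m0, by simpa using h.m1,
    fun n h1 h2 => h.none _ (by omega) (by omega)⟩

/-- The last configuration: `H` has two vertices, the longest cycle has length twelve and meets
the attachment set exactly at `f 0`, `f 4` and `f 8`, and there are no further vertices. -/
structure Tw (G : SimpleGraph V) (δ : ℕ) (f : ℤ → V) (H : Finset V) : Prop where
  h : FS G δ 12 f H
  k2 : H.card = 2
  s1 : Seg f (AS G f H) 0 4
  s2 : Seg f (AS G f H) 4 8
  s3 : Seg f (AS G f H) 8 12
  out : ∀ v, v ∉ H → ∃ n, f n = v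

theorem Tw.per (T : Tw G δ f H) (n : ℤ) : f (n + 12) = f n := T.h.hC.per n

theorem Tw.rot (T : Tw G δ f H) : Tw G δ (fun n => f (n + 4)) H := by
  refine ⟨T.h.rot 4, T.k2, ?_, ?_, ?_, fun v hv => ?_⟩
  · rw [AS_rot]; exact T.s2.rot 4
  · rw [AS_rot]; exact T.s3.rot 4
  · rw [AS_rot]; exact (T.s1.add T.h.hC).rot 4
  · obtain ⟨n, rfl⟩ := T.out v hv
    exact ⟨n - 4, by simp⟩

theorem Tw.mir (T : Tw G δ f H) : Tw G δ (fun n => f (-n)) H := by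
  have hm := T.h.mir
  refine ⟨hm, T.k2, ?_, ?_, ?_, fun v hv => ?_⟩
  · rw [AS_mir]; exact T.s3.mir.add hm.hC
  · rw [AS_mir]; exact T.s2.mir.add hm.hC
  · rw [AS_mir]; exact T.s1.mir.add hm.hC
  · obtain ⟨n, rfl⟩ := T.out v hv
    exact ⟨-n, by simp⟩

theorem Tw.p12 (T : Tw G δ f H) : Pr f 12 (AS G f H) 0 4 4 8 := ⟨T.s1, T.s2, by omega, by omega⟩

theorem Tw.p13 (T : Tw G δ f H) : Pr f 12 (AS G f H) 0 4 8 12 := ⟨T.s1, T.s3, by omega, by omega⟩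

/-- Neighbours of an interior vertex of the first segment. -/
theorem Tw.nb (T : Tw G δ f H) {t : ℤ} (h1 : 1 ≤ t) (h2 : t ≤ 3) {w : V} (hw : G.Adj (f t) w) :
    w ∈ AS G f H ∨ (∃ u : ℤ, 1 ≤ u ∧ u ≤ 3 ∧ u ≠ t ∧ f u = w) ∨ f (8 - t) = w ∨ f (12 - t) = w := by
  have hs : Seg f (AS G f H) 0 (0 + 4) := T.s1
  rcases T.h.nb4 hs (t := t) h1 h2 (by rwa [zero_add]) with h3 | ⟨u, h3, h4, h5, rfl⟩ |
    ⟨q, hq, rfl⟩ | h3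
  · exact Or.inl h3
  · exact Or.inr (Or.inl ⟨u, h3, h4, h5, by rw [zero_add]⟩)
  · have a1 := hq.h1
    have a2 := hq.h2
    have b3 : ¬ (4 < q ∧ q < 8) := fun hb => T.s2.none q hb.1 hb.2 hq.hj.m0
    have b4 : ¬ (8 < q ∧ q < 12) := fun hb => T.s3.none q hb.1 hb.2 hq.hj.m0
    rcases (by omega : q = 4 ∨ q = 8) with rfl | rfl
    · exact Or.inr (Or.inr (Or.inl (by congr 1; omega)))
    · exact Or.inr (Or.inr (Or.inr (by congr 1; omega)))
  · obtain ⟨n, hn⟩ := T.out w h3.1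
    exact absurd hn (h3.2 n)

theorem Tw.memA (T : Tw G δ f H) {w : V} (hw : w ∈ AS G f H) : w = f 0 ∨ w = f 4 ∨ w = f 8 := by
  obtain ⟨m, rfl⟩ := T.h.pos hw
  obtain ⟨n, h1, h2, h3⟩ := T.h.hC.win m 0
  rw [← h3] at hw ⊢
  have b1 : ¬ (0 < n ∧ n < 4) := fun hb => T.s1.none n hb.1 hb.2 hw
  have b2 : ¬ (4 < n ∧ n < 8) := fun hb => T.s2.none n hb.1 hb.2 hw
  have b3 : ¬ (8 < n ∧ n < 12) := fun hb => T.s3.none n hb.1 hb.2 hw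
  rcases (by omega : n = 0 ∨ n = 4 ∨ n = 8) with rfl | rfl | rfl <;> simp

theorem Tw.ne (T : Tw G δ f H) {a b : ℤ} (h1 : a < b) (h2 : b < a + 12) : f a ≠ f b := fun e => by
  have := T.h.hC.eq_of_lt e (by omega) (by omega)
  omega

/-- Consequences of an edge joining the two neighbours of `f 0` on the cycle. -/
theorem Tw.around (T : Tw G δ f H) (ha : G.Adj (f 1) (f 11)) :
    ¬ G.Adj (f 5) (f 0) ∧ ¬ G.Adj (f 6) (f 0) ∧ ¬ G.Adj (f 7) (f 0) ∧ ¬ G.Adj (f 3) (f 0) ∧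
    ¬ G.Adj (f 9) (f 0) ∧ (G.Adj (f 1) (f 3) → ¬ G.Adj (f 2) (f 0)) ∧
    (G.Adj (f 9) (f 11) → ¬ G.Adj (f 10) (f 0)) := by
  have hk := T.k2
  have st : ∀ p q : ℤ, p + 1 = q ∨ q + 1 = p → G.Adj (f p) (f q) := fun p q => T.h.hC.step
  have e12 : f 12 = f 0 := T.per 0
  have hinj : ∀ l : List ℤ, l.Nodup → (∀ n ∈ l, 0 < n ∧ n < 12) → (l.map f).Nodup := by
    intro l hl hl2
    refine hl.map_on ?_
    intro x hx y hy e
    have := hl2 x hx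
    have := hl2 y hy
    exact T.h.hC.eq_of_lt e (by omega) (by omega)
  have hR : Con G (f 8) ([9, 10, 11, 1, 2, 3].map f) (f 4) := by
    simp only [List.map_cons, List.map_nil, con_cons, con_nil]
    refine ⟨?_, ?_, ?_, ha.symm, ?_, ?_, ?_⟩ <;> exact st _ _ (by omega)
  have hN4 : ∀ l : List ℤ, l.Nodup → (∀ n ∈ l, 4 < n ∧ n < 8) → 2 ≤ l.length →
      Con G (f 0) (l.map f) (f 8) ∨ Con G (f 4) (l.map f) (f 0) → False := by
    intro l hl hl2 hl3 hc
    have hs3 : Seg f (AS G f H) 8 (0 + (12 : ℕ)) := T.s3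
    have := T.h.N4 T.s1 hs3 T.s2 le_rfl le_rfl (hinj _ (by decide) (by decide)) (by
      intro x hx
      obtain ⟨n, hn, rfl⟩ := List.mem_map.1 hx
      refine Or.inr ⟨n, ?_, rfl⟩
      simp at hn
      omega) hR (K := l.map f) (hinj l hl (fun n hn => by have := hl2 n hn; omega)) (by
      intro x hx
      obtain ⟨n, hn, rfl⟩ := List.mem_map.1 hx
      exact ⟨n, (hl2 n hn).1, (hl2 n hn).2, rfl⟩) hc
    simp only [List.length_map, List.length_cons, List.length_nil] at this
    omega
  have g3 := (T.h.Qp T.p13 (a := 3) (b := 9) (l := [2, 1, 11, 10, 9])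
    (by decide) (by decide) (by
      simp only [List.map_cons, List.map_nil, tr_cons, tr_nil]
      refine ⟨?_, ?_, ha, ?_, ?_, trivial⟩ <;> exact st _ _ (by omega))
    (st _ _ (by omega)) (st _ _ (by omega))
    (by simp only [List.length_cons, List.length_nil]; omega)).1 (f 0) (Or.inl rfl)
  refine ⟨fun hb => ?_, fun hb => ?_, fun hb => ?_, g3.1, g3.2, fun hc hb => ?_, fun hc hb => ?_⟩
  · refine hN4 [5, 6, 7] (by decide) (by decide) (by decide) (Or.inl ?_)
    simp only [List.map_cons, List.map_nil, con_cons, con_nil]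
    refine ⟨hb.symm, ?_, ?_, ?_⟩ <;> exact st _ _ (by omega)
  · refine hN4 [6, 7] (by decide) (by decide) (by decide) (Or.inl ?_)
    simp only [List.map_cons, List.map_nil, con_cons, con_nil]
    refine ⟨hb.symm, ?_, ?_⟩ <;> exact st _ _ (by omega)
  · refine hN4 [5, 6, 7] (by decide) (by decide) (by decide) (Or.inr ?_)
    simp only [List.map_cons, List.map_nil, con_cons, con_nil]
    refine ⟨?_, ?_, ?_, hb⟩ <;> exact st _ _ (by omega)
  · have hx := T.h.NLp T.p13 (l := [9, 10, 11, 1, 3, 2]) (by decide) (by decide)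
      (e := f 8) (e' := f 0) (Or.inr rfl) (Or.inl rfl) (by
        simp only [List.map_cons, List.map_nil, con_cons, con_nil]
        refine ⟨?_, ?_, ?_, ha.symm, hc, ?_, hb⟩ <;> exact st _ _ (by omega))
    simp only [List.length_cons, List.length_nil] at hx
    omega
  · have hx := T.h.NLp T.p13 (l := [3, 2, 1, 11, 9, 10]) (by decide) (by decide)
      (e := f 4) (e' := f 0) (Or.inl rfl) (Or.inl rfl) (by
        simp only [List.map_cons, List.map_nil, con_cons, con_nil]
        refine ⟨?_, ?_, ?_, ha, hc.symm, ?_, hb⟩ <;> exact st _ _ (by omega))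
    simp only [List.length_cons, List.length_nil] at hx
    omega

/-- Once `f 1` and `f 11` are adjacent, the interiors of the first and second segments are not
joined by an edge. -/
theorem Tw.edge (T : Tw G δ f H) (ha : G.Adj (f 1) (f 11))
    (hb : G.Adj (f 5) (f 3) ∨ G.Adj (f 6) (f 2) ∨ G.Adj (f 7) (f 1)) : False := by
  classical
  have hk := T.k2
  have st : ∀ p q : ℤ, p + 1 = q ∨ q + 1 = p → G.Adj (f p) (f q) := fun p q => T.h.hC.step
  obtain ⟨a5, a6, a7, a3, a9, a2, a10⟩ := T.around ha
  have u9 : ¬ G.Adj (f 3) (f 9) := fun hc =>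
    T.h.uniq T.p13 (a := 1) (b := 3) (a' := 11) (b' := 9) (by omega) (by omega) (by omega)
      (by omega) (by omega) (by omega) (by omega) ha hc
  -- in the first case the cycle neighbours of each of `f 0`, `f 4`, `f 8` are adjacent, and the
  -- degree of `f 2` is too small
  rcases hb with hb | hb | hb
  · have T4 := T.rot
    have T8 := T4.rot
    have p13 : f 13 = f 1 := T.per 1
    have p14 : f 14 = f 2 := T.per 2
    have p15 : f 15 = f 3 := T.per 3
    obtain ⟨-, -, -, c7, c1, c6, c2⟩ := T4.around (by
      norm_num only; rw [p15]; exact hb)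
    norm_num only at c7 c1 c6 c2
    rw [p13] at c1
    rw [p13, p14, p15] at c2
    have u1 : ¬ G.Adj (f 1) (f 7) := fun hc =>
      T.h.uniq T.p12 (a := 1) (b := 3) (a' := 7) (b' := 5) (by omega) (by omega) (by omega)
        (by omega) (by omega) (by omega) (by omega) hc hb.symm
    have u2 : ¬ G.Adj (f 2) (f 6) := fun hc =>
      T.h.uniq T.p12 (a := 2) (b := 3) (a' := 6) (b' := 5) (by omega) (by omega) (by omega)
        (by omega) (by omega) (by omega) (by omega) hc hb.symm
    have u10 : ¬ G.Adj (f 2) (f 10) := fun hc =>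
      T.h.uniq T.p13 (a := 1) (b := 2) (a' := 11) (b' := 10) (by omega) (by omega) (by omega)
        (by omega) (by omega) (by omega) (by omega) ha hc
    have h79 : G.Adj (f 7) (f 9) := by
      by_contra hno
      have hd := T.h.dg (v := f 7) {f 0, f 4} [f 5, f 6] (by
        intro x hx; simp only [mem_insert, mem_singleton] at hx
        rcases hx with rfl | rfl
        exacts [T.s1.m0, T.s1.m1]) (by
        intro x hx; simp only [mem_insert, mem_singleton] at hx
        rcases hx with rfl | rfl
        exacts [a7, c7]) (by
        intro w hw
        have hn := T4.nb (t := 3) (by omega) le_rfl (w := w) hw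
        rw [AS_rot] at hn
        rcases hn with h1 | ⟨u, h1, h2, h4, rfl⟩ | h1 | h1
        · exact Or.inl h1
        · rcases (by omega : u = 1 ∨ u = 2) with rfl | rfl <;> norm_num
        · norm_num only at h1; subst h1; exact absurd hw hno
        · norm_num only at h1; rw [p13] at h1; subst h1; exact absurd hw.symm u1)
      rw [card_pair (T.ne (by omega) (by omega)), hk] at hd
      simp only [List.length_cons, List.length_nil] at hd
      omega
    obtain ⟨d1, d2, d3, -⟩ := T8.around (by
      norm_num only; rw [show f 19 = f 7 from T.per 7]; exact h79.symm)
    norm_num only at d1 d2 d3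
    rw [p13] at d1
    rw [p14] at d2
    rw [p15] at d3
    have h13 : G.Adj (f 1) (f 3) := by
      by_contra hno
      have hd := T.h.dg (v := f 3) {f 0, f 8} [f 2, f 5] (by
        intro x hx; simp only [mem_insert, mem_singleton] at hx
        rcases hx with rfl | rfl
        exacts [T.s1.m0, T.s2.m1]) (by
        intro x hx; simp only [mem_insert, mem_singleton] at hx
        rcases hx with rfl | rfl
        exacts [a3, d3]) (by
        intro w hw
        rcases T.nb (by omega) le_rfl hw with h1 | ⟨u, h1, h2, h4, rfl⟩ | h1 | h1
        · exact Or.inl h1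
        · rcases (by omega : u = 1 ∨ u = 2) with rfl | rfl
          · exact absurd hw.symm hno
          · simp
        · norm_num only at h1; simp [h1]
        · norm_num only at h1; subst h1; exact absurd hw u9)
      rw [card_pair (T.ne (by omega) (by omega)), hk] at hd
      simp only [List.length_cons, List.length_nil] at hd
      omega
    have hd := T.h.dg (v := f 2) {f 0, f 4, f 8} [f 1, f 3] (by
      intro x hx; simp only [mem_insert, mem_singleton] at hx
      rcases hx with rfl | rfl | rfl
      exacts [T.s1.m0, T.s1.m1, T.s2.m1]) (by
      intro x hx; simp only [mem_insert, mem_singleton] at hx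
      rcases hx with rfl | rfl | rfl
      exacts [a2 h13, c2 h13, d2]) (by
      intro w hw
      rcases T.nb (by omega) (by omega) hw with h1 | ⟨u, h1, h2, h4, rfl⟩ | h1 | h1
      · exact Or.inl h1
      · rcases (by omega : u = 1 ∨ u = 3) with rfl | rfl <;> simp
      · norm_num only at h1; subst h1; exact absurd hw u2
      · norm_num only at h1; subst h1; exact absurd hw u10)
    rw [card_eq_three.2 ⟨_, _, _, T.ne (by omega) (by omega), T.ne (by omega) (by omega),
      T.ne (by omega) (by omega), rfl⟩, hk] at hd
    simp only [List.length_cons, List.length_nil] at hd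
    omega
  · have h13 : ¬ G.Adj (f 1) (f 3) := fun hc => by
      have hx := T.h.NLp T.p12 (l := [5, 6, 2, 3, 1]) (by decide) (by decide)
        (e := f 4) (e' := f 0) (Or.inl rfl) (Or.inl rfl) (by
          simp only [List.map_cons, List.map_nil, con_cons, con_nil]
          refine ⟨?_, ?_, hb, ?_, hc.symm, ?_⟩ <;> exact st _ _ (by omega))
      simp only [List.length_cons, List.length_nil] at hx
      omega
    have hd := T.h.dg (v := f 3) {f 0} [f 2] (by
      intro x hx; rw [mem_singleton] at hx; subst hx; exact T.s1.m0) (by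
      intro x hx; rw [mem_singleton] at hx; subst hx; exact a3) (by
      intro w hw
      rcases T.nb (by omega) le_rfl hw with h1 | ⟨u, h1, h2, h4, rfl⟩ | h1 | h1
      · exact Or.inl h1
      · rcases (by omega : u = 1 ∨ u = 2) with rfl | rfl
        · exact absurd hw.symm h13
        · simp
      · norm_num only at h1; subst h1
        exact (T.h.uniq T.p12 (a := 2) (b := 3) (a' := 6) (b' := 5) (by omega) (by omega)
          (by omega) (by omega) (by omega) (by omega) (by omega) hb.symm hw).elim
      · norm_num only at h1; subst h1; exact absurd hw u9)
    rw [card_singleton, hk] at hd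
    simp only [List.length_cons, List.length_nil] at hd
    omega
  · have hp : Pr f (12 : ℕ) (AS G f H) 0 (0 + 4) 4 (4 + 4) := T.p12
    exact T.h.E1 hp hk (by norm_num) (by norm_num; exact hb.symm)

/-- The twelve-cycle is impossible: its vertices `f 4` and `f 8` would separate `f 5`, `f 6`, `f
7` from the rest of the graph. -/
theorem Tw.false (T : Tw G δ f H) (ha : G.Adj (f 1) (f 11)) : False := by
  classical
  obtain ⟨a5, a6, a7, -⟩ := T.around ha
  have T4 := T.rot
  have p12 : f 12 = f 0 := T.per 0
  have p13 : f 13 = f 1 := T.per 1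
  have p14 : f 14 = f 2 := T.per 2
  have p15 : f 15 = f 3 := T.per 3
  by_cases hL : G.Adj (f 5) (f 3) ∨ G.Adj (f 6) (f 2) ∨ G.Adj (f 7) (f 1)
  · exact T.edge ha hL
  by_cases hR : G.Adj (f 7) (f 9) ∨ G.Adj (f 6) (f 10) ∨ G.Adj (f 5) (f 11)
  · have e : ∀ n : ℤ, f (-n) = f (12 - n) := fun n => by
      rw [← T.per (-n)]; congr 1; ring
    refine T.mir.edge ?_ ?_
    · simp only [e]; norm_num only; exact ha.symm
    · simp only [e]; norm_num only; exact hR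
  push Not at hL hR
  refine T.h.hG.cut {f 4, f 8} {v | v = f 5 ∨ v = f 6 ∨ v = f 7} (f 5) (f 0) card_le_two
    (Or.inl rfl) ?_ ?_ ?_ ?_
  · simp only [mem_insert, mem_singleton, not_or]
    exact ⟨(T.ne (by omega) (by omega)).symm, T.ne (by omega) (by omega)⟩
  · simp only [Set.mem_ofPred_eq, not_or]
    exact ⟨T.ne (by omega) (by omega), T.ne (by omega) (by omega), T.ne (by omega) (by omega)⟩
  · simp only [mem_insert, mem_singleton, not_or]
    exact ⟨T.ne (by omega) (by omega), T.ne (by omega) (by omega)⟩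
  · intro y hy z hz
    simp only [Set.mem_ofPred_eq, mem_insert, mem_singleton] at hy ⊢
    have hn : ∀ t : ℤ, 1 ≤ t → t ≤ 3 → f (t + 4) = y → f (12 - t) ≠ z → f (16 - t) ≠ z →
        f 0 ≠ z → (z = f 5 ∨ z = f 6 ∨ z = f 7) ∨ z = f 4 ∨ z = f 8 := by
      intro t t1 t2 e h1 h2 h0
      subst e
      have hn := T4.nb t1 t2 hz
      rw [AS_rot] at hn
      rcases hn with h3 | ⟨u, h3, h4, h5, rfl⟩ | h3 | h3
      · rcases T.memA h3 with h4 | h4 | h4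
        exacts [absurd h4.symm h0, Or.inr (Or.inl h4), Or.inr (Or.inr h4)]
      · left
        rcases (by omega : u = 1 ∨ u = 2 ∨ u = 3) with rfl | rfl | rfl <;> norm_num
      · exact absurd (by rw [← h3]; congr 1; ring) h1
      · exact absurd (by rw [← h3]; congr 1; ring) h2
    rcases hy with rfl | rfl | rfl
    · refine hn 1 (by omega) (by omega) (by norm_num) ?_ ?_ ?_ <;> rintro rfl
      · exact hR.2.2 hz
      · norm_num only at hz; rw [p15] at hz; exact hL.1 hz
      · exact a5 hz
    · refine hn 2 (by omega) (by omega) (by norm_num) ?_ ?_ ?_ <;> rintro rfl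
      · exact hR.2.1 hz
      · norm_num only at hz; rw [p14] at hz; exact hL.2.1 hz
      · exact a6 hz
    · refine hn 3 (by omega) (by omega) (by norm_num) ?_ ?_ ?_ <;> rintro rfl
      · exact hR.1 hz
      · norm_num only at hz; rw [p13] at hz; exact hL.2.2 hz
      · exact a7 hz

/-- A component of the complement of a longest cycle cannot have two or more vertices. -/
theorem FS.false (h : FS G δ c f H) : False := by
  obtain ⟨i, j, hp, k2, ha⟩ := h.ex13
  have hq1 := hp.h1
  have hq2 := hp.h2
  by_cases hne : j + 4 ≠ i + c
  · exact h.E1 hp k2 hne ha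
  -- the segments share the vertex `f i`; by the budget there is exactly one more segment
  push Not at hne
  have st : ∀ p q : ℤ, p + 1 = q ∨ q + 1 = p → G.Adj (f p) (f q) := fun p q => h.hC.step
  have hij := hp.ne h.hC
  have hp' : Pr f c (AS G f H) i (i + 4) j (i + c) := by rw [← hne]; exact hp
  have hreg := (h.Qp hp' (a := i + 3) (b := j + 1) (l := [i + 2, i + 1, j + 3, j + 2, j + 1])
    (by simp; try omega) (by simp; try omega) (by
      simp only [List.map_cons, List.map_nil, tr_cons, tr_nil]
      refine ⟨?_, ?_, ha, ?_, ?_, trivial⟩ <;> exact st _ _ (by omega))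
    (st _ _ (by omega)) (st _ _ (by omega))
    (by simp only [List.length_cons, List.length_nil]; omega)).2 rfl
  have hlong : ∀ m m', Seg f (AS G f H) m m' → i + 4 ≤ m → m' ≤ j → m + 4 ≤ m' := by
    intro m m' hm h1 h2
    have := hreg m m' hm h1 h2
    have := h.seg_len hm
    omega
  have hne2 : ∀ x y : ℤ, i ≤ x → x < y → y < i + c → f x ≠ f y := fun x y _ h1 h2 e => by
    have := h.hC.eq_of_lt e (by omega) (by omega)
    omega
  obtain ⟨m0, m0', hm0, b1, b2⟩ := h.third hp'
  have hm0l := hm0.lt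
  obtain ⟨m, hm⟩ := h.seg_next hp.hi.m1
  have hml := hm.lt
  have hmj : m ≤ j := by
    by_contra hlt
    exact hm.none j (by omega) (by omega) hp.hj.m0
  have hl := hlong _ _ hm le_rfl hmj
  obtain ⟨e1, hout⟩ := h.bud3 k2 hp.hi hp.hj hm le_rfl le_rfl hl hij
    (hne2 _ _ le_rfl (by omega) (by omega)) (hne2 _ _ (by omega) (by omega) (by omega)).symm
  have e2 : m = j := by
    by_contra hmn
    obtain ⟨r, hr⟩ := h.seg_next hm.m1
    have hrj : r ≤ j := by
      by_contra hlt
      exact hr.none j (by omega) (by omega) hp.hj.m0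
    exact h.bud4 k2 hp.hi hp.hj hm hr le_rfl le_rfl hl (hlong _ _ hr (by omega) hrj) hij
      (hne2 _ _ le_rfl (by omega) (by omega)) (hne2 _ _ le_rfl (by omega) (by omega))
      (hne2 _ _ (by omega) (by omega) (by omega)).symm
      (hne2 _ _ (by omega) (by omega) (by omega)).symm
      (hne2 _ _ (by omega) (by omega) (by omega))
  obtain rfl : j = i + 8 := by omega
  obtain rfl : c = 12 := by omega
  subst e2
  have T : Tw G δ (fun n => f (n + i)) H := by
    refine ⟨h.rot i, k2, ?_, ?_, ?_, fun v hv => ?_⟩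
    · rw [AS_rot]
      have := hp.hi.rot i
      rwa [sub_self, add_sub_cancel_left] at this
    · rw [AS_rot]
      have := hm.rot i
      rwa [add_sub_cancel_left, add_sub_cancel_left] at this
    · rw [AS_rot]
      have := hp.hj.rot i
      rwa [add_sub_cancel_left, show i + 8 + 4 - i = 12 by ring] at this
    · obtain ⟨n, rfl⟩ := hout v hv
      exact ⟨n - i, by simp⟩
  refine T.false ?_
  rw [show (1 : ℤ) + i = i + 1 by ring, show (11 : ℤ) + i = i + 8 + 3 by ring]
  exact ha
end

/-! ### From walks to integer-indexed cycles -/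

theorem stmt_7 [Fintype V] [DecidableEq V] (G : SimpleGraph V) [DecidableRel G.Adj]
    (h3 : ThreeConnected G) (ht : OneTough G)
    (hδ : Fintype.card V ≤ 3 * G.minDegree + 2)
    {u : V} (c : G.Walk u u) (hc : IsLongestCycle c) : IsDominating c := by
  intro a b hab
  by_contra hno
  push Not at hno
  obtain ⟨ha, hb⟩ := hno
  obtain ⟨hcyc, hmax⟩ := hc
  have hnd : c.support.tail.Nodup := hcyc.support_nodup
  have hlen : c.support.tail.length = c.length := by simp
  have hc3 := hcyc.three_le_length
  have hmem : ∀ v, v ∈ c.support.tail → v ∈ c.support := fun v hv => List.mem_of_mem_tail hv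
  have hLg : Lg G c.length := by
    intro v L hL hLn
    by_contra hlt
    obtain ⟨p, hp, hpl⟩ := hL.isCycle hLn (by omega)
    have := hmax v p hp
    omega
  obtain ⟨f, hf, hfm, -⟩ := LC.of_list (Tr.of_walk c) hnd (by omega)
  rw [hlen] at hf
  have hoff : ∀ v, v ∉ c.support → ∀ i, f i ≠ v := fun v hv i e =>
    hv (hmem v ((hfm v).2 ⟨i, e⟩))
  have hthree : 3 ≤ G.minDegree := by
    by_contra hlt
    have : Nonempty V := ⟨u⟩
    obtain ⟨v, hv⟩ := G.exists_minimal_degree_vertex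
    -- a cycle and the edge `ab` off it give at least five vertices
    have h5 : 5 ≤ Fintype.card V := by
      have h1 : (insert a (insert b c.support.tail.toFinset)).card = c.length + 2 := by
        rw [card_insert_of_notMem, card_insert_of_notMem, List.toFinset_card_of_nodup hnd, hlen]
        · rw [List.mem_toFinset]; exact fun h => hb (hmem _ h)
        · rw [mem_insert, List.mem_toFinset, not_or]; exact ⟨hab.ne, fun h => ha (hmem _ h)⟩
      have h2 := card_le_univ (insert a (insert b c.support.tail.toFinset))
      omega
    obtain ⟨w, hw⟩ : ∃ w, w ∉ insert v (G.neighborFinset v) := by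
      by_contra hall
      push Not at hall
      have h1 := card_le_card (fun x _ => hall x : univ ⊆ insert v (G.neighborFinset v))
      have h2 := card_insert_le v (G.neighborFinset v)
      rw [card_univ] at h1
      rw [card_neighborFinset_eq_degree] at h2
      omega
    rw [mem_insert, not_or] at hw
    refine cut_of_threeConnected h3 (G.neighborFinset v) {v} v w ?_ rfl (by simp) hw.1 hw.2 ?_
    · rw [card_neighborFinset_eq_degree]; omega
    · rintro y rfl z hz
      exact Or.inr (by simpa using hz)
  have hG : Ctx G G.minDegree := by
    refine ⟨hδ, fun v S hS => ?_, hthree, fun S X x v => cut_of_threeConnected h3 S X x v, ht⟩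
    refine (G.minDegree_le_degree v).trans ?_
    rw [← card_neighborFinset_eq_degree]
    exact card_le_card fun w hw => hS w (by simpa using hw)
  obtain ⟨H0, haH, hH0⟩ := Cmp.exists (G := G) f (hoff a ha)
  have hbH : b ∈ H0 := hH0.closed a haH b hab (hoff b hb)
  have h02 : 2 ≤ H0.card := by
    rw [← card_pair hab.ne]
    exact card_le_card (by intro x hx; simp only [mem_insert, mem_singleton] at hx
                           rcases hx with rfl | rfl <;> assumption)
  -- among all longest cycles and components, a component of the largest order
  let P : ℕ → Prop := fun k => ∃ (g : ℤ → V) (H : Finset V), LC G c.length g ∧ Cmp G g H ∧ H.card = k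
  have hP0 : P H0.card := ⟨f, H0, hf, hH0, rfl⟩
  classical
  have hle : H0.card ≤ Fintype.card V := card_le_univ _
  obtain ⟨g, H, hg, hH, hk⟩ := Nat.findGreatest_spec (P := P) hle hP0
  have hge : H0.card ≤ Nat.findGreatest P (Fintype.card V) := Nat.le_findGreatest hle hP0
  refine FS.false (G := G) (δ := G.minDegree) (c := c.length) (f := g) (H := H)
    ⟨hG, hg, hLg, hH, by omega, fun f' H' hf' hH' => ?_⟩
  rw [hk]
  exact Nat.le_findGreatest (card_le_univ _) ⟨f', H', hf', hH', rfl⟩
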